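/- (Theorem 4.1, large-scale energy bound) Let 0 ≤ α < 1/2. There exists a constant K > 0, depending only on α, with the following property. Let u be a classical Yudovich solution of the 2D Euler equations on [0,∞) × ℝ² such that sup_{0 ≤ t ≤ T} ‖u(t,·)‖_{L²_α} < ∞ for every T > 0, and such that |curl u(t,x)| ≤ W for all (t,x), where W := sup_x |curl u(0,x)| < ∞. Set M₀ := ‖u(0,·)‖_{L²_α}. Then for every t ≥ 0 and every R ≥ 1 satisfying R^{1−α} ≥ (Kt + (Kt)² W) · M₀, one has ‖u(t,·)‖_{L²_α(R)} ≤ 2 M₀. -/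

import Mathlib

/-!
The proof follows the localised energy `e_r(t) = ∫ χ_r |u(t)|²`, where `χ_r` is a smooth cut-off at
scale `r ≥ R`, and shows that at scales satisfying the smallness condition it cannot grow by more
than a fixed factor up to time `t`.

*The rate of change.* Since `div u = 0`, the transport term in `e_r'` only sees `∇χ_r`
(`transport_id`). The pressure term is tested against `v = χ_r u`. On `B(0, 4r)` the derivatives
are moved off the nonlinearity and onto the kernels (`fub`, `quad_ibp`), after which the two
kernels `θE` and `(1 - θ)E` add up to `E`: what remains is `∫ ∂ⱼ∂ₖ(E * g) uⱼuₖ` with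
`g = div v = u · ∇χ_r` (`near_identity`). The local `L²` Calderón–Zygmund bound `hess_E` controls
the Hessian of the potential; it comes from `hess_bound`, the fact that the determinant of a
Hessian is a divergence, applied to a regularised logarithm. Outside `B(0, 4r)` one has
`|∇³E(z)| ≤ 3 |z|⁻³`, whose integral against `|u|²` converges exactly because `α < 1/2`
(`far_tail`). The cubic quantities left over are bounded by the energy times a velocity bound
`|u| ≤ C (A / r + √(A W))`, where `A` bounds the `L²` norm of `u` on `B(0, 5r)` and `W` the
vorticity (`vel_bound`); that bound follows from differentiating radial averages of `u` with
respect to their radius (`avg_deriv`, `sup_bound`).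

*The resulting inequality* (`inst_bound`). If the energy of `u` on `B(0, s)` is at most
`M² s^{2 + 2α}` for `s ≥ r`, then
`|e_r'| ≤ C M² r^{2 + 2α} (M r^{α - 1} + √(M W r^{α - 1}))`.

*The continuity argument* (`core`). Suppose `e_r ≤ 4 M₀² r^{2 + 2α}` for all `r ≥ R` up to some
time. The scale condition `R^{1 - α} ≥ (K t + (K t)² W) M₀` then bounds the total growth of `e_r`
by `M₀² r^{2 + 2α}`, while `e_r(0) ≤ 2 M₀² r^{2 + 2α}`; so the energy is in fact at most
`3 M₀² r^{2 + 2α}`. Finiteness of the norms on bounded time intervals makes `r^{-(2 + 2α)} e_r`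
Lipschitz in time uniformly in `r`, so the improved bound propagates by time steps of a fixed
length and finitely many steps reach `t`.
-/

open MeasureTheory Metric ENNReal

noncomputable section

/-- The plane `ℝ²` as a Euclidean space. -/
abbrev E2 := EuclideanSpace ℝ (Fin 2)

/-- The `i`-th standard basis vector of `ℝ²`. -/
def e2 (i : Fin 2) : E2 := EuclideanSpace.single i 1

/-- Partial derivative `∂ᵢ F` of a scalar function on `ℝ²`. -/
def pd (i : Fin 2) (F : E2 → ℝ) (z : E2) : ℝ := fderiv ℝ F z (e2 i)

/-- Partial derivative `∂ⱼ uᵢ` of a vector field on `ℝ²`. -/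
def pdv (j i : Fin 2) (u : E2 → E2) (y : E2) : ℝ := fderiv ℝ u y (e2 j) i

/-- Divergence `∂₁u₁ + ∂₂u₂` of a vector field on `ℝ²`. -/
def div2 (u : E2 → E2) (x : E2) : ℝ := ∑ i, pdv i i u x

/-- Scalar vorticity `∂₁u₂ − ∂₂u₁` of a vector field on `ℝ²`. -/
def curl2 (u : E2 → E2) (x : E2) : ℝ := pdv 0 1 u x - pdv 1 0 u x

/-- Truncated local Morrey `L²` norm
`‖f‖_{L²_α(R)} = sup_{r ≥ R} ( r^{-(d+2α)} ∫_{B(0,r)} |f|² )^{1/2}`, valued in `ℝ≥0∞`. -/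
def morreyR {d : ℕ} {F : Type*} [NormedAddCommGroup F] (α R : ℝ)
    (f : EuclideanSpace ℝ (Fin d) → F) : ℝ≥0∞ :=
  ⨆ r : {r : ℝ // R ≤ r},
    ((∫⁻ x in ball (0 : EuclideanSpace ℝ (Fin d)) (r : ℝ), (‖f x‖₊ : ℝ≥0∞) ^ 2) /
      ENNReal.ofReal ((r : ℝ) ^ ((d : ℝ) + 2 * α))) ^ ((1 : ℝ) / 2)

/-- Truncated `L^∞_β` norm `sup_{r ≥ R} r^{-β} sup_{|x| ≤ r} |f(x)|`, valued in `ℝ≥0∞`. -/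
def morreyInfR {d : ℕ} {F : Type*} [NormedAddCommGroup F] (β R : ℝ)
    (f : EuclideanSpace ℝ (Fin d) → F) : ℝ≥0∞ :=
  ⨆ r : {r : ℝ // R ≤ r},
    (⨆ x : {x : EuclideanSpace ℝ (Fin d) // ‖x‖ ≤ (r : ℝ)}, (‖f x.1‖₊ : ℝ≥0∞)) /
      ENNReal.ofReal ((r : ℝ) ^ β)

/-- The fundamental solution `E(x) = −(2π)⁻¹ log |x|` of `−Δ` on `ℝ²`. -/
def fundE (z : E2) : ℝ := -(2 * Real.pi)⁻¹ * Real.log ‖z‖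

/-- A cut-off function: smooth, `0 ≤ θ ≤ 1`, `θ ≡ 1` on `B(0,1)`, supported in `B(0,2)`. -/
def IsCutoff (θ : E2 → ℝ) : Prop :=
  ContDiff ℝ (⊤ : ℕ∞) θ ∧ (∀ x, 0 ≤ θ x ∧ θ x ≤ 1) ∧ (∀ x : E2, ‖x‖ ≤ 1 → θ x = 1) ∧
    (∀ x : E2, 2 ≤ ‖x‖ → θ x = 0)

/-- The near-field kernel `θE`. -/
def thetaE (θ : E2 → ℝ) (w : E2) : ℝ := θ w * fundE w

/-- The far-field kernel `(1−θ)E` (which vanishes near the origin). -/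
def oneThetaE (θ : E2 → ℝ) (w : E2) : ℝ := (1 - θ w) * fundE w

/-- The pressure force `∇Π(u⊗u)` of Definition 3.1:
`∂ᵢΠ = ∂ᵢ(θE) * (Σ_{jk} ∂ⱼu_k ∂_k uⱼ) + Σ_{jk} ∂ᵢ∂ⱼ∂ₖ((1−θ)E) * (uⱼ u_k)`. -/
def pressureForce (θ : E2 → ℝ) (u : E2 → E2) (i : Fin 2) (x : E2) : ℝ :=
  (∫ y, pd i (thetaE θ) (x - y) * ∑ j, ∑ k, pdv j k u y * pdv k j u y) +
  ∑ j, ∑ k, ∫ y, pd i (pd j (pd k (oneThetaE θ))) (x - y) * (u y j * u y k)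

/-- Absolute convergence of all the integrals defining the pressure force. -/
def PressureIntegrable (θ : E2 → ℝ) (u : E2 → E2) (x : E2) : Prop :=
  (∀ i : Fin 2,
    Integrable (fun y => pd i (thetaE θ) (x - y) * ∑ j, ∑ k, pdv j k u y * pdv k j u y)) ∧
  (∀ i j k : Fin 2,
    Integrable (fun y => pd i (pd j (pd k (oneThetaE θ))) (x - y) * (u y j * u y k)))

/-- A classical Yudovich solution of the 2D incompressible Euler equations on `[0,∞) × ℝ²`:
a smooth divergence-free vector field satisfying
`∂ₜuᵢ + Σⱼ uⱼ∂ⱼuᵢ + Pᵢ = 0` with the integral pressure force `Pᵢ`, all pressure integrals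
being absolutely convergent. -/
def IsYudovichSolution (θ : E2 → ℝ) (u : ℝ → E2 → E2) : Prop :=
  ContDiffOn ℝ (⊤ : ℕ∞) (fun q : ℝ × E2 => u q.1 q.2) (Set.Ici 0 ×ˢ Set.univ) ∧
  (∀ t, 0 ≤ t → ∀ x, div2 (u t) x = 0) ∧
  (∀ t, 0 ≤ t → ∀ x, PressureIntegrable θ (u t) x) ∧
  (∀ t, 0 ≤ t → ∀ x, ∀ i : Fin 2,
    HasDerivWithinAt (fun s => u s x i)
      (-(∑ j, u t x j * pdv j i (u t) x) - pressureForce θ (u t) i x) (Set.Ici 0) t)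


/-! ### Partial derivatives and integration by parts -/

/-- Smoothness of a scalar function on the plane. -/
abbrev Sm (f : E2 → ℝ) : Prop := ContDiff ℝ (⊤ : ℕ∞) f

lemma Sm.diff {f : E2 → ℝ} (hf : Sm f) : Differentiable ℝ f := hf.differentiable (by simp)

lemma pd_mul {f g : E2 → ℝ} {x : E2} (hf : DifferentiableAt ℝ f x) (hg : DifferentiableAt ℝ g x)
    (i : Fin 2) : pd i (fun x => f x * g x) x = f x * pd i g x + pd i f x * g x := by
  simp only [pd]
  rw [fderiv_fun_mul hf hg]
  simp [mul_comm]

lemma pd_add {f g : E2 → ℝ} {x : E2} (hf : DifferentiableAt ℝ f x) (hg : DifferentiableAt ℝ g x)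
    (i : Fin 2) : pd i (fun x => f x + g x) x = pd i f x + pd i g x := by
  simp only [pd]
  rw [fderiv_fun_add hf hg]
  simp

lemma Sm.pd {f : E2 → ℝ} (hf : Sm f) (i : Fin 2) : Sm (pd i f) := by
  have h : ContDiff ℝ (⊤ : ℕ∞) (fderiv ℝ f) := hf.fderiv_right (by simp)
  exact h.clm_apply contDiff_const

lemma hcs_pd {f : E2 → ℝ} (hf : HasCompactSupport f) (i : Fin 2) : HasCompactSupport (pd i f) :=
  hf.fderiv_apply (𝕜 := ℝ) (e2 i)

lemma pd_comm {f : E2 → ℝ} (hf : Sm f) (i j : Fin 2) (x : E2) :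
    pd i (pd j f) x = pd j (pd i f) x := by
  have h : ContDiff ℝ (⊤ : ℕ∞) (fderiv ℝ f) := hf.fderiv_right (by simp)
  have hs : IsSymmSndFDerivAt ℝ f x :=
    ContDiffAt.isSymmSndFDerivAt (n := 2) (by exact_mod_cast (contDiff_infty.1 hf 2).contDiffAt) (by simp)
  have key : ∀ a b : Fin 2, pd a (pd b f) x = fderiv ℝ (fderiv ℝ f) x (e2 a) (e2 b) := by
    intro a b
    have h1 : HasFDerivAt (fderiv ℝ f) (fderiv ℝ (fderiv ℝ f) x) x :=
      (h.differentiable (by simp) x).hasFDerivAt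
    have h2 := h1.clm_apply (hasFDerivAt_const (e2 b) x)
    unfold pd
    rw [h2.fderiv]
    simp
  rw [key, key]
  exact hs.eq _ _

lemma pd_shift (g : E2 → ℝ) (y z : E2) (i : Fin 2) :
    pd i (fun z => g (y + z)) z = pd i g (y + z) := by
  simp only [pd]
  rw [fderiv_comp_add_left]

lemma intg {f : E2 → ℝ} (hf : Continuous f) (hc : HasCompactSupport f) : Integrable f :=
  hf.integrable_of_hasCompactSupport hc

/-- Integration by parts against a compactly supported function. -/
lemma ibp {f g : E2 → ℝ} (hf : Sm f) (hg : Sm g) (hc : HasCompactSupport f) (i : Fin 2) :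
    ∫ x, f x * pd i g x = -∫ x, pd i f x * g x := by
  apply integral_mul_fderiv_eq_neg_fderiv_mul_of_integrable
  · exact intg ((hf.pd i).continuous.mul hg.continuous) ((hcs_pd hc i).mul_right)
  · exact intg (hf.continuous.mul (hg.pd i).continuous) hc.mul_right
  · exact intg (hf.continuous.mul hg.continuous) hc.mul_right
  · exact fun x _ => hf.diff x
  · exact fun x _ => hg.diff x

lemma ibp' {f g : E2 → ℝ} (hf : Sm f) (hg : Sm g) (hc : HasCompactSupport g) (i : Fin 2) :
    ∫ x, f x * pd i g x = -∫ x, pd i f x * g x := by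
  have := ibp hg hf hc i
  simp only [mul_comm (pd i f _)]
  rw [this, neg_neg]
  simp only [mul_comm]

/-- The integral of a derivative of a compactly supported function vanishes. -/
lemma int_pd {f : E2 → ℝ} (hf : Sm f) (hc : HasCompactSupport f) (i : Fin 2) :
    ∫ x, pd i f x = 0 := by
  have h1 : Sm (fun _ : E2 => (1 : ℝ)) := contDiff_const
  have := ibp' h1 hf hc i
  simp only [one_mul] at this
  rw [this]
  simp [pd]

/-! ### Correlation with a kernel -/

/-- The correlation `y ↦ ∫ k(z) g(y+z) dz = ∫ k(x-y) g(x) dx`. -/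
def Cv (k g : E2 → ℝ) (y : E2) : ℝ := ∫ z, k z * g (y + z)

lemma Cv_eq (k g : E2 → ℝ) (y : E2) : ∫ x, g x * k (x - y) = Cv k g y := by
  unfold Cv
  rw [← integral_add_left_eq_self (fun x => g x * k (x - y)) y]
  simp [mul_comm]

lemma hcs_shift {g : E2 → ℝ} (hc : HasCompactSupport g) (y : E2) :
    HasCompactSupport (fun z => g (y + z)) :=
  hc.comp_homeomorph (Homeomorph.addLeft y)

lemma sm_shift {g : E2 → ℝ} (hg : Sm g) (y : E2) : Sm (fun z => g (y + z)) :=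
  hg.comp (contDiff_const.add contDiff_id)

lemma Cv_conv (k g : E2 → ℝ) :
    Cv k g = convolution (fun t => k (-t)) g (ContinuousLinearMap.mul ℝ ℝ) volume := by
  ext y
  simp only [Cv, convolution, ContinuousLinearMap.mul_apply']
  rw [← integral_neg_eq_self]
  simp [sub_eq_add_neg]

lemma locInt_neg {k : E2 → ℝ} (hk : LocallyIntegrable k) : LocallyIntegrable (fun t => k (-t)) := by
  rw [locallyIntegrable_iff] at hk ⊢
  intro K hK
  have h1 := hk (-K) hK.neg
  have h2 := (Measure.measurePreserving_neg (volume : Measure E2)).integrableOn_comp_preimage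
    (Homeomorph.neg E2).measurableEmbedding (f := k) (s := -K)
  have h3 := h2.2 h1
  simpa [Function.comp_def] using h3

lemma Cv_sm {k g : E2 → ℝ} (hk : LocallyIntegrable k) (hg : Sm g) (hc : HasCompactSupport g) :
    Sm (Cv k g) := by
  rw [Cv_conv]
  exact hc.contDiff_convolution_right _ (locInt_neg hk) hg

lemma Cv_integrable {k g : E2 → ℝ} (hk : LocallyIntegrable k) (hg : Continuous g)
    (hc : HasCompactSupport g) (y : E2) : Integrable (fun z => k z * g (y + z)) := by
  have := hk.integrable_smul_right_of_hasCompactSupport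
    (hg.comp (continuous_const.add continuous_id) : Continuous fun z => g (y + z))
    (hcs_shift hc y)
  simpa using this

/-- Derivatives of a correlation fall on the smooth factor. -/
lemma pd_Cv {k g : E2 → ℝ} (hk : LocallyIntegrable k) (hg : Sm g) (hc : HasCompactSupport g)
    (i : Fin 2) : pd i (Cv k g) = Cv k (pd i g) := by
  ext y
  have h := hc.hasFDerivAt_convolution_right (ContinuousLinearMap.mul ℝ ℝ) (locInt_neg hk)
    (hg.of_le (by simp)) y
  rw [← Cv_conv] at h
  have h2 : pd i (Cv k g) y = _ := congrArg (fun L => L (e2 i)) h.fderiv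
  rw [h2, Cv_conv]
  rw [convolution_precompR_apply]
  · rfl
  · exact locInt_neg hk
  · exact hc.fderiv ℝ
  · exact hg.continuous_fderiv (by simp)

/-- For a smooth kernel, a derivative passes from one factor of a correlation to the other. -/
lemma Cv_ibp {k g : E2 → ℝ} (hk : Sm k) (hg : Sm g) (hc : HasCompactSupport g) (i : Fin 2)
    (y : E2) : Cv (pd i k) g y = - Cv k (pd i g) y := by
  have := ibp' hk (sm_shift hg y) (hcs_shift hc y) i
  simp only [pd_shift] at this
  unfold Cv
  rw [this, neg_neg]

lemma Sm.locInt {k : E2 → ℝ} (hk : Sm k) : LocallyIntegrable k := hk.continuous.locallyIntegrable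

/-! ### Cut-off functions -/

/-- A smooth radial cut-off, equal to `1` for `‖x‖ ≤ r` and to `0` for `‖x‖ ≥ 5r/4`. -/
def chi (r : ℝ) (x : E2) : ℝ :=
  Real.smoothTransition ((25 / 16 - ‖x‖ ^ 2 / r ^ 2) * (16 / 9))

lemma chi_sm (r : ℝ) : Sm (chi r) := by
  apply Real.smoothTransition.contDiff.comp
  exact (contDiff_const.sub ((contDiff_norm_sq ℝ).div_const _)).mul contDiff_const

lemma chi_nonneg (r : ℝ) (x : E2) : 0 ≤ chi r x := Real.smoothTransition.nonneg _
lemma chi_le_one (r : ℝ) (x : E2) : chi r x ≤ 1 := Real.smoothTransition.le_one _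

lemma chi_one {r : ℝ} (hr : 0 < r) {x : E2} (hx : ‖x‖ ≤ r) : chi r x = 1 := by
  apply Real.smoothTransition.one_of_one_le
  have : ‖x‖ ^ 2 / r ^ 2 ≤ 1 := by
    rw [div_le_one (by positivity)]
    exact pow_le_pow_left₀ (norm_nonneg _) hx 2
  linarith

lemma chi_zero {r : ℝ} (hr : 0 < r) {x : E2} (hx : 5 / 4 * r ≤ ‖x‖) : chi r x = 0 := by
  apply Real.smoothTransition.zero_of_nonpos
  have : 25 / 16 ≤ ‖x‖ ^ 2 / r ^ 2 := by
    rw [le_div_iff₀ (by positivity)]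
    nlinarith
  linarith

/-- The gradient vanishes at the zeros of a nonnegative function, since they are minima. -/
lemma pd_zero_of_nonneg {f : E2 → ℝ} (hf : ∀ x, 0 ≤ f x) {x : E2} (hx : f x = 0) (i : Fin 2) :
    pd i f x = 0 := by
  have : IsLocalMin f x := Filter.Eventually.of_forall fun y => by rw [hx]; exact hf y
  simp [pd, this.fderiv_eq_zero]

lemma hcs_of_zero {f : E2 → ℝ} (r : ℝ) (h : ∀ x, r ≤ ‖x‖ → f x = 0) : HasCompactSupport f := by
  apply HasCompactSupport.intro (isCompact_closedBall (0 : E2) r)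
  intro x hx
  apply h
  simp at hx
  exact hx.le

lemma chi_hcs {r : ℝ} (hr : 0 < r) : HasCompactSupport (chi r) :=
  hcs_of_zero (5 / 4 * r) fun _ => chi_zero hr

lemma pd_chi_zero {r : ℝ} (hr : 0 < r) {x : E2} (hx : 5 / 4 * r ≤ ‖x‖) (i : Fin 2) :
    pd i (chi r) x = 0 := pd_zero_of_nonneg (chi_nonneg r) (chi_zero hr hx) i

lemma chi_scale {r : ℝ} (hr : 0 < r) (x : E2) : chi r x = chi 1 (r⁻¹ • x) := by
  simp only [chi, norm_smul, norm_inv, Real.norm_eq_abs, abs_of_pos hr]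
  congr 3
  field_simp

lemma pd_chi_scale {r : ℝ} (hr : 0 < r) (x : E2) (i : Fin 2) :
    pd i (chi r) x = r⁻¹ * pd i (chi 1) (r⁻¹ • x) := by
  have : chi r = fun x => chi 1 (r⁻¹ • x) := funext (chi_scale hr)
  rw [this]
  have := fderiv_comp_smul (𝕜 := ℝ) (f := chi 1) (x := x) r⁻¹
  simp only [pd]
  rw [this]
  simp

/-- The gradient of the cut-off at scale `r` is of size `1 / r`, by scaling. -/
lemma chi_grad : ∃ c : ℝ, 0 < c ∧ ∀ r : ℝ, 0 < r → ∀ i x, |pd i (chi r) x| ≤ c / r := by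
  have h : ∀ i : Fin 2, ∃ c : ℝ, ∀ x, ‖pd i (chi 1) x‖ ≤ c := fun i =>
    (hcs_pd (chi_hcs one_pos) i).exists_bound_of_continuous ((chi_sm 1).pd i).continuous
  choose c hc using h
  refine ⟨|c 0| + |c 1| + 1, by positivity, fun r hr i x => ?_⟩
  rw [pd_chi_scale hr, abs_mul, abs_of_pos (inv_pos.2 hr), inv_mul_eq_div]
  gcongr
  have h1 := hc i (r⁻¹ • x)
  rw [Real.norm_eq_abs] at h1
  have h2 : c i ≤ |c 0| + |c 1| + 1 := by
    fin_cases i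
    · exact (le_abs_self (c 0)).trans (by linarith [abs_nonneg (c 1)])
    · exact (le_abs_self (c 1)).trans (by linarith [abs_nonneg (c 0)])
  linarith

/-- Radial functions have no angular derivative. -/
lemma chi_radial (r : ℝ) (x : E2) (i j : Fin 2) :
    x j * pd i (chi r) x = x i * pd j (chi r) x := by
  have h1 : HasFDerivAt (fun x : E2 => (25 / 16 - ‖x‖ ^ 2 / r ^ 2) * (16 / 9))
      (-(16 / 9 / r ^ 2 * 2) • innerSL ℝ x) x := by
    have h := (((hasStrictFDerivAt_norm_sq x).hasFDerivAt.const_mul (1 / r ^ 2)).const_sub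
      (25 / 16)).mul_const (16 / 9)
    have e1 : (fun x : E2 => (25 / 16 - ‖x‖ ^ 2 / r ^ 2) * (16 / 9)) =
        fun y : E2 => (25 / 16 - 1 / r ^ 2 * ‖y‖ ^ 2) * (16 / 9) := by
      ext y; ring
    rw [e1]
    refine h.congr_fderiv ?_
    ext y
    simp
    ring
  have h2 : DifferentiableAt ℝ Real.smoothTransition ((25 / 16 - ‖x‖ ^ 2 / r ^ 2) * (16 / 9)) :=
    (Real.smoothTransition.contDiff (n := 1)).differentiable (by simp) _
  have h3 := h2.hasDerivAt.comp_hasFDerivAt x h1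
  have h4 : ∀ k, pd k (chi r) x = deriv Real.smoothTransition
      ((25 / 16 - ‖x‖ ^ 2 / r ^ 2) * (16 / 9)) * (-(16 / 9 / r ^ 2 * 2) * x k) := by
    intro k
    have : pd k (chi r) x = _ := congrArg (fun L => L (e2 k)) h3.fderiv
    rw [this]
    simp [e2, EuclideanSpace.inner_single_right]
  rw [h4, h4]
  ring

lemma fderiv_eq_sum (f : E2 → ℝ) (p z : E2) : fderiv ℝ f p z = ∑ k, z k * pd k f p := by
  have : z = ∑ k, z k • e2 k := by
    ext k
    fin_cases k <;> simp [e2]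
  conv_lhs => rw [this]
  simp [pd]

/-- Differentiation under the integral sign for compactly supported families. -/
lemma hasDerivAt_int {F F' : ℝ → E2 → ℝ} {t δ : ℝ} (hδ : 0 < δ) {K : Set E2} (hK : IsCompact K)
    (hF : ∀ s ∈ closedBall t δ, ∀ x, HasDerivAt (fun s => F s x) (F' s x) s)
    (hFc : ∀ s ∈ closedBall t δ, Continuous (F s))
    (hF'c : ContinuousOn (Function.uncurry F') (closedBall t δ ×ˢ Set.univ))
    (hFK : ∀ s ∈ closedBall t δ, ∀ x ∉ K, F s x = 0)
    (hF'K : ∀ s ∈ closedBall t δ, ∀ x ∉ K, F' s x = 0) :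
    HasDerivAt (fun s => ∫ x, F s x) (∫ x, F' t x) t := by
  have ht : t ∈ closedBall t δ := mem_closedBall_self hδ.le
  obtain ⟨C, hC⟩ := ((isCompact_closedBall t δ).prod hK).exists_bound_of_continuousOn
    (hF'c.mono (Set.prod_mono le_rfl (Set.subset_univ _)))
  refine (hasDerivAt_integral_of_dominated_loc_of_deriv_le (s := closedBall t δ)
    (bound := K.indicator fun _ => C) (closedBall_mem_nhds t hδ) ?_ ?_ ?_ ?_ ?_ ?_).2
  · filter_upwards [closedBall_mem_nhds t hδ] with s hs
    exact (hFc s hs).aestronglyMeasurable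
  · exact intg (hFc t ht) (HasCompactSupport.intro hK (hFK t ht))
  · have : Continuous (F' t) := by
      have h := hF'c.comp (f := fun x : E2 => (t, x)) (s := Set.univ)
        (by fun_prop) (fun x _ => ⟨ht, Set.mem_univ _⟩)
      exact continuousOn_univ.1 h
    exact this.aestronglyMeasurable
  · refine Filter.Eventually.of_forall fun x s hs => ?_
    by_cases hx : x ∈ K
    · rw [Set.indicator_of_mem hx]
      exact hC (s, x) ⟨hs, hx⟩
    · rw [Set.indicator_of_notMem hx, hF'K s hs x hx, norm_zero]
  · rw [integrable_indicator_iff hK.measurableSet]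
    exact integrableOn_const hK.measure_lt_top.ne
  · exact Filter.Eventually.of_forall fun x s hs => hF s hs x

/-! ### Interior bound of a divergence-free field by its energy and vorticity -/

lemma int_chi_pos {r : ℝ} (hr : 0 < r) : 0 < ∫ x, chi r x := by
  refine ((chi_sm r).continuous.integral_pos_of_hasCompactSupport_nonneg_nonzero (chi_hcs hr)
    (chi_nonneg r) (x := 0) ?_)
  rw [chi_one hr (by simpa using hr.le)]
  exact one_ne_zero

/-- The average of a component of `u` over a disc of radius `s` with radial weight varies in `s`
at a rate controlled by the vorticity. By `div u = 0`, the radial derivative of `a` differs from a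
multiple of the vorticity only by an angular derivative of `b`, which a radial weight integrates to
zero. -/
lemma avg_deriv {a b : E2 → ℝ} (ha : Sm a) (hb : Sm b) {i j : Fin 2} (hij : i ≠ j)
    (hdiv : ∀ x, pd i a x = - pd j b x) {W : ℝ} (hW : ∀ x, |pd j a x - pd i b x| ≤ W)
    (x : E2) {s : ℝ} (hs : 0 < s) :
    |∫ z, chi (4 / 5) z * fderiv ℝ a (x + s • z) z| ≤ W * ∫ z, chi (4 / 5) z := by
  set ψ := chi (4 / 5) with hψ
  have hψs : Sm ψ := chi_sm _
  have hψc : HasCompactSupport ψ := chi_hcs (by norm_num)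
  have hcoord : ∀ k : Fin 2, Sm (fun z : E2 => z k) := fun k =>
    (EuclideanSpace.proj k : E2 →L[ℝ] ℝ).contDiff
  have hpdc : ∀ k l : Fin 2, ∀ z : E2, k ≠ l → pd k (fun z : E2 => z l) z = 0 := by
    intro k l z hkl
    have : HasFDerivAt (fun z : E2 => z l) (EuclideanSpace.proj l : E2 →L[ℝ] ℝ) z :=
      (EuclideanSpace.proj l : E2 →L[ℝ] ℝ).hasFDerivAt
    unfold pd
    rw [this.fderiv]
    simp [e2, hkl.symm]
  set B : E2 → ℝ := fun z => b (x + s • z) with hB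
  have hBs : Sm B := hb.comp (contDiff_const.add (contDiff_id.const_smul s))
  have hpB : ∀ k z, pd k B z = s * pd k b (x + s • z) := by
    intro k z
    have h1 : HasFDerivAt (fun z : E2 => x + s • z) (s • ContinuousLinearMap.id ℝ E2) z :=
      ((hasFDerivAt_id z).const_smul s).const_add x
    have h2 := (hb.diff (x + s • z)).hasFDerivAt.comp z h1
    have : pd k B z = _ := congrArg (fun L => L (e2 k)) h2.fderiv
    rw [this]
    simp [pd]
  have hI : ∀ k l : Fin 2, k ≠ l → Integrable (fun z => ψ z * z l * pd k B z) := fun k l _ =>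
    intg ((hψs.continuous.mul (hcoord l).continuous).mul (hBs.pd k).continuous)
      (hψc.mul_right.mul_right)
  have hJ : ∀ k l : Fin 2, k ≠ l →
      ∫ z, ψ z * z l * pd k B z = - ∫ z, (z l * pd k ψ z) * B z := by
    intro k l hkl
    have h := ibp (f := fun z => ψ z * z l) (hψs.mul (hcoord l)) hBs hψc.mul_right k
    rw [h]
    congr 2
    ext z
    rw [pd_mul (hψs.diff z) ((hcoord l).diff z), hpdc k l z hkl]
    ring
  have hzero : ∫ z, (ψ z * z j * pd i B z - ψ z * z i * pd j B z) = 0 := by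
    rw [integral_sub (hI i j hij) (hI j i hij.symm), hJ i j hij, hJ j i hij.symm]
    have : ∀ z : E2, z j * pd i ψ z = z i * pd j ψ z := fun z => chi_radial _ z i j
    simp only [this, sub_self]
  have hpt : ∀ z, ψ z * fderiv ℝ a (x + s • z) z = s⁻¹ * (ψ z * z j * pd i B z - ψ z * z i * pd j B z)
      + ψ z * (z j * (pd j a (x + s • z) - pd i b (x + s • z))) := by
    intro z
    have h1 : fderiv ℝ a (x + s • z) z = z i * pd i a (x + s • z) + z j * pd j a (x + s • z) := by
      rw [fderiv_eq_sum, Fin.sum_univ_two]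
      fin_cases i <;> fin_cases j <;> simp_all [add_comm]
    rw [h1, hpB, hpB, hdiv]
    field_simp
    ring
  have hcont : ∀ k (f : E2 → ℝ), Sm f → Continuous fun z : E2 => pd k f (x + s • z) := fun k f hf =>
    (hf.pd k).continuous.comp (by fun_prop)
  have hint2 : Integrable fun z => ψ z * (z j * (pd j a (x + s • z) - pd i b (x + s • z))) :=
    intg (hψs.continuous.mul ((hcoord j).continuous.mul ((hcont j a ha).sub (hcont i b hb))))
      hψc.mul_right
  have hint1 : Integrable fun z =>
      s⁻¹ * (ψ z * z j * pd i B z - ψ z * z i * pd j B z) :=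
    ((hI i j hij).sub (hI j i hij.symm)).const_mul _
  simp only [hpt]
  rw [integral_add hint1 hint2,
    integral_const_mul, hzero, mul_zero, zero_add, ← integral_const_mul]
  rw [← Real.norm_eq_abs]
  refine norm_integral_le_of_norm_le ((intg hψs.continuous hψc).const_mul W)
    (Filter.Eventually.of_forall fun z => ?_)
  have hW0 : 0 ≤ W := (abs_nonneg _).trans (hW 0)
  by_cases hz : ‖z‖ ≤ 1
  · have hzj : |z j| ≤ 1 := by
      have := EuclideanSpace.norm_eq z
      have h2 : ‖z j‖ ≤ ‖z‖ := PiLp.norm_apply_le z j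
      exact h2.trans hz
    rw [norm_mul, norm_mul, Real.norm_eq_abs, Real.norm_eq_abs, Real.norm_eq_abs,
      abs_of_nonneg (chi_nonneg _ z)]
    calc ψ z * (|z j| * |pd j a (x + s • z) - pd i b (x + s • z)|) ≤ ψ z * (1 * W) := by
          gcongr
          · exact chi_nonneg _ z
          · exact hW _
      _ = W * ψ z := by ring
  · have : ψ z = 0 := chi_zero (by norm_num) (by linarith)
    simp [this]

open Pointwise in
/-- The interior bound `|a(x)| ≤ C (ρ⁻¹ ‖a‖_{L²(B(x,ρ))} + ρ W)` for a component `a` of a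
divergence-free field: `a(x)` is compared, through `avg_deriv`, with the average of `a` at scale
`ρ`. -/
lemma sup_bound : ∃ C : ℝ, 0 < C ∧ ∀ (a b : E2 → ℝ), Sm a → Sm b → ∀ i j : Fin 2, i ≠ j →
    (∀ x, pd i a x = - pd j b x) → ∀ W : ℝ, (∀ x, |pd j a x - pd i b x| ≤ W) →
    ∀ (x : E2) (ρ A : ℝ), 0 < ρ → 0 < A → ∫ y in ball x ρ, a y ^ 2 ≤ A ^ 2 →
    |a x| ≤ C * (A / ρ + ρ * W) := by
  set ψ := chi (4 / 5) with hψ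
  have hψs : Sm ψ := chi_sm _
  have hψc : HasCompactSupport ψ := chi_hcs (by norm_num)
  have hI : 0 < ∫ z, ψ z := int_chi_pos (by norm_num)
  set I := ∫ z, ψ z with hIdef
  refine ⟨1 + I⁻¹, by positivity, ?_⟩
  intro a b ha hb i j hij hdiv W hW x ρ A hρ hA hL2
  have hW0 : 0 ≤ W := (abs_nonneg _).trans (hW 0)
  set m : ℝ → ℝ := fun s => ∫ z, ψ z * a (x + s • z) with hm
  have hder : ∀ s : ℝ, HasDerivAt m (∫ z, ψ z * fderiv ℝ a (x + s • z) z) s := by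
    intro s
    refine hasDerivAt_int (F := fun s z => ψ z * a (x + s • z))
      (F' := fun s z => ψ z * fderiv ℝ a (x + s • z) z) one_pos hψc.isCompact ?_ ?_ ?_ ?_ ?_
    · intro s _ z
      have h1 : HasDerivAt (fun s : ℝ => x + s • z) z s := by
        simpa using ((hasDerivAt_id s).smul_const z).const_add x
      exact ((ha.diff (x + s • z)).hasFDerivAt.comp_hasDerivAt s h1).const_mul (ψ z)
    · intro s _
      exact hψs.continuous.mul (ha.continuous.comp (by fun_prop))
    · apply Continuous.continuousOn
      have h1 : Continuous (fderiv ℝ a) := ha.continuous_fderiv (by simp)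
      exact (hψs.continuous.comp continuous_snd).mul
        ((h1.comp (by fun_prop : Continuous fun p : ℝ × E2 => x + p.1 • p.2)).clm_apply
          continuous_snd)
    · intro s _ z hz
      rw [image_eq_zero_of_notMem_tsupport hz, zero_mul]
    · intro s _ z hz
      rw [image_eq_zero_of_notMem_tsupport hz, zero_mul]
  have hdiff : |m ρ - m 0| ≤ (W * I) * ρ := by
    have := norm_image_sub_le_of_norm_deriv_le_segment_01' (f := fun τ => m (τ * ρ))
      (f' := fun τ => (∫ z, ψ z * fderiv ℝ a (x + (τ * ρ) • z) z) * ρ) (C := W * I * ρ) ?_ ?_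
    · simpa using this
    · intro τ _
      exact ((hder (τ * ρ)).comp τ (hasDerivAt_mul_const ρ)).hasDerivWithinAt
    · intro τ hτ
      rcases hτ.1.eq_or_lt with h0 | h0
      · subst h0
        rw [norm_mul, Real.norm_of_nonneg hρ.le]
        gcongr
        have hcl : IsClosed {s : ℝ | 0 ≤ s} := isClosed_Ici
        have hcont : Continuous fun s : ℝ => ∫ z, ψ z * fderiv ℝ a (x + s • z) z := by
          rw [← continuousOn_univ]
          apply continuousOn_integral_of_compact_support hψc.isCompact
          · apply Continuous.continuousOn
            have h1 : Continuous (fderiv ℝ a) := ha.continuous_fderiv (by simp)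
            exact (hψs.continuous.comp continuous_snd).mul
              ((h1.comp (by fun_prop : Continuous fun p : ℝ × E2 => x + p.1 • p.2)).clm_apply
                continuous_snd)
          · intro s z _ hz
            rw [image_eq_zero_of_notMem_tsupport hz, zero_mul]
        have hlim : Filter.Tendsto (fun s : ℝ => ‖∫ z, ψ z * fderiv ℝ a (x + s • z) z‖)
            (nhdsWithin 0 (Set.Ioi 0)) (nhds ‖∫ z, ψ z * fderiv ℝ a (x + ((0 : ℝ) * ρ) • z) z‖) := by
          rw [zero_mul]
          exact (hcont.norm.tendsto 0).mono_left nhdsWithin_le_nhds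
        refine le_of_tendsto hlim ?_
        filter_upwards [self_mem_nhdsWithin] with s hs
        exact avg_deriv ha hb hij hdiv hW x hs
      · rw [norm_mul, Real.norm_of_nonneg hρ.le]
        gcongr
        exact avg_deriv ha hb hij hdiv hW x (by positivity)
  have hm0 : m 0 = I * a x := by
    simp [hm, integral_mul_const, hIdef]
  have hscale : ∫ z in ball (0 : E2) 1, a (x + ρ • z) ^ 2 ≤ (A / ρ) ^ 2 := by
    have h1 := Measure.setIntegral_comp_smul_of_pos (volume : Measure E2)
      (fun y => a (x + y) ^ 2) (ball 0 1) hρ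
    rw [h1]
    have h2 : ρ • ball (0 : E2) 1 = ball 0 ρ := by
      rw [_root_.smul_ball hρ.ne']; simp [abs_of_pos hρ]
    have h3 : ∫ y in ball (0 : E2) ρ, a (x + y) ^ 2 = ∫ y in ball x ρ, a y ^ 2 := by
      have hmp := (measurePreserving_add_left (volume : Measure E2) x)
      have := hmp.setIntegral_preimage_emb (measurableEmbedding_addLeft x)
        (fun y => a y ^ 2) (ball x ρ)
      rw [← this]
      congr 2
      ext y; simp
    rw [h2, h3]
    simp only [finrank_euclideanSpace, Fintype.card_fin, smul_eq_mul]
    rw [div_pow, inv_mul_eq_div]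
    gcongr
  have hmρ : |m ρ| ≤ (A / ρ) * (I + 1) := by
    set l := A / ρ with hl
    have hlpos : 0 < l := by positivity
    have hca : Continuous fun z : E2 => a (x + ρ • z) := ha.continuous.comp (by fun_prop)
    have hi2 : Integrable ((ball (0 : E2) 1).indicator fun z => a (x + ρ • z) ^ 2) := by
      rw [integrable_indicator_iff measurableSet_ball]
      exact ((hca.pow 2).continuousOn.integrableOn_compact (isCompact_closedBall 0 1)).mono_set
        ball_subset_closedBall
    have : |m ρ| ≤ ∫ z, (l * ψ z + l⁻¹ * (ball (0 : E2) 1).indicator (fun z => a (x + ρ • z) ^ 2) z) := by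
      rw [← Real.norm_eq_abs]
      refine norm_integral_le_of_norm_le (((intg hψs.continuous hψc).const_mul l).add
        (hi2.const_mul _)) (Filter.Eventually.of_forall fun z => ?_)
      by_cases hz : z ∈ ball (0 : E2) 1
      · rw [Set.indicator_of_mem hz, norm_mul, Real.norm_of_nonneg (chi_nonneg _ z), Real.norm_eq_abs]
        have h0 := chi_nonneg (4 / 5) z
        have h1 := chi_le_one (4 / 5) z
        set y := |a (x + ρ • z)| with hy
        have hy2 : a (x + ρ • z) ^ 2 = y ^ 2 := (sq_abs _).symm
        rw [hy2]
        have h3 : 0 ≤ l⁻¹ * (l * chi (4 / 5) z - y) ^ 2 := by positivity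
        have h4 : l⁻¹ * (l * chi (4 / 5) z - y) ^ 2 =
            l * chi (4 / 5) z * chi (4 / 5) z - 2 * (chi (4 / 5) z * y) + l⁻¹ * y ^ 2 := by
          field_simp
          ring
        have h5 : l * chi (4 / 5) z * chi (4 / 5) z ≤ l * chi (4 / 5) z * 1 := by gcongr
        have h6 : 0 ≤ chi (4 / 5) z * y := mul_nonneg h0 (abs_nonneg _)
        change chi (4 / 5) z * y ≤ _
        linarith
      · rw [Set.indicator_of_notMem hz]
        have : ψ z = 0 := chi_zero (by norm_num) (by simp at hz; linarith)
        simp [this]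
    rw [integral_add ((intg hψs.continuous hψc).const_mul l) (hi2.const_mul _),
      integral_const_mul, integral_const_mul, integral_indicator measurableSet_ball] at this
    have h2 : l⁻¹ * ∫ z in ball (0 : E2) 1, a (x + ρ • z) ^ 2 ≤ l⁻¹ * l ^ 2 := by gcongr
    have h3 : l⁻¹ * l ^ 2 = l := by field_simp
    nlinarith
  have h1 : I * |a x| ≤ (A / ρ) * (I + 1) + W * I * ρ := by
    rw [← abs_of_pos hI, ← abs_mul, ← hm0, abs_of_pos hI]
    have := abs_sub_abs_le_abs_sub (m 0) (m ρ)
    rw [abs_sub_comm] at this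
    linarith
  have h2 : |a x| = I⁻¹ * (I * |a x|) := by field_simp
  rw [h2]
  calc I⁻¹ * (I * |a x|) ≤ I⁻¹ * ((A / ρ) * (I + 1) + W * I * ρ) := by gcongr
    _ = (1 + I⁻¹) * (A / ρ) + 1 * (ρ * W) := by field_simp
    _ ≤ (1 + I⁻¹) * (A / ρ) + (1 + I⁻¹) * (ρ * W) := by
        gcongr; linarith [inv_pos.2 hI]
    _ = _ := by ring

/-! ### The regularised logarithmic kernel -/

/-- The regularised kernel `-(4π)⁻¹ log(|z|² + ε²)`; for `ε = 0` this is `fundE`. -/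
def Eeps (ε : ℝ) (z : E2) : ℝ := -(4 * Real.pi)⁻¹ * Real.log (‖z‖ ^ 2 + ε ^ 2)

/-- Minus the Laplacian of `Eeps ε`. -/
def rhoe (ε : ℝ) (z : E2) : ℝ := Real.pi⁻¹ * ε ^ 2 * ((‖z‖ ^ 2 + ε ^ 2)⁻¹) ^ 2

lemma Eeps_zero : Eeps 0 = fundE := by
  ext z
  simp only [Eeps, fundE]
  rw [zero_pow two_ne_zero, add_zero, Real.log_pow]
  push_cast
  field_simp
  ring

lemma sm_normsq (ε : ℝ) : Sm (fun z : E2 => ‖z‖ ^ 2 + ε ^ 2) :=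
  (contDiff_norm_sq ℝ).add contDiff_const

lemma pd_normsq (ε : ℝ) (i : Fin 2) (z : E2) : pd i (fun z => ‖z‖ ^ 2 + ε ^ 2) z = 2 * z i := by
  have h : HasFDerivAt (fun z : E2 => ‖z‖ ^ 2 + ε ^ 2) (2 • innerSL ℝ z) z :=
    (hasStrictFDerivAt_norm_sq z).hasFDerivAt.add_const _
  unfold pd
  rw [h.fderiv]
  simp [e2, EuclideanSpace.inner_single_right]

lemma Eeps_sm {ε : ℝ} (hε : 0 < ε) : Sm (Eeps ε) := by
  apply contDiff_const.mul
  apply (sm_normsq ε).log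
  intro z
  positivity

lemma pd_comp_hasDeriv {N : E2 → ℝ} {z : E2} (hN : DifferentiableAt ℝ N z) {f : ℝ → ℝ} {f' : ℝ}
    (hf : HasDerivAt f f' (N z)) (i : Fin 2) :
    pd i (fun z => f (N z)) z = f' * pd i N z := by
  have h := hf.comp_hasFDerivAt z hN.hasFDerivAt
  have : pd i (fun z => f (N z)) z = _ := congrArg (fun L => L (e2 i)) h.fderiv
  rw [this]
  simp [pd]

lemma pd_const_mul {f : E2 → ℝ} {z : E2} (hf : DifferentiableAt ℝ f z) (c : ℝ) (i : Fin 2) :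
    pd i (fun z => c * f z) z = c * pd i f z := by
  unfold pd
  rw [fderiv_const_mul hf]
  simp

/-- The first derivative of the regularised kernel. -/
def G1 (ε : ℝ) (k : Fin 2) (z : E2) : ℝ :=
  -(2 * Real.pi)⁻¹ * (z k * (‖z‖ ^ 2 + ε ^ 2)⁻¹)

lemma pd_Eeps {ε : ℝ} {z : E2} (h : ‖z‖ ^ 2 + ε ^ 2 ≠ 0) (k : Fin 2) :
    pd k (Eeps ε) z = G1 ε k z := by
  have h0 := (sm_normsq ε).diff z
  unfold Eeps G1
  rw [pd_const_mul (h0.log h), pd_comp_hasDeriv h0 (Real.hasDerivAt_log h), pd_normsq]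
  field_simp
  ring

lemma sm_coord (k : Fin 2) : Sm (fun z : E2 => z k) := (EuclideanSpace.proj k : E2 →L[ℝ] ℝ).contDiff

lemma pd_coord (i k : Fin 2) (z : E2) :
    pd i (fun z : E2 => z k) z = if i = k then 1 else 0 := by
  have : HasFDerivAt (fun z : E2 => z k) (EuclideanSpace.proj k : E2 →L[ℝ] ℝ) z :=
    (EuclideanSpace.proj k : E2 →L[ℝ] ℝ).hasFDerivAt
  unfold pd
  rw [this.fderiv]
  fin_cases i <;> fin_cases k <;> simp [e2]

lemma diff_P {ε : ℝ} {z : E2} (h : ‖z‖ ^ 2 + ε ^ 2 ≠ 0) :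
    DifferentiableAt ℝ (fun z : E2 => (‖z‖ ^ 2 + ε ^ 2)⁻¹) z := ((sm_normsq ε).diff z).inv h

lemma pd_P {ε : ℝ} {z : E2} (h : ‖z‖ ^ 2 + ε ^ 2 ≠ 0) (i : Fin 2) :
    pd i (fun z : E2 => (‖z‖ ^ 2 + ε ^ 2)⁻¹) z = -(2 * z i * ((‖z‖ ^ 2 + ε ^ 2)⁻¹) ^ 2) := by
  rw [pd_comp_hasDeriv ((sm_normsq ε).diff z) (hasDerivAt_inv h), pd_normsq]
  rw [inv_pow]
  ring

/-- The second derivatives of the regularised kernel. -/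
def G2 (ε : ℝ) (j k : Fin 2) (z : E2) : ℝ :=
  -(2 * Real.pi)⁻¹ * ((if j = k then 1 else 0) * (‖z‖ ^ 2 + ε ^ 2)⁻¹ +
    -2 * (z j * z k * ((‖z‖ ^ 2 + ε ^ 2)⁻¹ * (‖z‖ ^ 2 + ε ^ 2)⁻¹)))

lemma pd_G1 {ε : ℝ} {z : E2} (h : ‖z‖ ^ 2 + ε ^ 2 ≠ 0) (j k : Fin 2) :
    pd j (G1 ε k) z = G2 ε j k z := by
  unfold G1 G2
  have h1 := (sm_coord k).diff z
  have h2 : DifferentiableAt ℝ (fun z : E2 => z k * (‖z‖ ^ 2 + ε ^ 2)⁻¹) z := h1.mul (diff_P h)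
  rw [pd_const_mul h2, pd_mul h1 (diff_P h), pd_P h, pd_coord]
  ring

lemma pd_G2 {ε : ℝ} {z : E2} (h : ‖z‖ ^ 2 + ε ^ 2 ≠ 0) (i j k : Fin 2) :
    pd i (G2 ε j k) z = -(2 * Real.pi)⁻¹ * (-2 * (if j = k then 1 else 0) * z i *
      ((‖z‖ ^ 2 + ε ^ 2)⁻¹) ^ 2
      - 2 * ((if i = j then 1 else 0) * z k + (if i = k then 1 else 0) * z j) *
        ((‖z‖ ^ 2 + ε ^ 2)⁻¹) ^ 2 + 8 * z i * z j * z k * ((‖z‖ ^ 2 + ε ^ 2)⁻¹) ^ 3) := by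
  have hj := (sm_coord j).diff z
  have hk := (sm_coord k).diff z
  have hP := diff_P h
  have hjk : DifferentiableAt ℝ (fun z : E2 => z j * z k) z := hj.mul hk
  have hPP : DifferentiableAt ℝ
    (fun z : E2 => (‖z‖ ^ 2 + ε ^ 2)⁻¹ * (‖z‖ ^ 2 + ε ^ 2)⁻¹) z := hP.mul hP
  have hq : DifferentiableAt ℝ (fun z : E2 => z j * z k *
    ((‖z‖ ^ 2 + ε ^ 2)⁻¹ * (‖z‖ ^ 2 + ε ^ 2)⁻¹)) z := hjk.mul hPP
  have ha : DifferentiableAt ℝ (fun z : E2 => (if j = k then (1 : ℝ) else 0) *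
    (‖z‖ ^ 2 + ε ^ 2)⁻¹) z := hP.const_mul _
  have hb : DifferentiableAt ℝ (fun z : E2 => -2 * (z j * z k *
    ((‖z‖ ^ 2 + ε ^ 2)⁻¹ * (‖z‖ ^ 2 + ε ^ 2)⁻¹))) z := hq.const_mul _
  have hs : DifferentiableAt ℝ (fun z : E2 => (if j = k then (1 : ℝ) else 0) *
    (‖z‖ ^ 2 + ε ^ 2)⁻¹ + -2 * (z j * z k *
    ((‖z‖ ^ 2 + ε ^ 2)⁻¹ * (‖z‖ ^ 2 + ε ^ 2)⁻¹))) z := ha.add hb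
  unfold G2
  rw [pd_const_mul hs, pd_add ha hb, pd_const_mul hP, pd_const_mul hq, pd_mul hjk hPP, pd_mul hj hk, pd_mul hP hP, pd_P h, pd_coord,
    pd_coord]
  ring

lemma pd_congr {f g : E2 → ℝ} {z : E2} (h : f =ᶠ[nhds z] g) (i : Fin 2) :
    pd i f =ᶠ[nhds z] pd i g := by
  filter_upwards [h.fderiv (𝕜 := ℝ)] with y hy
  simp only [pd, hy]

lemma coord_le (z : E2) (k : Fin 2) : |z k| ≤ ‖z‖ := PiLp.norm_apply_le z k

lemma normsq_eq (z : E2) : ‖z‖ ^ 2 = z 0 ^ 2 + z 1 ^ 2 := by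
  rw [EuclideanSpace.norm_sq_eq]
  simp

/-- The bound `|∇³E(z)| ≤ 3|z|⁻³`, for any function that agrees with `E` near `z`. -/
lemma third_bound {F : E2 → ℝ} {z : E2} (hz : z ≠ 0) (hF : F =ᶠ[nhds z] fundE) (i j k : Fin 2) :
    |pd i (pd j (pd k F)) z| ≤ 3 / ‖z‖ ^ 3 := by
  have hev : ∀ᶠ y in nhds z, ‖y‖ ^ 2 + (0 : ℝ) ^ 2 ≠ 0 := by
    filter_upwards [isOpen_ne.mem_nhds hz] with y hy
    have : 0 < ‖y‖ := norm_pos_iff.2 hy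
    positivity
  have h1 : pd k F =ᶠ[nhds z] G1 0 k := by
    refine (pd_congr hF k).trans ?_
    rw [← Eeps_zero]
    filter_upwards [hev] with y hy using pd_Eeps hy k
  have h2 : pd j (pd k F) =ᶠ[nhds z] G2 0 j k := by
    refine (pd_congr h1 j).trans ?_
    filter_upwards [hev] with y hy using pd_G1 hy j k
  rw [(pd_congr h2 i).eq_of_nhds, pd_G2 hev.self_of_nhds]
  have hs : 0 < ‖z‖ := norm_pos_iff.2 hz
  set s := ‖z‖ with hsdef
  rw [zero_pow two_ne_zero, add_zero]
  have hb : ∀ k, |z k| ≤ s := coord_le z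
  have hd : ∀ a b : Fin 2, |(if a = b then (1 : ℝ) else 0)| ≤ 1 := by
    intro a b; split_ifs <;> simp
  have e1 : |-2 * (if j = k then (1 : ℝ) else 0) * z i * ((s ^ 2)⁻¹) ^ 2| ≤ 2 / s ^ 3 := by
    rw [abs_mul, abs_mul, abs_mul, abs_of_nonneg (by positivity : 0 ≤ ((s ^ 2)⁻¹) ^ 2)]
    calc _ ≤ 2 * 1 * s * ((s ^ 2)⁻¹) ^ 2 := by
          gcongr
          · simp
          · exact hd _ _
          · exact hb _
      _ = _ := by field_simp
  have e2' : |2 * ((if i = j then (1 : ℝ) else 0) * z k + (if i = k then 1 else 0) * z j) *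
      ((s ^ 2)⁻¹) ^ 2| ≤ 4 / s ^ 3 := by
    rw [abs_mul, abs_mul, abs_of_nonneg (by positivity : 0 ≤ ((s ^ 2)⁻¹) ^ 2)]
    have : |(if i = j then (1 : ℝ) else 0) * z k + (if i = k then 1 else 0) * z j| ≤ 1 * s + 1 * s := by
      refine (abs_add_le _ _).trans ?_
      rw [abs_mul, abs_mul]
      gcongr
      · exact hd _ _
      · exact hb _
      · exact hd _ _
      · exact hb _
    calc _ ≤ 2 * (1 * s + 1 * s) * ((s ^ 2)⁻¹) ^ 2 := by
          gcongr
          simp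
      _ = _ := by field_simp; ring
  have e3 : |8 * z i * z j * z k * ((s ^ 2)⁻¹) ^ 3| ≤ 8 / s ^ 3 := by
    rw [abs_mul, abs_mul, abs_mul, abs_mul, abs_of_nonneg (by positivity : 0 ≤ ((s ^ 2)⁻¹) ^ 3)]
    calc _ ≤ 8 * s * s * s * ((s ^ 2)⁻¹) ^ 3 := by
          gcongr
          · simp
          · exact hb _
          · exact hb _
          · exact hb _
      _ = _ := by field_simp
  rw [abs_mul, abs_neg, abs_of_pos (by positivity : 0 < (2 * Real.pi)⁻¹)]
  have e4 : |-2 * (if j = k then (1 : ℝ) else 0) * z i * ((s ^ 2)⁻¹) ^ 2 -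
      2 * ((if i = j then (1 : ℝ) else 0) * z k + (if i = k then 1 else 0) * z j) *
      ((s ^ 2)⁻¹) ^ 2 + 8 * z i * z j * z k * ((s ^ 2)⁻¹) ^ 3| ≤ 14 / s ^ 3 := by
    refine (abs_add_le _ _).trans ?_
    have := abs_sub (-2 * (if j = k then (1 : ℝ) else 0) * z i * ((s ^ 2)⁻¹) ^ 2)
      (2 * ((if i = j then (1 : ℝ) else 0) * z k + (if i = k then 1 else 0) * z j) *
      ((s ^ 2)⁻¹) ^ 2)
    have h14 : 14 / s ^ 3 = 2 / s ^ 3 + 4 / s ^ 3 + 8 / s ^ 3 := by ring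
    linarith
  have hpi : (2 * Real.pi)⁻¹ ≤ 3 / 14 := by
    rw [inv_le_comm₀ (by positivity) (by positivity)]
    linarith [Real.pi_gt_three]
  calc _ ≤ (3 / 14) * (14 / s ^ 3) := by gcongr
    _ = _ := by ring

/-- `-Δ` of the regularised kernel is the approximate identity `rhoe ε`. -/
lemma laplace_Eeps {ε : ℝ} (hε : 0 < ε) (z : E2) :
    pd 0 (pd 0 (Eeps ε)) z + pd 1 (pd 1 (Eeps ε)) z = - rhoe ε z := by
  have hne : ∀ z : E2, ‖z‖ ^ 2 + ε ^ 2 ≠ 0 := fun z => by positivity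
  have h1 : ∀ k, pd k (Eeps ε) = G1 ε k := fun k => funext fun z => pd_Eeps (hne z) k
  rw [h1, h1, pd_G1 (hne z), pd_G1 (hne z)]
  unfold G2 rhoe
  have h2 := normsq_eq z
  have h3 := hne z
  have h4 : (‖z‖ ^ 2 + ε ^ 2)⁻¹ = (‖z‖ ^ 2 + ε ^ 2) * ((‖z‖ ^ 2 + ε ^ 2)⁻¹ * (‖z‖ ^ 2 + ε ^ 2)⁻¹) := by
    field_simp
  simp only [if_true]
  rw [show (-(2 * Real.pi)⁻¹ * (1 * (‖z‖ ^ 2 + ε ^ 2)⁻¹ +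
      -2 * (z 0 * z 0 * ((‖z‖ ^ 2 + ε ^ 2)⁻¹ * (‖z‖ ^ 2 + ε ^ 2)⁻¹))) +
      -(2 * Real.pi)⁻¹ * (1 * (‖z‖ ^ 2 + ε ^ 2)⁻¹ +
      -2 * (z 1 * z 1 * ((‖z‖ ^ 2 + ε ^ 2)⁻¹ * (‖z‖ ^ 2 + ε ^ 2)⁻¹))))
    = -(2 * Real.pi)⁻¹ * (2 * (‖z‖ ^ 2 + ε ^ 2)⁻¹ +
      -2 * ((z 0 ^ 2 + z 1 ^ 2) * ((‖z‖ ^ 2 + ε ^ 2)⁻¹ * (‖z‖ ^ 2 + ε ^ 2)⁻¹))) by ring]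
  rw [← h2]
  field_simp
  ring

/-! ### Integrability of the kernels -/

/-- A locally integrable majorant, off the origin, of the kernels `Eeps ε` with `0 ≤ ε ≤ 1` and of
their first derivatives. -/
def Dom (z : E2) : ℝ := ‖z‖ ^ 2 + 2 * ‖z‖⁻¹

lemma int_inv_norm (r : ℝ) : IntegrableOn (fun z : E2 => ‖z‖⁻¹) (ball 0 r) := by
  rw [integrableOn_fun_norm_addHaar volume (f := fun y => y⁻¹)]
  have : IntegrableOn (fun _ : ℝ => (1 : ℝ)) (Set.Ioo 0 r) :=
    integrableOn_const (by simp)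
  refine this.congr_fun (fun y hy => ?_) measurableSet_Ioo
  have : y ≠ 0 := hy.1.ne'
  simp [this]

lemma Dom_locInt : LocallyIntegrable Dom := by
  rw [locallyIntegrable_iff]
  intro K hK
  obtain ⟨r, hr⟩ := hK.isBounded.subset_ball 0
  have h1 : IntegrableOn (fun z : E2 => ‖z‖ ^ 2) K :=
    (by fun_prop : Continuous fun z : E2 => ‖z‖ ^ 2).continuousOn.integrableOn_compact hK
  exact h1.add (((int_inv_norm r).mono_set hr).const_mul 2)

lemma Dom_nonneg (z : E2) : 0 ≤ Dom z := by unfold Dom; positivity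

lemma Eeps_le_Dom {ε : ℝ} (h0 : 0 ≤ ε) (h1 : ε ≤ 1) {z : E2} (hz : z ≠ 0) :
    |Eeps ε z| ≤ Dom z := by
  have hs : 0 < ‖z‖ := norm_pos_iff.2 hz
  unfold Eeps Dom
  set s := ‖z‖
  have hpi : (4 * Real.pi)⁻¹ ≤ 1 := by
    rw [inv_le_one₀ (by positivity)]
    linarith [Real.pi_gt_three]
  rw [abs_mul, abs_neg, abs_of_pos (by positivity : 0 < (4 * Real.pi)⁻¹)]
  have hlog : |Real.log (s ^ 2 + ε ^ 2)| ≤ s ^ 2 + 2 * s⁻¹ := by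
    rw [abs_le]
    constructor
    · have e1 : Real.log (s ^ 2) ≤ Real.log (s ^ 2 + ε ^ 2) :=
        Real.log_le_log (by positivity) (by nlinarith)
      have e2 : Real.log (s ^ 2) = 2 * Real.log s := by rw [Real.log_pow]; norm_num
      have e3 := Real.one_sub_inv_le_log_of_pos hs
      have : 0 ≤ s ^ 2 := by positivity
      linarith
    · have e1 := Real.log_le_sub_one_of_pos (by positivity : 0 < s ^ 2 + ε ^ 2)
      have : ε ^ 2 ≤ 1 := by nlinarith
      have : 0 < s⁻¹ := by positivity
      linarith
  calc _ ≤ 1 * (s ^ 2 + 2 * s⁻¹) := by gcongr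
    _ = _ := one_mul _

lemma G1_le (ε : ℝ) (z : E2) (k : Fin 2) : |G1 ε k z| ≤ ‖z‖⁻¹ := by
  unfold G1
  by_cases hz : z = 0
  · simp [hz]
  have hs : 0 < ‖z‖ := norm_pos_iff.2 hz
  have hb := coord_le z k
  set s := ‖z‖
  have hpi : (2 * Real.pi)⁻¹ ≤ 1 := by
    rw [inv_le_one₀ (by positivity)]
    linarith [Real.pi_gt_three]
  rw [abs_mul, abs_neg, abs_of_pos (by positivity : 0 < (2 * Real.pi)⁻¹), abs_mul,
    abs_of_pos (by positivity : 0 < (s ^ 2 + ε ^ 2)⁻¹)]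
  have : (s ^ 2 + ε ^ 2)⁻¹ ≤ (s ^ 2)⁻¹ := by
    gcongr
    nlinarith
  calc _ ≤ 1 * (s * (s ^ 2)⁻¹) := by gcongr
    _ = _ := by field_simp

lemma meas_Eeps (ε : ℝ) : Measurable (Eeps ε) := by unfold Eeps; fun_prop

/-- Domination by `Dom` off the origin gives local integrability; the value at `0` is irrelevant. -/
lemma locInt_of_dom {k : E2 → ℝ} (hm : Measurable k) {C : ℝ}
    (h : ∀ z, z ≠ 0 → |k z| ≤ C * Dom z) : LocallyIntegrable k := by
  refine (Dom_locInt.smul C).mono hm.aestronglyMeasurable ?_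
  have : ∀ᵐ z : E2, z ≠ 0 := Measure.ae_ne volume 0
  filter_upwards [this] with z hz
  exact (h z hz).trans (le_abs_self _)

lemma fundE_locInt : LocallyIntegrable fundE := by
  rw [← Eeps_zero]
  exact locInt_of_dom (meas_Eeps 0) (C := 1) fun z hz => by
    rw [one_mul]; exact Eeps_le_Dom le_rfl zero_le_one hz

lemma Eeps_tendsto {z : E2} (hz : z ≠ 0) :
    Filter.Tendsto (fun ε => Eeps ε z) (nhdsWithin 0 (Set.Ioi 0)) (nhds (fundE z)) := by
  rw [← Eeps_zero]
  have hs : 0 < ‖z‖ := norm_pos_iff.2 hz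
  have : ContinuousAt (fun ε => Eeps ε z) 0 := by
    unfold Eeps
    refine ContinuousAt.mul continuousAt_const (ContinuousAt.log (by fun_prop) (by positivity))
  exact this.tendsto.mono_left nhdsWithin_le_nhds

lemma G1_tendsto {z : E2} (hz : z ≠ 0) (k : Fin 2) :
    Filter.Tendsto (fun ε => G1 ε k z) (nhdsWithin 0 (Set.Ioi 0)) (nhds (G1 0 k z)) := by
  have hs : 0 < ‖z‖ := norm_pos_iff.2 hz
  have : ContinuousAt (fun ε => G1 ε k z) 0 := by
    unfold G1
    refine ContinuousAt.mul continuousAt_const (ContinuousAt.mul continuousAt_const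
      (ContinuousAt.inv₀ (by fun_prop) (by positivity)))
  exact this.tendsto.mono_left nhdsWithin_le_nhds

/-- Passage to the limit in correlations with dominated kernels. -/
lemma Cv_tendsto {K : ℝ → E2 → ℝ} {k : E2 → ℝ} (hK : ∀ ε, 0 < ε → Measurable (K ε)) {C : ℝ}
    (hd : ∀ ε, 0 < ε → ε ≤ 1 → ∀ z, z ≠ 0 → |K ε z| ≤ C * Dom z)
    (hl : ∀ z, z ≠ 0 → Filter.Tendsto (fun ε => K ε z) (nhdsWithin 0 (Set.Ioi 0)) (nhds (k z)))
    {g : E2 → ℝ} (hg : Continuous g) (hc : HasCompactSupport g) (y : E2) :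
    Filter.Tendsto (fun ε => Cv (K ε) g y) (nhdsWithin 0 (Set.Ioi 0)) (nhds (Cv k g y)) := by
  have hne : ∀ᵐ z : E2, z ≠ 0 := Measure.ae_ne volume 0
  have hgc : Continuous fun z => g (y + z) := hg.comp (by fun_prop)
  refine tendsto_integral_filter_of_dominated_convergence (fun z => C * Dom z * |g (y + z)|)
    ?_ ?_ ?_ ?_
  · filter_upwards [self_mem_nhdsWithin] with ε hε
    exact ((hK ε hε).mul hgc.measurable).aestronglyMeasurable
  · have : Set.Ioc (0 : ℝ) 1 ∈ nhdsWithin 0 (Set.Ioi (0 : ℝ)) := Ioc_mem_nhdsGT one_pos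
    filter_upwards [this] with ε hε
    filter_upwards [hne] with z hz
    rw [norm_mul]
    exact mul_le_mul_of_nonneg_right (hd ε hε.1 hε.2 z hz) (abs_nonneg _)
  · have := (Dom_locInt.smul C).integrable_smul_right_of_hasCompactSupport hgc.abs
      (hcs_shift hc y).abs
    simpa using this
  · filter_upwards [hne] with z hz
    exact (hl z hz).mul_const _

/-- Young's inequality `L¹ * L² ⊂ L²`. -/
lemma young {k g : E2 → ℝ} (hk : Integrable k) (hg : Continuous g) (hc : HasCompactSupport g) :
    Integrable (fun y => Cv k g y ^ 2) ∧
      ∫ y, Cv k g y ^ 2 ≤ (∫ z, |k z|) ^ 2 * ∫ y, g y ^ 2 := by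
  set I := ∫ z, |k z| with hI
  have hI0 : 0 ≤ I := integral_nonneg fun _ => abs_nonneg _
  have hka : Integrable fun z => |k z| := hk.abs
  have hgc : ∀ y, Continuous fun z => g (y + z) := fun y => hg.comp (by fun_prop)
  have hg2 : Continuous fun y => g y ^ 2 := hg.pow 2
  have hc2 : HasCompactSupport fun y => g y ^ 2 := hc.comp_left (g := fun t : ℝ => t ^ 2) (by simp)
  have hi1 : ∀ y, Integrable fun z => |k z| * |g (y + z)| := fun y => by
    simpa using Cv_integrable hka.locallyIntegrable hg.abs hc.abs y
  have hi2 : ∀ y, Integrable fun z => |k z| * g (y + z) ^ 2 := fun y =>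
    Cv_integrable hka.locallyIntegrable hg2 hc2 y
  have hpt : ∀ y, Cv k g y ^ 2 ≤ I * Cv (fun z => |k z|) (fun y => g y ^ 2) y := by
    intro y
    have h1 : |Cv k g y| ≤ ∫ z, |k z| * |g (y + z)| := by
      refine (abs_integral_le_integral_abs).trans (le_of_eq ?_)
      simp only [abs_mul]
    set J := ∫ z, |k z| * |g (y + z)| with hJ
    set Q := ∫ z, |k z| * g (y + z) ^ 2 with hQ
    have hJ0 : 0 ≤ J := integral_nonneg fun _ => by positivity
    have h2 : 0 ≤ ∫ z, |k z| * (I * |g (y + z)| - J) ^ 2 := integral_nonneg fun _ => by positivity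
    have h3 : ∫ z, |k z| * (I * |g (y + z)| - J) ^ 2 = I ^ 2 * Q - 2 * I * J * J + J ^ 2 * I := by
      have : ∀ z, |k z| * (I * |g (y + z)| - J) ^ 2 =
          I ^ 2 * (|k z| * g (y + z) ^ 2) - 2 * I * J * (|k z| * |g (y + z)|) + J ^ 2 * |k z| := by
        intro z
        rw [← sq_abs (g (y + z))]
        ring
      simp only [this]
      have a1 := (hi2 y).const_mul (I ^ 2)
      have a2 := (hi1 y).const_mul (2 * I * J)
      have a12 : Integrable fun z => I ^ 2 * (|k z| * g (y + z) ^ 2) -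
        2 * I * J * (|k z| * |g (y + z)|) := a1.sub a2
      rw [integral_add a12 (hka.const_mul _), integral_sub a1 a2, integral_const_mul,
        integral_const_mul, integral_const_mul]
    have h4 : J ^ 2 ≤ I * Q := by
      rcases hI0.eq_or_lt with h0 | h0
      · have hk0 : (fun z => |k z|) =ᵐ[volume] 0 :=
          (integral_eq_zero_iff_of_nonneg (fun _ => abs_nonneg _) hka).1 (by rw [← hI, ← h0])
        have : J = 0 := by
          rw [hJ]
          apply integral_eq_zero_of_ae
          filter_upwards [hk0] with z hz
          simp only [Pi.zero_apply] at hz ⊢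
          rw [hz, zero_mul]
        rw [this, ← h0]; simp
      · rw [h3] at h2
        have : 0 ≤ I * (I * Q - J ^ 2) := by nlinarith
        have := nonneg_of_mul_nonneg_right this h0
        linarith
    have h5 : Cv k g y ^ 2 ≤ J ^ 2 := by
      rw [← sq_abs]
      exact pow_le_pow_left₀ (abs_nonneg _) h1 2
    exact h5.trans h4
  have hconv : Integrable (Cv (fun z => |k z|) (fun y => g y ^ 2)) ∧
      ∫ y, Cv (fun z => |k z|) (fun y => g y ^ 2) y = I * ∫ y, g y ^ 2 := by
    rw [Cv_conv]
    have hn : Integrable fun t => |k (-t)| := hka.comp_neg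
    refine ⟨hn.integrable_convolution _ (intg hg2 hc2), ?_⟩
    rw [integral_convolution _ hn (intg hg2 hc2), integral_neg_eq_self (fun t => |k t|)]
    rfl
  have hcont : Continuous (Cv k g) := by
    rw [Cv_conv]
    exact hc.continuous_convolution_right _ (locInt_neg hk.locallyIntegrable) hg
  have hint : Integrable (fun y => Cv k g y ^ 2) :=
    (hconv.1.const_mul I).mono' (hcont.pow 2).aestronglyMeasurable
      (Filter.Eventually.of_forall fun y => by
        rw [Real.norm_of_nonneg (sq_nonneg _)]; exact hpt y)
  refine ⟨hint, ?_⟩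
  calc _ ≤ ∫ y, I * Cv (fun z => |k z|) (fun y => g y ^ 2) y :=
        integral_mono hint (hconv.1.const_mul I) hpt
    _ = _ := by rw [integral_const_mul, hconv.2]; ring

lemma int_rhoe : Integrable (rhoe 1) := by
  have h := integrable_rpow_neg_one_add_norm_sq (E := E2) (μ := volume) (r := 4) (by simp; norm_num)
  refine (h.const_mul Real.pi⁻¹).congr (Filter.Eventually.of_forall fun z => ?_)
  simp only [rhoe]
  have : (-4 / 2 : ℝ) = -((2 : ℕ) : ℝ) := by norm_num
  rw [this, Real.rpow_neg (by positivity), Real.rpow_natCast]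
  simp [add_comm]

lemma rhoe_nonneg (ε : ℝ) (z : E2) : 0 ≤ rhoe ε z := by
  unfold rhoe; have := Real.pi_pos; positivity

lemma rhoe_scale {ε : ℝ} (hε : 0 < ε) (z : E2) :
    rhoe ε z = (ε ^ 2)⁻¹ * rhoe 1 (ε⁻¹ • z) := by
  simp only [rhoe, norm_smul, norm_inv, Real.norm_of_nonneg hε.le]
  have h1 : ‖z‖ ^ 2 + ε ^ 2 = ε ^ 2 * ((ε⁻¹ * ‖z‖) ^ 2 + 1 ^ 2) := by field_simp
  rw [h1, mul_inv]
  field_simp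

/-- The `L¹` norm of the approximate identity does not depend on `ε`. -/
lemma rhoe_int {ε : ℝ} (hε : 0 < ε) : Integrable (rhoe ε) ∧ ∫ z, |rhoe ε z| = ∫ z, rhoe 1 z := by
  have h1 : rhoe ε = fun z => (ε ^ 2)⁻¹ * rhoe 1 (ε⁻¹ • z) := funext (rhoe_scale hε)
  simp only [abs_of_nonneg (rhoe_nonneg ε _)]
  refine ⟨?_, ?_⟩
  · rw [h1]
    exact (int_rhoe.comp_smul (inv_ne_zero hε.ne')).const_mul _
  · rw [h1, integral_const_mul, Measure.integral_comp_smul]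
    simp only [finrank_euclideanSpace, Fintype.card_fin, smul_eq_mul]
    rw [abs_of_pos (by positivity)]
    field_simp

/-- The truncated kernel `1_{|z| < r} / |z|`. -/
def kinv (r : ℝ) : E2 → ℝ := (ball (0 : E2) r).indicator fun z => ‖z‖⁻¹

lemma kinv_int {r : ℝ} : Integrable (kinv r) := by
  unfold kinv
  rw [integrable_indicator_iff measurableSet_ball]
  exact int_inv_norm r

lemma kinv_integral {r : ℝ} (hr : 0 < r) : ∫ z, kinv r z = r * ∫ z, kinv 1 z := by
  have : kinv r = fun z => r⁻¹ * kinv 1 (r⁻¹ • z) := by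
    ext z
    have hiff : z ∈ ball (0 : E2) r ↔ r⁻¹ • z ∈ ball (0 : E2) 1 := by
      simp only [mem_ball_zero_iff, norm_smul, norm_inv, Real.norm_of_nonneg hr.le]
      rw [inv_mul_lt_iff₀ hr, mul_one]
    unfold kinv
    by_cases h : z ∈ ball (0 : E2) r
    · rw [Set.indicator_of_mem h, Set.indicator_of_mem (hiff.1 h), norm_smul, norm_inv,
        Real.norm_of_nonneg hr.le]
      field_simp
    · rw [Set.indicator_of_notMem h, Set.indicator_of_notMem (fun h' => h (hiff.2 h')), mul_zero]
  rw [this, integral_const_mul, Measure.integral_comp_smul]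
  simp only [finrank_euclideanSpace, Fintype.card_fin, smul_eq_mul]
  rw [abs_of_pos (by positivity)]
  field_simp

lemma kinv_nonneg (r : ℝ) (z : E2) : 0 ≤ kinv r z :=
  Set.indicator_nonneg (fun _ _ => by positivity) z

/-! ### The local `L²` bound for second derivatives of the logarithmic potential -/

lemma int_lin5 {f₁ f₂ f₃ f₄ f₅ : E2 → ℝ} (h₁ : Integrable f₁) (h₂ : Integrable f₂)
    (h₃ : Integrable f₃) (h₄ : Integrable f₄) (h₅ : Integrable f₅) :
    ∫ x, (2 * f₁ x + 16 * f₂ x - f₃ x - 4 * (f₄ x - f₅ x)) =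
      2 * (∫ x, f₁ x) + 16 * (∫ x, f₂ x) - (∫ x, f₃ x) - 4 * ((∫ x, f₄ x) - ∫ x, f₅ x) := by
  have a1 : Integrable fun x => 2 * f₁ x := h₁.const_mul 2
  have a2 : Integrable fun x => 16 * f₂ x := h₂.const_mul 16
  have a3 : Integrable fun x => 2 * f₁ x + 16 * f₂ x := a1.add a2
  have a4 : Integrable fun x => 2 * f₁ x + 16 * f₂ x - f₃ x := a3.sub h₃
  have a5 : Integrable fun x => 4 * (f₄ x - f₅ x) := (h₄.sub h₅).const_mul 4
  rw [integral_sub a4 a5, integral_sub a3 h₃, integral_add a1 a2, integral_const_mul,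
    integral_const_mul, integral_const_mul, integral_sub h₄ h₅]

/-- Localised Bochner-type inequality: the Hessian is controlled in `L²` by the Laplacian, up to a
gradient term on the support of `∇η`, because `∂₀₀φ ∂₁₁φ - (∂₀₁φ)²` is a divergence. -/
lemma hess_bound {φ η : E2 → ℝ} (hφ : Sm φ) (hη : Sm η) (hc : HasCompactSupport η) :
    ∫ x, η x ^ 2 * (pd 0 (pd 0 φ) x ^ 2 + 2 * pd 0 (pd 1 φ) x ^ 2 + pd 1 (pd 1 φ) x ^ 2) ≤
      2 * (∫ x, η x ^ 2 * (pd 0 (pd 0 φ) x + pd 1 (pd 1 φ) x) ^ 2) +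
      16 * ∫ x, (pd 0 η x ^ 2 + pd 1 η x ^ 2) * pd 0 φ x ^ 2 := by
  have sa : Sm (pd 0 (pd 0 φ)) := (hφ.pd 0).pd 0
  have sb : Sm (pd 0 (pd 1 φ)) := (hφ.pd 1).pd 0
  have sd : Sm (pd 1 (pd 1 φ)) := (hφ.pd 1).pd 1
  have s0 : Sm (pd 0 φ) := hφ.pd 0
  have hη2 : HasCompactSupport fun x => η x * η x := hc.mul_right
  have sη2 : Sm fun x => η x * η x := hη.mul hη
  have s0d : Sm fun x => pd 0 φ x * pd 1 (pd 1 φ) x := s0.mul sd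
  have s0b : Sm fun x => pd 0 φ x * pd 0 (pd 1 φ) x := s0.mul sb
  have sf : Sm fun x => η x * η x * (pd 0 φ x * pd 1 (pd 1 φ) x) := sη2.mul (s0.mul sd)
  have sg : Sm fun x => η x * η x * (pd 0 φ x * pd 0 (pd 1 φ) x) := sη2.mul (s0.mul sb)
  have cf : HasCompactSupport fun x => η x * η x * (pd 0 φ x * pd 1 (pd 1 φ) x) := hη2.mul_right
  have cg : HasCompactSupport fun x => η x * η x * (pd 0 φ x * pd 0 (pd 1 φ) x) := hη2.mul_right
  have if0 := int_pd sf cf 0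
  have ig0 := int_pd sg cg 1
  have ca := sa.continuous
  have cb := sb.continuous
  have cd := sd.continuous
  have c0 := s0.continuous
  have cη := hη.continuous
  have cη0 := (hη.pd 0).continuous
  have cη1 := (hη.pd 1).continuous
  have hsq : HasCompactSupport fun x => η x ^ 2 := hc.comp_left (g := fun y : ℝ => y ^ 2) (by simp)
  have i1 : Integrable fun x => η x ^ 2 * (pd 0 (pd 0 φ) x ^ 2 + 2 * pd 0 (pd 1 φ) x ^ 2 +
      pd 1 (pd 1 φ) x ^ 2) := intg (by fun_prop) hsq.mul_right
  have i2 : Integrable fun x => η x ^ 2 * (pd 0 (pd 0 φ) x + pd 1 (pd 1 φ) x) ^ 2 :=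
    intg (by fun_prop) hsq.mul_right
  have i3 : Integrable fun x => (pd 0 η x ^ 2 + pd 1 η x ^ 2) * pd 0 φ x ^ 2 := by
    refine intg (by fun_prop) (HasCompactSupport.mul_right ?_)
    exact ((hcs_pd hc 0).comp_left (g := fun y : ℝ => y ^ 2) (by simp)).add
      ((hcs_pd hc 1).comp_left (g := fun y : ℝ => y ^ 2) (by simp))
  have i4 := intg (sf.pd 0).continuous (hcs_pd cf 0)
  have i5 := intg (sg.pd 1).continuous (hcs_pd cg 1)
  -- the bracket multiplied by `4` is a divergence, so its integral vanishes; expanding it leaves a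
  -- pointwise nonnegative integrand
  have key : 0 ≤ ∫ x, (2 * (η x ^ 2 * (pd 0 (pd 0 φ) x + pd 1 (pd 1 φ) x) ^ 2) +
      16 * ((pd 0 η x ^ 2 + pd 1 η x ^ 2) * pd 0 φ x ^ 2) -
      η x ^ 2 * (pd 0 (pd 0 φ) x ^ 2 + 2 * pd 0 (pd 1 φ) x ^ 2 + pd 1 (pd 1 φ) x ^ 2) -
      4 * (pd 0 (fun x => η x * η x * (pd 0 φ x * pd 1 (pd 1 φ) x)) x -
        pd 1 (fun x => η x * η x * (pd 0 φ x * pd 0 (pd 1 φ) x)) x)) := by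
    refine integral_nonneg fun x => ?_
    have e1 : pd 0 (fun x => η x * η x * (pd 0 φ x * pd 1 (pd 1 φ) x)) x =
        η x * η x * (pd 0 φ x * pd 0 (pd 1 (pd 1 φ)) x + pd 0 (pd 0 φ) x * pd 1 (pd 1 φ) x) +
        2 * η x * pd 0 η x * (pd 0 φ x * pd 1 (pd 1 φ) x) := by
      rw [pd_mul (sη2.diff x) (s0d.diff x), pd_mul (hη.diff x) (hη.diff x),
        pd_mul (s0.diff x) (sd.diff x)]
      ring
    have e2 : pd 1 (fun x => η x * η x * (pd 0 φ x * pd 0 (pd 1 φ) x)) x =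
        η x * η x * (pd 0 φ x * pd 0 (pd 1 (pd 1 φ)) x + pd 0 (pd 1 φ) x * pd 0 (pd 1 φ) x) +
        2 * η x * pd 1 η x * (pd 0 φ x * pd 0 (pd 1 φ) x) := by
      rw [pd_mul (sη2.diff x) (s0b.diff x), pd_mul (hη.diff x) (hη.diff x),
        pd_mul (s0.diff x) (sb.diff x), pd_comm (hφ.pd 1) 1 0, pd_comm hφ 1 0]
      ring
    simp only [Pi.zero_apply]
    rw [e1, e2]
    nlinarith [sq_nonneg (η x * pd 1 (pd 1 φ) x - 4 * pd 0 η x * pd 0 φ x),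
      sq_nonneg (η x * pd 0 (pd 1 φ) x + 4 * pd 1 η x * pd 0 φ x),
      sq_nonneg (η x * pd 0 (pd 0 φ) x), sq_nonneg (η x * pd 0 (pd 1 φ) x)]
  rw [int_lin5 i2 i3 i1 i4 i5, if0, ig0] at key
  linarith

lemma Cv_add {k g h : E2 → ℝ} {y : E2} (h1 : Integrable fun z => k z * g (y + z))
    (h2 : Integrable fun z => k z * h (y + z)) :
    Cv k (fun x => g x + h x) y = Cv k g y + Cv k h y := by
  unfold Cv
  rw [← integral_add h1 h2]
  congr 1
  ext z
  ring

lemma pd2_Cv {k g : E2 → ℝ} (hk : LocallyIntegrable k) (hg : Sm g) (hc : HasCompactSupport g)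
    (i j : Fin 2) : pd i (pd j (Cv k g)) = Cv k (pd i (pd j g)) := by
  rw [pd_Cv hk hg hc, pd_Cv hk (hg.pd j) (hcs_pd hc j)]

lemma Cv_ibp2 {k g : E2 → ℝ} (hk : Sm k) (hg : Sm g) (hc : HasCompactSupport g) (i j : Fin 2)
    (y : E2) : Cv k (pd i (pd j g)) y = Cv (pd i (pd j k)) g y := by
  rw [Cv_ibp (hk.pd j) hg hc, Cv_ibp hk (hg.pd i) (hcs_pd hc i), neg_neg]
  congr 1
  ext z
  exact pd_comm hg i j z

/-- The regularised potential of `g` has Laplacian `-rhoe ε * g`. -/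
lemma laplace_Cv {ε : ℝ} (hε : 0 < ε) {g : E2 → ℝ} (hg : Sm g) (hc : HasCompactSupport g) (y : E2) :
    pd 0 (pd 0 (Cv (Eeps ε) g)) y + pd 1 (pd 1 (Cv (Eeps ε) g)) y = - Cv (rhoe ε) g y := by
  have hE := Eeps_sm hε
  rw [pd2_Cv hE.locInt hg hc, pd2_Cv hE.locInt hg hc, Cv_ibp2 hE hg hc, Cv_ibp2 hE hg hc]
  unfold Cv
  rw [← integral_add (Cv_integrable ((hE.pd 0).pd 0).locInt hg.continuous hc y)
    (Cv_integrable ((hE.pd 1).pd 1).locInt hg.continuous hc y), ← integral_neg]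
  congr 1
  ext z
  rw [← add_mul, laplace_Eeps hε, neg_mul]

lemma grad_Cv {ε : ℝ} (hε : 0 < ε) {g : E2 → ℝ} (hg : Sm g) (hc : HasCompactSupport g) (k : Fin 2)
    (y : E2) : pd k (Cv (Eeps ε) g) y = - Cv (G1 ε k) g y := by
  have hE := Eeps_sm hε
  have : pd k (Eeps ε) = G1 ε k := funext fun z => pd_Eeps (by positivity) k
  rw [pd_Cv hE.locInt hg hc, ← this, Cv_ibp hE hg hc, neg_neg]

/-- For a density supported in `B(0, 2r)` and `‖y‖ ≤ 5r`, only the part of the gradient kernel in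
`B(0, 7r)` contributes, and it is at most `1 / |z|` there. -/
lemma grad_Cv_le {ε : ℝ} {r : ℝ} {g : E2 → ℝ} (hg : Continuous g)
    (hc : HasCompactSupport g) (hg0 : ∀ x, 2 * r ≤ ‖x‖ → g x = 0) (k : Fin 2) {y : E2}
    (hy : ‖y‖ ≤ 5 * r) : |Cv (G1 ε k) g y| ≤ Cv (kinv (7 * r)) (fun x => |g x|) y := by
  unfold Cv
  refine (abs_integral_le_integral_abs).trans ?_
  refine integral_mono_of_nonneg (Filter.Eventually.of_forall fun z => abs_nonneg _) ?_ ?_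
  · exact Cv_integrable kinv_int.locallyIntegrable hg.abs (hc.comp_left (g := fun y : ℝ => |y|) abs_zero) y
  · refine Filter.Eventually.of_forall fun z => ?_
    simp only [abs_mul]
    by_cases hz : 2 * r ≤ ‖y + z‖
    · simp [hg0 _ hz]
    · have : z ∈ ball (0 : E2) (7 * r) := by
        rw [mem_ball_zero_iff]
        have h1 : ‖z‖ ≤ ‖y + z‖ + ‖y‖ := by
          calc ‖z‖ = ‖(y + z) - y‖ := by simp
            _ ≤ _ := norm_sub_le _ _
        linarith [not_le.1 hz]
      have h2 : |G1 ε k z| ≤ kinv (7 * r) z := by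
        unfold kinv
        rw [Set.indicator_of_mem this]
        exact G1_le ε z k
      gcongr

/-- The local `L²` bound for the Hessian of the regularised potential, with a constant independent of
both `ε` and `r`: in `hess_bound` with a cut-off at scale `4r`, the Laplacian and the gradient are
both controlled by Young's inequality. -/
lemma hess_eps : ∃ C : ℝ, 0 < C ∧ ∀ r : ℝ, 0 < r → ∀ g : E2 → ℝ, Sm g →
    (∀ x, 2 * r ≤ ‖x‖ → g x = 0) → ∀ j k : Fin 2, ∀ ε, 0 < ε →
    ∫ y in ball 0 (4 * r), (pd j (pd k (Cv (Eeps ε) g)) y) ^ 2 ≤ C * ∫ y, g y ^ 2 := by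
  obtain ⟨c, hc0, hcg⟩ := chi_grad
  set A := ∫ z, rhoe 1 z
  set B := ∫ z, kinv 1 z
  refine ⟨2 * A ^ 2 + 16 * (2 * (c / 4) ^ 2 * (7 * B) ^ 2) + 1, by positivity, ?_⟩
  intro r hr g hg hg0 j k ε hε
  have hc : HasCompactSupport g := hcs_of_zero _ hg0
  set φ := Cv (Eeps ε) g with hφdef
  have hφ : Sm φ := Cv_sm (Eeps_sm hε).locInt hg hc
  set η := chi (4 * r) with hηdef
  have hr4 : 0 < 4 * r := by positivity
  have hη : Sm η := chi_sm _
  have hηc : HasCompactSupport η := chi_hcs hr4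
  have hG : 0 ≤ ∫ y, g y ^ 2 := integral_nonneg fun _ => sq_nonneg _
  have hb := hess_bound hφ hη hηc
  have h1 : ∫ x, η x ^ 2 * (pd 0 (pd 0 φ) x + pd 1 (pd 1 φ) x) ^ 2 ≤ A ^ 2 * ∫ y, g y ^ 2 := by
    have hy := young (rhoe_int hε).1 hg.continuous hc
    rw [(rhoe_int hε).2] at hy
    refine le_trans ?_ hy.2
    refine integral_mono_of_nonneg (Filter.Eventually.of_forall fun z => by positivity) hy.1 ?_
    refine Filter.Eventually.of_forall fun x => ?_
    simp only
    rw [laplace_Cv hε hg hc, neg_sq]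
    have : η x ^ 2 ≤ 1 := pow_le_one₀ (chi_nonneg _ _) (chi_le_one _ _)
    nlinarith [sq_nonneg (Cv (rhoe ε) g x)]
  have h2 : ∫ x, (pd 0 η x ^ 2 + pd 1 η x ^ 2) * pd 0 φ x ^ 2 ≤
      2 * (c / 4) ^ 2 * (7 * B) ^ 2 * ∫ y, g y ^ 2 := by
    have hca : HasCompactSupport fun x => |g x| := hc.comp_left (g := fun y : ℝ => |y|) abs_zero
    have hy := young (kinv_int (r := 7 * r)) hg.continuous.abs hca
    have hk : ∫ z, |kinv (7 * r) z| = 7 * r * B := by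
      simp only [abs_of_nonneg (kinv_nonneg _ _)]
      exact kinv_integral (by positivity)
    rw [hk] at hy
    simp only [sq_abs] at hy
    calc _ ≤ ∫ x, 2 * (c / (4 * r)) ^ 2 * Cv (kinv (7 * r)) (fun x => |g x|) x ^ 2 := by
          refine integral_mono_of_nonneg (Filter.Eventually.of_forall fun z => by positivity)
            (hy.1.const_mul _) (Filter.Eventually.of_forall fun x => ?_)
          simp only
          by_cases hx : 5 / 4 * (4 * r) ≤ ‖x‖
          · rw [hηdef, pd_chi_zero hr4 hx, pd_chi_zero hr4 hx]
            simp
            positivity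
          · have hx' : ‖x‖ ≤ 5 * r := by linarith [not_le.1 hx]
            have g1 : pd 0 φ x ^ 2 ≤ Cv (kinv (7 * r)) (fun x => |g x|) x ^ 2 := by
              rw [hφdef, grad_Cv hε hg hc, neg_sq, ← sq_abs]
              exact pow_le_pow_left₀ (abs_nonneg _) (grad_Cv_le hg.continuous hc hg0 0 hx') 2
            have g2 : ∀ i, pd i η x ^ 2 ≤ (c / (4 * r)) ^ 2 := fun i => by
              rw [← sq_abs]
              exact pow_le_pow_left₀ (abs_nonneg _) (hcg _ hr4 i x) 2
            have := g2 0
            have := g2 1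
            gcongr
            linarith
      _ = 2 * (c / (4 * r)) ^ 2 * ∫ x, Cv (kinv (7 * r)) (fun x => |g x|) x ^ 2 :=
          integral_const_mul _ _
      _ ≤ 2 * (c / (4 * r)) ^ 2 * ((7 * r * B) ^ 2 * ∫ y, g y ^ 2) := by
          gcongr
          exact hy.2
      _ = _ := by field_simp
  have hS : ∀ x, (pd j (pd k φ) x) ^ 2 ≤
      pd 0 (pd 0 φ) x ^ 2 + 2 * pd 0 (pd 1 φ) x ^ 2 + pd 1 (pd 1 φ) x ^ 2 := by
    intro x
    have e : pd 1 (pd 0 φ) x = pd 0 (pd 1 φ) x := pd_comm hφ 1 0 x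
    fin_cases j <;> fin_cases k <;> simp only [Fin.zero_eta, Fin.mk_one, e] <;>
      nlinarith [sq_nonneg (pd 0 (pd 0 φ) x), sq_nonneg (pd 0 (pd 1 φ) x),
        sq_nonneg (pd 1 (pd 1 φ) x)]
  have ca := ((hφ.pd 0).pd 0).continuous
  have cb := ((hφ.pd 1).pd 0).continuous
  have cd := ((hφ.pd 1).pd 1).continuous
  have cη := hη.continuous
  have h3 : ∫ y in ball 0 (4 * r), (pd j (pd k φ) y) ^ 2 ≤
      ∫ x, η x ^ 2 * (pd 0 (pd 0 φ) x ^ 2 + 2 * pd 0 (pd 1 φ) x ^ 2 + pd 1 (pd 1 φ) x ^ 2) := by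
    rw [← integral_indicator measurableSet_ball]
    refine integral_mono_of_nonneg (Filter.Eventually.of_forall fun z =>
      Set.indicator_nonneg (fun _ _ => sq_nonneg _) z) ?_ (Filter.Eventually.of_forall fun x => ?_)
    · exact intg (by fun_prop)
        (hηc.comp_left (g := fun y : ℝ => y ^ 2) (by simp)).mul_right
    · by_cases hx : x ∈ ball (0 : E2) (4 * r)
      · simp only [Set.indicator_of_mem hx]
        rw [hηdef, chi_one hr4 (mem_ball_zero_iff.1 hx).le, one_pow, one_mul]
        exact hS x
      · simp only [Set.indicator_of_notMem hx]
        positivity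
  nlinarith

/-- A compactly supported continuous function is dominated by a multiple of a cut-off, which serves as
an integrable majorant. -/
lemma abs_le_chi {h : E2 → ℝ} (hh : Continuous h) (hc : HasCompactSupport h) :
    ∃ M R : ℝ, 0 ≤ M ∧ 0 < R ∧ ∀ x, |h x| ≤ M * chi R x := by
  obtain ⟨M, hM⟩ := hc.exists_bound_of_continuous hh
  obtain ⟨R, hR⟩ := hc.isBounded.subset_ball 0
  refine ⟨|M|, max R 1, abs_nonneg _, by positivity, fun x => ?_⟩
  by_cases hx : x ∈ tsupport h
  · have : ‖x‖ < R := mem_ball_zero_iff.1 (hR hx)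
    rw [chi_one (by positivity) (this.le.trans (le_max_left _ _)), mul_one]
    exact (hM x).trans (le_abs_self _)
  · rw [image_eq_zero_of_notMem_tsupport hx, abs_zero]
    exact mul_nonneg (abs_nonneg _) (chi_nonneg _ _)

/-- Local Calderón–Zygmund bound at `L²` for the logarithmic potential, uniform in the scale `r`. -/
lemma hess_E : ∃ C : ℝ, 0 < C ∧ ∀ r : ℝ, 0 < r → ∀ g : E2 → ℝ, Sm g →
    (∀ x, 2 * r ≤ ‖x‖ → g x = 0) → ∀ j k : Fin 2,
    ∫ y in ball 0 (4 * r), (pd j (pd k (Cv fundE g)) y) ^ 2 ≤ C * ∫ y, g y ^ 2 := by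
  obtain ⟨C, hC, H⟩ := hess_eps
  refine ⟨C, hC, fun r hr g hg hg0 j k => ?_⟩
  have hc : HasCompactSupport g := hcs_of_zero _ hg0
  set h := pd j (pd k g) with hh
  have hs : Sm h := (hg.pd k).pd j
  have hhc : HasCompactSupport h := hcs_pd (hcs_pd hc k) j
  obtain ⟨M, R, hM, hR, hle⟩ := abs_le_chi hs.continuous hhc
  have hcont : Continuous (Cv Dom (chi R)) := (Cv_sm Dom_locInt (chi_sm R) (chi_hcs hR)).continuous
  have hev : ∀ᶠ ε : ℝ in nhdsWithin 0 (Set.Ioi 0), 0 < ε ∧ ε ≤ 1 := by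
    have h1 : ∀ᶠ ε : ℝ in nhdsWithin 0 (Set.Ioi 0), ε ∈ Set.Ioi (0 : ℝ) := self_mem_nhdsWithin
    have h2 : ∀ᶠ ε : ℝ in nhdsWithin 0 (Set.Ioi 0), ε < 1 :=
      nhdsWithin_le_nhds (gt_mem_nhds zero_lt_one)
    filter_upwards [h1, h2] with ε a b using ⟨a, b.le⟩
  rw [pd2_Cv fundE_locInt hg hc]
  have hlim : Filter.Tendsto (fun ε => ∫ y in ball 0 (4 * r), (Cv (Eeps ε) h y) ^ 2)
      (nhdsWithin 0 (Set.Ioi 0)) (nhds (∫ y in ball 0 (4 * r), (Cv fundE h y) ^ 2)) := by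
    refine tendsto_integral_filter_of_dominated_convergence
      (fun y => (M * Cv Dom (chi R) y) ^ 2) ?_ ?_ ?_ ?_
    · filter_upwards [hev] with ε hε
      exact ((Cv_sm (Eeps_sm hε.1).locInt hs hhc).continuous.pow 2).aestronglyMeasurable
    · filter_upwards [hev] with ε hε
      refine Filter.Eventually.of_forall fun y => ?_
      rw [Real.norm_of_nonneg (sq_nonneg _), ← sq_abs]
      refine pow_le_pow_left₀ (abs_nonneg _) ?_ 2
      unfold Cv
      rw [← integral_const_mul]
      refine abs_integral_le_integral_abs.trans ?_
      refine integral_mono_of_nonneg (Filter.Eventually.of_forall fun z => abs_nonneg _) ?_ ?_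
      · exact (Cv_integrable Dom_locInt (chi_sm R).continuous (chi_hcs hR) y).const_mul M
      · have : ∀ᵐ z : E2, z ≠ 0 := Measure.ae_ne volume 0
        filter_upwards [this] with z hz
        rw [abs_mul]
        calc _ ≤ Dom z * (M * chi R (y + z)) :=
              mul_le_mul (Eeps_le_Dom hε.1.le hε.2 hz) (hle _) (abs_nonneg _) (Dom_nonneg z)
          _ = _ := by ring
    · have : Continuous fun y => (M * Cv Dom (chi R) y) ^ 2 := by fun_prop
      exact (this.continuousOn.integrableOn_compact (isCompact_closedBall 0 (4 * r))).mono_set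
        ball_subset_closedBall
    · refine Filter.Eventually.of_forall fun y => ?_
      refine (Cv_tendsto (C := 1) (fun ε _ => meas_Eeps ε) (fun ε h0 h1 z hz => ?_)
        (fun z hz => Eeps_tendsto hz) hs.continuous hhc y).pow 2
      rw [one_mul]
      exact Eeps_le_Dom h0.le h1 hz
  refine le_of_tendsto hlim ?_
  filter_upwards [hev] with ε hε
  have := H r hr g hg hg0 j k ε hε.1
  rwa [pd2_Cv (Eeps_sm hε.1).locInt hg hc] at this

/-! ### Far-field tails -/

lemma rpow_tail {a p : ℝ} (ha : 0 < a) (hp : p < -1) :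
    ∫⁻ s in Set.Ioi a, ENNReal.ofReal (s ^ p) = ENNReal.ofReal (-a ^ (p + 1) / (p + 1)) := by
  rw [← integral_Ioi_rpow_of_lt hp ha, ofReal_integral_eq_lintegral_ofReal]
  · exact integrableOn_Ioi_rpow_of_lt hp ha
  · filter_upwards [self_mem_ae_restrict measurableSet_Ioi] with s hs
    exact Real.rpow_nonneg (ha.le.trans (Set.mem_Ioi.1 hs).le) _

/-- A density of mass at most `M² s^{2+2α}` on `B(0,s)` for `s ≥ r`, with `α < 1/2`, has finite
moment of order `-3` away from the origin; this is where `α < 1/2` enters. The proof writes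
`|y|⁻³ = 3 ∫_{|y|}^∞ s⁻⁴ ds` and exchanges the integrals. -/
lemma far_tail {α : ℝ} (hα : α < 1 / 2) {w : E2 → ℝ} (hw : Continuous w) (hw0 : ∀ y, 0 ≤ w y)
    {r M : ℝ} (hr : 0 < r) (hM : ∀ s, r ≤ s → ∫ y in ball 0 s, w y ≤ M ^ 2 * s ^ (2 + 2 * α)) :
    IntegrableOn (fun y => w y * (‖y‖ ^ 3)⁻¹) {y | r ≤ ‖y‖} ∧
    ∫ y in {y | r ≤ ‖y‖}, w y * (‖y‖ ^ 3)⁻¹ ≤ 3 / (1 - 2 * α) * M ^ 2 * r ^ (2 * α - 1) := by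
  have hS : MeasurableSet {y : E2 | r ≤ ‖y‖} := measurableSet_le measurable_const measurable_norm
  have hd : 0 < 1 - 2 * α := by linarith
  have hwm : Measurable w := hw.measurable
  have hwi : ∀ s, IntegrableOn w (ball 0 s) := fun s =>
    (hw.continuousOn.integrableOn_compact (isCompact_closedBall 0 s)).mono_set ball_subset_closedBall
  have key : ∫⁻ y in {y | r ≤ ‖y‖}, ENNReal.ofReal (w y * (‖y‖ ^ 3)⁻¹) ≤
      ENNReal.ofReal (3 / (1 - 2 * α) * M ^ 2 * r ^ (2 * α - 1)) := by
    have e1 : ∀ y ∈ {y : E2 | r ≤ ‖y‖}, ENNReal.ofReal (w y * (‖y‖ ^ 3)⁻¹) =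
        ∫⁻ s in Set.Ioi r, {p : E2 × ℝ | ‖p.1‖ < p.2}.indicator
          (fun p => ENNReal.ofReal (w p.1) * ENNReal.ofReal (3 * p.2 ^ (-4 : ℝ))) (y, s) := by
      intro y hy
      have hy : r ≤ ‖y‖ := hy
      have hy0 : 0 < ‖y‖ := hr.trans_le hy
      have : ∀ s, {p : E2 × ℝ | ‖p.1‖ < p.2}.indicator
          (fun p => ENNReal.ofReal (w p.1) * ENNReal.ofReal (3 * p.2 ^ (-4 : ℝ))) (y, s) =
          (Set.Ioi ‖y‖).indicator (fun s => ENNReal.ofReal (w y) *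
            (ENNReal.ofReal 3 * ENNReal.ofReal (s ^ (-4 : ℝ)))) s := by
        intro s
        by_cases h : ‖y‖ < s
        · rw [Set.indicator_of_mem (by exact h), Set.indicator_of_mem (by exact h),
            ENNReal.ofReal_mul (by norm_num)]
        · rw [Set.indicator_of_notMem (by exact h), Set.indicator_of_notMem (by exact h)]
      simp only [this]
      rw [setLIntegral_indicator measurableSet_Ioi,
        Set.inter_eq_left.2 (Set.Ioi_subset_Ioi hy),
        lintegral_const_mul' _ _ ENNReal.ofReal_ne_top, lintegral_const_mul' _ _ ENNReal.ofReal_ne_top,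
        rpow_tail hy0 (by norm_num), ENNReal.ofReal_mul (hw0 y),
        ← ENNReal.ofReal_mul (p := 3) (by norm_num)]
      congr 2
      have : ((-4 : ℝ) + 1) = -((3 : ℕ) : ℝ) := by norm_num
      rw [this, Real.rpow_neg hy0.le, Real.rpow_natCast]
      push_cast
      ring
    rw [setLIntegral_congr_fun hS e1, lintegral_lintegral_swap]
    · calc _ ≤ ∫⁻ s in Set.Ioi r, ENNReal.ofReal (3 * M ^ 2) *
            ENNReal.ofReal (s ^ (2 * α - 2)) := by
            refine setLIntegral_mono' measurableSet_Ioi fun s hs => ?_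
            have hs : r < s := hs
            have hs0 : 0 < s := hr.trans hs
            calc _ ≤ ∫⁻ y, (ball (0 : E2) s).indicator (fun y => ENNReal.ofReal (w y) *
                    ENNReal.ofReal (3 * s ^ (-4 : ℝ))) y := by
                  refine (setLIntegral_le_lintegral _ _).trans (lintegral_mono fun y => ?_)
                  by_cases h : ‖y‖ < s
                  · rw [Set.indicator_of_mem (by exact h),
                      Set.indicator_of_mem (by simpa using h)]
                  · rw [Set.indicator_of_notMem (by exact h)]
                    exact zero_le
              _ = ENNReal.ofReal (∫ y in ball 0 s, w y) * ENNReal.ofReal (3 * s ^ (-4 : ℝ)) := by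
                  rw [lintegral_indicator measurableSet_ball,
                    lintegral_mul_const' _ _ ENNReal.ofReal_ne_top,
                    ofReal_integral_eq_lintegral_ofReal (hwi s)
                      (Filter.Eventually.of_forall hw0)]
              _ ≤ ENNReal.ofReal (M ^ 2 * s ^ (2 + 2 * α)) * ENNReal.ofReal (3 * s ^ (-4 : ℝ)) := by
                  gcongr
                  exact hM s hs.le
              _ = _ := by
                  rw [← ENNReal.ofReal_mul (by positivity), ← ENNReal.ofReal_mul (by positivity)]
                  congr 1
                  have : s ^ (2 * α - 2) = s ^ (2 + 2 * α) * s ^ (-4 : ℝ) := by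
                    rw [← Real.rpow_add hs0]
                    congr 1
                    ring
                  rw [this]
                  ring
        _ = _ := by
            rw [lintegral_const_mul' _ _ ENNReal.ofReal_ne_top, rpow_tail hr (by linarith),
              ← ENNReal.ofReal_mul (by positivity)]
            congr 1
            have e : 2 * α - 2 + 1 = 2 * α - 1 := by ring
            rw [e]
            have : 2 * α - 1 ≠ 0 := by linarith
            field_simp
            ring_nf
    · refine AEMeasurable.indicator ?_ (measurableSet_lt (measurable_fst.norm) measurable_snd)
      refine Measurable.aemeasurable ?_
      fun_prop
  have hnn : ∀ y : E2, 0 ≤ w y * (‖y‖ ^ 3)⁻¹ := fun y => mul_nonneg (hw0 y) (by positivity)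
  have hm : AEStronglyMeasurable (fun y : E2 => w y * (‖y‖ ^ 3)⁻¹)
      (volume.restrict {y | r ≤ ‖y‖}) := by
    refine Measurable.aestronglyMeasurable ?_
    fun_prop
  refine ⟨⟨hm, ?_⟩, ?_⟩
  · rw [hasFiniteIntegral_iff_ofReal (Filter.Eventually.of_forall hnn)]
    exact key.trans_lt ENNReal.ofReal_lt_top
  · rw [integral_eq_lintegral_of_nonneg_ae (Filter.Eventually.of_forall hnn) hm]
    refine ENNReal.toReal_le_of_le_ofReal ?_ key
    have := Real.rpow_nonneg hr.le (2 * α - 1)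
    positivity

/-! ### The near- and far-field kernels -/

lemma fundE_smAt {z : E2} (hz : z ≠ 0) : ContDiffAt ℝ (⊤ : ℕ∞) fundE z := by
  rw [← Eeps_zero]
  unfold Eeps
  have h : ‖z‖ ^ 2 + (0 : ℝ) ^ 2 ≠ 0 := by
    have : 0 < ‖z‖ := norm_pos_iff.2 hz
    positivity
  exact contDiffAt_const.mul ((sm_normsq 0).contDiffAt.log h)

/-- The far-field kernel is smooth, the singularity of `E` being removed by `1 - θ`. -/
lemma oneThetaE_sm {θ : E2 → ℝ} (hθ : IsCutoff θ) : Sm (oneThetaE θ) := by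
  refine contDiff_iff_contDiffAt.2 fun z => ?_
  by_cases hz : z = 0
  · have : oneThetaE θ =ᶠ[nhds z] fun _ => 0 := by
      filter_upwards [ball_mem_nhds z one_pos] with y hy
      rw [hz, mem_ball_zero_iff] at hy
      simp [oneThetaE, hθ.2.2.1 y hy.le]
    exact contDiffAt_const.congr_of_eventuallyEq this
  · exact (contDiffAt_const.sub hθ.1.contDiffAt).mul (fundE_smAt hz)

lemma oneThetaE_far {θ : E2 → ℝ} (hθ : IsCutoff θ) {z : E2} (hz : 2 < ‖z‖) :
    oneThetaE θ =ᶠ[nhds z] fundE := by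
  filter_upwards [(isOpen_lt continuous_const continuous_norm).mem_nhds hz] with y hy
  simp [oneThetaE, hθ.2.2.2 y (le_of_lt hy)]

lemma pd_thetaE_far {θ : E2 → ℝ} (hθ : IsCutoff θ) {z : E2} (hz : 2 < ‖z‖) (i : Fin 2) :
    pd i (thetaE θ) z = 0 := by
  have : thetaE θ =ᶠ[nhds z] fun _ => 0 := by
    filter_upwards [(isOpen_lt continuous_const continuous_norm).mem_nhds hz] with y hy
    simp [thetaE, hθ.2.2.2 y (le_of_lt hy)]
  rw [(pd_congr this i).eq_of_nhds]
  simp [pd]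

lemma thetaE_meas {θ : E2 → ℝ} (hθ : IsCutoff θ) : Measurable (thetaE θ) := by
  have h1 := hθ.1.continuous.measurable
  have h2 := meas_Eeps 0
  rw [Eeps_zero] at h2
  exact h1.mul h2

lemma fundE_le_Dom {z : E2} (hz : z ≠ 0) : |fundE z| ≤ Dom z := by
  rw [← Eeps_zero]
  exact Eeps_le_Dom le_rfl zero_le_one hz

lemma theta_mul_le {θ : E2 → ℝ} (hθ : IsCutoff θ) {a D : ℝ} (z : E2) (h : |a| ≤ D) :
    |θ z * a| ≤ D := by
  rw [abs_mul, abs_of_nonneg (hθ.2.1 z).1]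
  calc _ ≤ 1 * |a| := by gcongr; exact (hθ.2.1 z).2
    _ ≤ D := by rwa [one_mul]

lemma thetaE_locInt {θ : E2 → ℝ} (hθ : IsCutoff θ) : LocallyIntegrable (thetaE θ) :=
  locInt_of_dom (thetaE_meas hθ) (C := 1) fun z hz => by
    rw [one_mul]
    exact theta_mul_le hθ z (fundE_le_Dom hz)

lemma theta_grad {θ : E2 → ℝ} (hθ : IsCutoff θ) (i : Fin 2) : ∃ c : ℝ, 0 ≤ c ∧ ∀ z, |pd i θ z| ≤ c := by
  have hs : Sm θ := hθ.1
  obtain ⟨c, hc⟩ := (hcs_pd (hcs_of_zero 2 hθ.2.2.2) i).exists_bound_of_continuous (hs.pd i).continuous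
  exact ⟨|c|, abs_nonneg _, fun z => (hc z).trans (le_abs_self c)⟩

lemma pd_thetaEeps {θ : E2 → ℝ} (hθ : IsCutoff θ) {ε : ℝ} {z : E2} (h : ‖z‖ ^ 2 + ε ^ 2 ≠ 0)
    (i : Fin 2) : pd i (fun z => θ z * Eeps ε z) z = θ z * G1 ε i z + pd i θ z * Eeps ε z := by
  have hE : DifferentiableAt ℝ (Eeps ε) z := by
    unfold Eeps
    exact (((sm_normsq ε).diff z).log h).const_mul _
  have hs : Sm θ := hθ.1
  rw [pd_mul (hs.diff z) hE, pd_Eeps h]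

lemma pd_theta_bound {θ : E2 → ℝ} (hθ : IsCutoff θ) {i : Fin 2} {c : ℝ} (hc0 : 0 ≤ c)
    (hc : ∀ z, |pd i θ z| ≤ c) {ε : ℝ} (h0 : 0 ≤ ε) (h1 : ε ≤ 1) {z : E2} (hz : z ≠ 0) :
    |θ z * G1 ε i z + pd i θ z * Eeps ε z| ≤ (1 + c) * Dom z := by
  have hG : |G1 ε i z| ≤ Dom z := by
    refine (G1_le ε z i).trans ?_
    unfold Dom
    have : 0 ≤ ‖z‖⁻¹ := by positivity
    nlinarith [sq_nonneg ‖z‖]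
  refine (abs_add_le _ _).trans ?_
  have h2 : |pd i θ z * Eeps ε z| ≤ c * Dom z := by
    rw [abs_mul]
    exact mul_le_mul (hc z) (Eeps_le_Dom h0 h1 hz) (abs_nonneg _) hc0
  linarith [theta_mul_le hθ z hG]

lemma pd_thetaE_eq {θ : E2 → ℝ} (hθ : IsCutoff θ) {z : E2} (hz : z ≠ 0) (i : Fin 2) :
    pd i (thetaE θ) z = θ z * G1 0 i z + pd i θ z * fundE z := by
  have h : ‖z‖ ^ 2 + (0 : ℝ) ^ 2 ≠ 0 := by
    have : 0 < ‖z‖ := norm_pos_iff.2 hz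
    positivity
  have := pd_thetaEeps hθ h i
  rwa [Eeps_zero] at this

lemma pd_thetaE_locInt {θ : E2 → ℝ} (hθ : IsCutoff θ) (i : Fin 2) :
    LocallyIntegrable (pd i (thetaE θ)) := by
  obtain ⟨c, hc0, hc⟩ := theta_grad hθ i
  refine locInt_of_dom (measurable_fderiv_apply_const ℝ (thetaE θ) (e2 i)) (C := 1 + c)
    fun z hz => ?_
  rw [pd_thetaE_eq hθ hz, ← Eeps_zero]
  exact pd_theta_bound hθ hc0 hc le_rfl zero_le_one hz

/-- Integration by parts against the singular kernel `θE`, by regularisation. -/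
lemma Cv_ibp_theta {θ : E2 → ℝ} (hθ : IsCutoff θ) {v : E2 → ℝ} (hv : Sm v)
    (hc : HasCompactSupport v) (i : Fin 2) (y : E2) :
    Cv (pd i (thetaE θ)) v y = - Cv (thetaE θ) (pd i v) y := by
  obtain ⟨c, hc0, hcb⟩ := theta_grad hθ i
  have hs : Sm θ := hθ.1
  have t1 : Filter.Tendsto (fun ε => Cv (fun z => θ z * Eeps ε z) (pd i v) y)
      (nhdsWithin 0 (Set.Ioi 0)) (nhds (Cv (thetaE θ) (pd i v) y)) := by
    refine Cv_tendsto (C := 1) (fun ε _ => hs.continuous.measurable.mul (meas_Eeps ε)) ?_ ?_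
      (hv.pd i).continuous (hcs_pd hc i) y
    · intro ε h0 h1 z hz
      rw [one_mul]
      exact theta_mul_le hθ z (Eeps_le_Dom h0.le h1 hz)
    · intro z hz
      exact (Eeps_tendsto hz).const_mul _
  have hcm := (hs.pd i).continuous.measurable
  have hG1 : ∀ ε, Measurable (G1 ε i) := fun ε => by
    unfold G1
    have := (sm_coord i).continuous.measurable
    fun_prop
  have t2 : Filter.Tendsto (fun ε => Cv (fun z => θ z * G1 ε i z + pd i θ z * Eeps ε z) v y)
      (nhdsWithin 0 (Set.Ioi 0)) (nhds (Cv (pd i (thetaE θ)) v y)) := by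
    refine Cv_tendsto (C := 1 + c) (fun ε _ => (hs.continuous.measurable.mul (hG1 ε)).add
      (hcm.mul (meas_Eeps ε))) ?_ ?_ hv.continuous hc y
    · intro ε h0 h1 z hz
      exact pd_theta_bound hθ hc0 hcb h0.le h1 hz
    · intro z hz
      rw [pd_thetaE_eq hθ hz]
      exact ((G1_tendsto hz i).const_mul _).add ((Eeps_tendsto hz).const_mul _)
  refine tendsto_nhds_unique t2 (t1.neg.congr' ?_)
  filter_upwards [self_mem_nhdsWithin] with ε hε
  have hε : 0 < ε := hε
  have hk : Sm fun z => θ z * Eeps ε z := hs.mul (Eeps_sm hε)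
  rw [← Cv_ibp hk hv hc]
  congr 1
  ext z
  exact pd_thetaEeps hθ (by positivity) i

/-- The kernels `θE` and `(1 - θ)E` recombine into `E`. -/
lemma Cv_split {θ : E2 → ℝ} (hθ : IsCutoff θ) {g : E2 → ℝ} (hg : Continuous g)
    (hc : HasCompactSupport g) (y : E2) :
    Cv (thetaE θ) g y + Cv (oneThetaE θ) g y = Cv fundE g y := by
  unfold Cv
  rw [← integral_add (Cv_integrable (thetaE_locInt hθ) hg hc y)
    (Cv_integrable (oneThetaE_sm hθ).locInt hg hc y)]
  congr 1
  ext z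
  simp only [thetaE, oneThetaE]
  ring

/-! ### Fubini and the transfer of derivatives -/

/-- Pairing `v` with the integral operator of kernel `k` over `B(0, 4r)` is the same as integrating the
correlation of `k` and `v` over that ball. Only the values of `k` in `B(0, 6r)` matter, so local
integrability of `k` suffices for Fubini. -/
lemma fub {r : ℝ} {k v q : E2 → ℝ} (hk : LocallyIntegrable k) (hv : Continuous v)
    (hv0 : ∀ x, 5 / 4 * r ≤ ‖x‖ → v x = 0) (hq : Continuous q) :
    Integrable (fun x => v x * ∫ y in ball 0 (4 * r), k (x - y) * q y) ∧
    ∫ x, v x * ∫ y in ball 0 (4 * r), k (x - y) * q y =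
      ∫ y in ball 0 (4 * r), Cv k v y * q y := by
  have hc : HasCompactSupport v := hcs_of_zero _ hv0
  set B := ball (0 : E2) (4 * r) with hB
  set k' := (ball (0 : E2) (6 * r)).indicator k with hk'
  set f := B.indicator q with hf
  have hfi : Integrable f := by
    rw [hf, integrable_indicator_iff measurableSet_ball]
    exact (hq.continuousOn.integrableOn_compact (isCompact_closedBall 0 (4 * r))).mono_set
      ball_subset_closedBall
  have hki : Integrable k' := by
    rw [hk', integrable_indicator_iff measurableSet_ball]
    exact (hk.integrableOn_isCompact (isCompact_closedBall 0 (6 * r))).mono_set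
      ball_subset_closedBall
  have hprod := hfi.convolution_integrand (ContinuousLinearMap.mul ℝ ℝ) hki
  obtain ⟨M, hM⟩ := hc.exists_bound_of_continuous hv
  have hI : Integrable (fun p : E2 × E2 => v p.1 * (f p.2 * k' (p.1 - p.2)))
      (volume.prod volume) :=
    hprod.bdd_mul (hv.comp continuous_fst).aestronglyMeasurable
      (Filter.Eventually.of_forall fun p => hM p.1)
  have hpt : ∀ x y, v x * (f y * k' (x - y)) = B.indicator (fun y => v x * (k (x - y) * q y)) y := by
    intro x y
    by_cases hy : y ∈ B
    · rw [Set.indicator_of_mem hy, hf, Set.indicator_of_mem hy]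
      by_cases hx : 5 / 4 * r ≤ ‖x‖
      · simp [hv0 x hx]
      · have : x - y ∈ ball (0 : E2) (6 * r) := by
          rw [hB, mem_ball_zero_iff] at hy
          rw [mem_ball_zero_iff]
          have := norm_sub_le x y
          have := norm_nonneg x
          linarith [not_le.1 hx]
        rw [hk', Set.indicator_of_mem this]
        ring
    · rw [Set.indicator_of_notMem hy, hf, Set.indicator_of_notMem hy]
      ring
  have e1 : ∀ x, ∫ y, v x * (f y * k' (x - y)) = v x * ∫ y in B, k (x - y) * q y := by
    intro x
    simp only [hpt]
    rw [integral_indicator measurableSet_ball, integral_const_mul]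
  have e2 : ∀ y, ∫ x, v x * (f y * k' (x - y)) = B.indicator (fun y => Cv k v y * q y) y := by
    intro y
    simp only [hpt]
    by_cases hy : y ∈ B
    · simp only [Set.indicator_of_mem hy]
      rw [← Cv_eq, ← integral_mul_const]
      simp only [mul_assoc]
    · simp only [Set.indicator_of_notMem hy, integral_zero]
  refine ⟨?_, ?_⟩
  · have := hI.integral_prod_left
    simpa only [e1] using this
  · have := integral_integral_swap (f := fun x y => v x * (f y * k' (x - y))) hI
    simp only [e1, e2] at this
    rw [this, integral_indicator measurableSet_ball]

/-- For divergence-free `U`, `Σ ∂ⱼUₖ∂ₖUⱼ = Σ ∂ⱼ∂ₖ(UⱼUₖ)` in the weak sense. -/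
lemma quad_ibp {h : E2 → ℝ} (hh : Sm h) (hc : HasCompactSupport h) {U : Fin 2 → E2 → ℝ}
    (hU : ∀ i, Sm (U i)) (hdiv : ∀ x, pd 0 (U 0) x + pd 1 (U 1) x = 0) :
    ∫ x, h x * ∑ j, ∑ k, pd j (U k) x * pd k (U j) x =
      ∫ x, ∑ j, ∑ k, pd j (pd k h) x * (U j x * U k x) := by
  have h1 : ∀ j k, Sm fun x => h x * (U j x * pd j (U k) x) :=
    fun j k => hh.mul ((hU j).mul ((hU k).pd j))
  have h2 : ∀ j k, Sm fun x => pd k h x * (U j x * U k x) :=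
    fun j k => (hh.pd k).mul ((hU j).mul (hU k))
  have c1 : ∀ j k, HasCompactSupport fun x => h x * (U j x * pd j (U k) x) :=
    fun j k => hc.mul_right
  have c2 : ∀ j k, HasCompactSupport fun x => pd k h x * (U j x * U k x) :=
    fun j k => (hcs_pd hc k).mul_right
  have z1 := fun j k => int_pd (h1 j k) (c1 j k) k
  have z2 := fun j k => int_pd (h2 j k) (c2 j k) j
  have i1 := fun j k => intg ((h1 j k).pd k).continuous (hcs_pd (c1 j k) k)
  have i2 := fun j k => intg ((h2 j k).pd j).continuous (hcs_pd (c2 j k) j)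
  have hdd : ∀ j x, pd 0 (pd j (U 0)) x + pd 1 (pd j (U 1)) x = 0 := by
    intro j x
    rw [pd_comm (hU 0) 0 j, pd_comm (hU 1) 1 j, ← pd_add (((hU 0).pd 0).diff x) (((hU 1).pd 1).diff x)]
    have : (fun x => pd 0 (U 0) x + pd 1 (U 1) x) = fun _ => 0 := funext hdiv
    rw [this]
    simp [pd]
  have i3 : Integrable fun x => ∑ j, ∑ k, pd j (pd k h) x * (U j x * U k x) := by
    refine integrable_finsetSum _ fun j _ => integrable_finsetSum _ fun k _ => ?_
    exact intg (((hh.pd k).pd j).continuous.mul ((hU j).continuous.mul (hU k).continuous))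
      (hcs_pd (hcs_pd hc k) j).mul_right
  have key : ∀ x, h x * ∑ j, ∑ k, pd j (U k) x * pd k (U j) x =
      (∑ j, ∑ k, pd j (pd k h) x * (U j x * U k x)) +
      ((∑ j, ∑ k, pd k (fun x => h x * (U j x * pd j (U k) x)) x) -
       ∑ j, ∑ k, pd j (fun x => pd k h x * (U j x * U k x)) x) := by
    intro x
    have a1 : ∀ j k, pd k (fun x => h x * (U j x * pd j (U k) x)) x =
        h x * (U j x * pd k (pd j (U k)) x + pd k (U j) x * pd j (U k) x) +
          pd k h x * (U j x * pd j (U k) x) := by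
      intro j k
      have : Sm fun x => U j x * pd j (U k) x := (hU j).mul ((hU k).pd j)
      rw [pd_mul (hh.diff x) (this.diff x), pd_mul ((hU j).diff x) (((hU k).pd j).diff x)]
    have a2 : ∀ j k, pd j (fun x => pd k h x * (U j x * U k x)) x =
        pd k h x * (U j x * pd j (U k) x + pd j (U j) x * U k x) +
          pd j (pd k h) x * (U j x * U k x) := by
      intro j k
      have : Sm fun x => U j x * U k x := (hU j).mul (hU k)
      rw [pd_mul ((hh.pd k).diff x) (this.diff x), pd_mul ((hU j).diff x) ((hU k).diff x)]
    simp only [a1, a2, Fin.sum_univ_two]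
    linear_combination -(h x * U 0 x) * hdd 0 x - (h x * U 1 x) * hdd 1 x +
      (pd 0 h x * U 0 x + pd 1 h x * U 1 x) * hdiv x
  simp only [key]
  have i4 : Integrable fun x => (∑ j, ∑ k, pd k (fun x => h x * (U j x * pd j (U k) x)) x) :=
    integrable_finsetSum _ fun j _ => integrable_finsetSum _ fun k _ => i1 j k
  have i5 : Integrable fun x => ∑ j, ∑ k, pd j (fun x => pd k h x * (U j x * U k x)) x :=
    integrable_finsetSum _ fun j _ => integrable_finsetSum _ fun k _ => i2 j k
  have i6 : Integrable fun x => (∑ j, ∑ k, pd k (fun x => h x * (U j x * pd j (U k) x)) x) -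
      ∑ j, ∑ k, pd j (fun x => pd k h x * (U j x * U k x)) x := i4.sub i5
  rw [integral_add i3 i6, integral_sub i4 i5]
  have z4 : ∫ x, (∑ j, ∑ k, pd k (fun x => h x * (U j x * pd j (U k) x)) x) = 0 := by
    rw [integral_finsetSum _ fun j _ => integrable_finsetSum _ fun k _ => i1 j k]
    refine Finset.sum_eq_zero fun j _ => ?_
    rw [integral_finsetSum _ fun k _ => i1 j k]
    exact Finset.sum_eq_zero fun k _ => z1 j k
  have z5 : ∫ x, (∑ j, ∑ k, pd j (fun x => pd k h x * (U j x * U k x)) x) = 0 := by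
    rw [integral_finsetSum _ fun j _ => integrable_finsetSum _ fun k _ => i2 j k]
    refine Finset.sum_eq_zero fun j _ => ?_
    rw [integral_finsetSum _ fun k _ => i2 j k]
    exact Finset.sum_eq_zero fun k _ => z2 j k
  rw [z4, z5]
  ring

/-! ### The pressure work on a ball -/

lemma contB {f : E2 → ℝ} (hf : Continuous f) (s : ℝ) : IntegrableOn f (ball 0 s) :=
  (hf.continuousOn.integrableOn_compact (isCompact_closedBall 0 s)).mono_set ball_subset_closedBall

lemma pd_zero_out {f : E2 → ℝ} {R : ℝ} (h : ∀ x, R < ‖x‖ → f x = 0) (i : Fin 2) (x : E2)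
    (hx : R < ‖x‖) : pd i f x = 0 := by
  have : f =ᶠ[nhds x] fun _ => 0 := by
    filter_upwards [(isOpen_lt continuous_const continuous_norm).mem_nhds hx] with y hy using h y hy
  rw [(pd_congr this i).eq_of_nhds]
  simp [pd]

/-- The kernel `θE` has range `2`, so its correlation with a function supported in the ball of radius
`5r/4` vanishes outside `B(0, 4r)`. -/
lemma Cv_theta_zero {θ : E2 → ℝ} (hθ : IsCutoff θ) {w : E2 → ℝ} {r : ℝ} (hr : 1 ≤ r)
    (hw : ∀ x, 5 / 4 * r < ‖x‖ → w x = 0) {y : E2} (hy : y ∉ ball (0 : E2) (4 * r)) :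
    Cv (thetaE θ) w y = 0 := by
  unfold Cv
  rw [mem_ball_zero_iff, not_lt] at hy
  rw [← integral_zero E2 ℝ (μ := volume)]
  congr 1
  ext z
  by_cases hz : 2 ≤ ‖z‖
  · simp [thetaE, hθ.2.2.2 z hz]
  · rw [hw, mul_zero]
    have : ‖y‖ ≤ ‖y + z‖ + ‖z‖ := by
      calc ‖y‖ = ‖(y + z) - z‖ := by simp
        _ ≤ _ := norm_sub_le _ _
    linarith [not_le.1 hz]

lemma sm_comp {u : E2 → E2} (hu : ContDiff ℝ (⊤ : ℕ∞) u) (i : Fin 2) : Sm (fun x => u x i) :=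
  (EuclideanSpace.proj i : E2 →L[ℝ] ℝ).contDiff.comp hu

lemma pdv_eq {u : E2 → E2} (hu : ContDiff ℝ (⊤ : ℕ∞) u) (j i : Fin 2) (x : E2) :
    pdv j i u x = pd j (fun x => u x i) x := by
  have h := (EuclideanSpace.proj i : E2 →L[ℝ] ℝ).hasFDerivAt.comp x
    (hu.differentiable (by simp) x).hasFDerivAt
  have e : fderiv ℝ (fun x => u x i) x = _ := h.fderiv
  simp only [pd, pdv]
  rw [e]
  simp

lemma abs_mul_le_normsq (z : E2) (j k : Fin 2) : |z j * z k| ≤ ‖z‖ ^ 2 := by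
  rw [abs_mul, sq]
  exact mul_le_mul (coord_le z j) (coord_le z k) (abs_nonneg _) (norm_nonneg _)

/-- The near-field part of the pressure work: the two kernels recombine into the logarithmic
potential of `g = div v`. -/
lemma near_identity {θ : E2 → ℝ} (hθ : IsCutoff θ) {r : ℝ} (hr : 1 ≤ r) {U v : Fin 2 → E2 → ℝ}
    (hU : ∀ i, Sm (U i)) (hdiv : ∀ x, pd 0 (U 0) x + pd 1 (U 1) x = 0) (hv : ∀ i, Sm (v i))
    (hv0 : ∀ i x, 5 / 4 * r ≤ ‖x‖ → v i x = 0) :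
    (∑ i, ∫ y in ball 0 (4 * r), Cv (pd i (thetaE θ)) (v i) y *
        ∑ j, ∑ k, pd j (U k) y * pd k (U j) y) +
      ∑ i, ∑ j, ∑ k, ∫ y in ball 0 (4 * r), Cv (pd i (pd j (pd k (oneThetaE θ)))) (v i) y *
        (U j y * U k y) =
    -∑ j, ∑ k, ∫ y in ball 0 (4 * r),
      pd j (pd k (Cv fundE fun x => pd 0 (v 0) x + pd 1 (v 1) x)) y * (U j y * U k y) := by
  set B := ball (0 : E2) (4 * r) with hB
  set g : E2 → ℝ := fun x => pd 0 (v 0) x + pd 1 (v 1) x with hg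
  set F := oneThetaE θ with hF
  have hFs : Sm F := oneThetaE_sm hθ
  have hc : ∀ i, HasCompactSupport (v i) := fun i => hcs_of_zero _ (hv0 i)
  have hgs : Sm g := ((hv 0).pd 0).add ((hv 1).pd 1)
  have hg0 : ∀ x, 5 / 4 * r < ‖x‖ → g x = 0 := by
    intro x hx
    have := fun i => pd_zero_out (fun x hx => hv0 i x hx.le) i x hx
    simp [hg, this]
  have hgc : HasCompactSupport g := ((hcs_pd (hc 0) 0).add (hcs_pd (hc 1) 1))
  set h := Cv (thetaE θ) g with hh
  have hlt := thetaE_locInt hθ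
  have hhs : Sm h := Cv_sm hlt hgs hgc
  have hhz : ∀ y ∉ B, h y = 0 := fun y hy => Cv_theta_zero hθ hr hg0 hy
  have hhc : HasCompactSupport h := by
    refine hcs_of_zero (4 * r) fun x hx => hhz x ?_
    rw [hB, mem_ball_zero_iff, not_lt]
    exact hx
  set q : E2 → ℝ := fun y => ∑ j, ∑ k, pd j (U k) y * pd k (U j) y with hq
  have hqc : Continuous q := by
    refine continuous_finsetSum _ fun j _ => continuous_finsetSum _ fun k _ => ?_
    exact ((hU k).pd j).continuous.mul ((hU j).pd k).continuous
  have hUc : ∀ j k, Continuous fun y => U j y * U k y :=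
    fun j k => (hU j).continuous.mul (hU k).continuous
  have hCc : ∀ {k : E2 → ℝ} (_ : LocallyIntegrable k) (i), Continuous (Cv k (v i)) :=
    fun hk i => (Cv_sm hk (hv i) (hc i)).continuous
  have n1 : ∑ i, ∫ y in B, Cv (pd i (thetaE θ)) (v i) y * q y =
      -∑ j, ∑ k, ∫ y in B, Cv (thetaE θ) (pd j (pd k g)) y * (U j y * U k y) := by
    have : ∀ y, Cv (pd 0 (thetaE θ)) (v 0) y * q y + Cv (pd 1 (thetaE θ)) (v 1) y * q y =
        -(h y * q y) := by
      intro y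
      rw [Cv_ibp_theta hθ (hv 0) (hc 0), Cv_ibp_theta hθ (hv 1) (hc 1), hh, hg,
        Cv_add (Cv_integrable hlt ((hv 0).pd 0).continuous (hcs_pd (hc 0) 0) y)
          (Cv_integrable hlt ((hv 1).pd 1).continuous (hcs_pd (hc 1) 1) y)]
      ring
    have ia : ∀ i, IntegrableOn (fun y => Cv (pd i (thetaE θ)) (v i) y * q y) B :=
      fun i => contB ((hCc (pd_thetaE_locInt hθ i) i).mul hqc) _
    rw [Fin.sum_univ_two, ← integral_add (ia 0) (ia 1)]
    simp only [this]
    rw [integral_neg, setIntegral_eq_integral_of_forall_compl_eq_zero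
      (fun y hy => by rw [hhz y hy, zero_mul]), quad_ibp hhs hhc hU hdiv]
    congr 1
    have hz : ∀ y ∉ B, ∑ j, ∑ k, pd j (pd k h) y * (U j y * U k y) = 0 := by
      intro y hy
      refine Finset.sum_eq_zero fun j _ => Finset.sum_eq_zero fun k _ => ?_
      rw [hh, pd2_Cv hlt hgs hgc, Cv_theta_zero hθ hr (pd_zero_out (pd_zero_out hg0 k) j) hy,
        zero_mul]
    have hci : ∀ j k, IntegrableOn (fun y => pd j (pd k h) y * (U j y * U k y)) B :=
      fun j k => contB (((hhs.pd k).pd j).continuous.mul (hUc j k)) _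
    rw [← setIntegral_eq_integral_of_forall_compl_eq_zero hz,
      integral_finsetSum _ fun j _ => integrable_finsetSum _ fun k _ => hci j k]
    refine Finset.sum_congr rfl fun j _ => ?_
    rw [integral_finsetSum _ fun k _ => hci j k]
    refine Finset.sum_congr rfl fun k _ => ?_
    rw [hh, pd2_Cv hlt hgs hgc]
  have n2 : ∑ i, ∑ j, ∑ k, ∫ y in B, Cv (pd i (pd j (pd k F))) (v i) y * (U j y * U k y) =
      -∑ j, ∑ k, ∫ y in B, Cv F (pd j (pd k g)) y * (U j y * U k y) := by
    rw [Finset.sum_comm, ← Finset.sum_neg_distrib]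
    refine Finset.sum_congr rfl fun j _ => ?_
    rw [Finset.sum_comm, ← Finset.sum_neg_distrib]
    refine Finset.sum_congr rfl fun k _ => ?_
    have hL : Sm (pd j (pd k F)) := (hFs.pd k).pd j
    have ia : ∀ i, IntegrableOn
        (fun y => Cv (pd i (pd j (pd k F))) (v i) y * (U j y * U k y)) B :=
      fun i => contB ((hCc (hL.pd i).locInt i).mul (hUc j k)) _
    rw [Fin.sum_univ_two, ← integral_add (ia 0) (ia 1), ← integral_neg]
    congr 1
    ext y
    rw [Cv_ibp hL (hv 0) (hc 0), Cv_ibp hL (hv 1) (hc 1), Cv_ibp2 hFs hgs hgc, hg,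
        Cv_add (Cv_integrable hL.locInt ((hv 0).pd 0).continuous (hcs_pd (hc 0) 0) y)
          (Cv_integrable hL.locInt ((hv 1).pd 1).continuous (hcs_pd (hc 1) 1) y)]
    ring
  rw [n1, n2, ← neg_add, ← Finset.sum_add_distrib]
  congr 1
  refine Finset.sum_congr rfl fun j _ => ?_
  rw [← Finset.sum_add_distrib]
  refine Finset.sum_congr rfl fun k _ => ?_
  have hs2 : Sm (pd j (pd k g)) := (hgs.pd k).pd j
  have hc2 : HasCompactSupport (pd j (pd k g)) := hcs_pd (hcs_pd hgc k) j
  have ia : ∀ {f : E2 → ℝ} (_ : LocallyIntegrable f), IntegrableOn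
      (fun y => Cv f (pd j (pd k g)) y * (U j y * U k y)) B :=
    fun hf => contB ((Cv_sm hf hs2 hc2).continuous.mul (hUc j k)) _
  rw [← integral_add (ia hlt) (ia hFs.locInt), pd2_Cv fundE_locInt hgs hgc]
  congr 1
  ext y
  rw [← Cv_split hθ hs2.continuous hc2]
  ring

/-- The far-field kernel decays like `|y|⁻³`, uniformly for `x` in the ball of radius `5r/4`, once
`‖y‖ ≥ 4r`: there `‖x - y‖ ≥ 11‖y‖/16 > 2`, where the kernel coincides with `E`. -/
lemma far_kernel {θ : E2 → ℝ} (hθ : IsCutoff θ) {r : ℝ} (hr : 1 ≤ r) {x y : E2}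
    (hx : ‖x‖ ≤ 5 / 4 * r) (hy : 4 * r ≤ ‖y‖) (i j k : Fin 2) :
    |pd i (pd j (pd k (oneThetaE θ))) (x - y)| ≤ 10 * (‖y‖ ^ 3)⁻¹ := by
  have h1 : 11 / 16 * ‖y‖ ≤ ‖x - y‖ := by
    have : ‖y‖ - ‖x‖ ≤ ‖x - y‖ := by
      rw [norm_sub_rev]
      exact norm_sub_norm_le _ _
    linarith
  have h2 : 2 < ‖x - y‖ := by linarith
  have h0 : 0 < ‖y‖ := by linarith
  refine (third_bound (norm_pos_iff.1 (by linarith)) (oneThetaE_far hθ h2) i j k).trans ?_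
  calc 3 / ‖x - y‖ ^ 3 ≤ 3 / (11 / 16 * ‖y‖) ^ 3 := by gcongr
    _ = (3 * (16 / 11) ^ 3) * (‖y‖ ^ 3)⁻¹ := by field_simp
    _ ≤ 10 * (‖y‖ ^ 3)⁻¹ := by gcongr; norm_num

/-- The work of the pressure force against `v`, supported in the ball of radius `5r/4`: a near part in
terms of the Hessian of the logarithmic potential of `div v`, and a far part in terms of the tail of
`|u|²`. -/
lemma press_bound {θ : E2 → ℝ} (hθ : IsCutoff θ) {u : E2 → E2} (hu : ContDiff ℝ (⊤ : ℕ∞) u)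
    (hdiv : ∀ x, div2 u x = 0) (hPI : ∀ x, PressureIntegrable θ u x)
    (hPc : ∀ i, Continuous (pressureForce θ u i)) {r : ℝ} (hr : 1 ≤ r) {v : Fin 2 → E2 → ℝ}
    (hv : ∀ i, Sm (v i)) (hv0 : ∀ i x, 5 / 4 * r ≤ ‖x‖ → v i x = 0)
    (hT : IntegrableOn (fun y => ‖u y‖ ^ 2 * (‖y‖ ^ 3)⁻¹) {y | 4 * r ≤ ‖y‖}) :
    |∑ i, ∫ x, v i x * pressureForce θ u i x| ≤
      (∑ j, ∑ k, |∫ y in ball 0 (4 * r),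
        pd j (pd k (Cv fundE fun x => pd 0 (v 0) x + pd 1 (v 1) x)) y * (u y j * u y k)|) +
      40 * (∫ y in {y | 4 * r ≤ ‖y‖}, ‖u y‖ ^ 2 * (‖y‖ ^ 3)⁻¹) * ∑ i, ∫ x, |v i x| := by
  set B := ball (0 : E2) (4 * r) with hB
  set τ := ∫ y in {y | 4 * r ≤ ‖y‖}, ‖u y‖ ^ 2 * (‖y‖ ^ 3)⁻¹ with hτ
  have hBc : Bᶜ = {y : E2 | 4 * r ≤ ‖y‖} := by
    ext y
    simp [hB]
  set U : Fin 2 → E2 → ℝ := fun i x => u x i with hUd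
  have hU : ∀ i, Sm (U i) := sm_comp hu
  have hdiv' : ∀ x, pd 0 (U 0) x + pd 1 (U 1) x = 0 := by
    intro x
    have := hdiv x
    simp only [div2, Fin.sum_univ_two, pdv_eq hu] at this
    exact this
  have hc : ∀ i, HasCompactSupport (v i) := fun i => hcs_of_zero _ (hv0 i)
  set F := oneThetaE θ with hF
  have hFs : Sm F := oneThetaE_sm hθ
  set q : E2 → ℝ := fun y => ∑ j, ∑ k, pd j (U k) y * pd k (U j) y with hq
  have hqc : Continuous q := by
    refine continuous_finsetSum _ fun j _ => continuous_finsetSum _ fun k _ => ?_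
    exact ((hU k).pd j).continuous.mul ((hU j).pd k).continuous
  have hUc : ∀ j k, Continuous fun y => U j y * U k y :=
    fun j k => (hU j).continuous.mul (hU k).continuous
  have f1 := fun i => fub (pd_thetaE_locInt hθ i) (hv i).continuous (hv0 i) hqc
  have f2 := fun i j k => fub (((hFs.pd k).pd j).pd i).locInt (hv i).continuous (hv0 i) (hUc j k)
  have hP : ∀ i, |(∫ x, v i x * pressureForce θ u i x) -
      ((∫ y in B, Cv (pd i (thetaE θ)) (v i) y * q y) +
      ∑ j, ∑ k, ∫ y in B, Cv (pd i (pd j (pd k F))) (v i) y * (U j y * U k y))| ≤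
      40 * τ * ∫ x, |v i x| := by
    intro i
    have i0 : Integrable fun x => v i x * pressureForce θ u i x :=
      intg ((hv i).continuous.mul (hPc i)) (hc i).mul_right
    have i3 : Integrable fun x => ∑ j, ∑ k, v i x * ∫ y in B, pd i (pd j (pd k F)) (x - y) *
        (U j y * U k y) :=
      integrable_finsetSum _ fun j _ => integrable_finsetSum _ fun k _ => (f2 i j k).1
    have i4 : Integrable fun x => (v i x * ∫ y in B, pd i (thetaE θ) (x - y) * q y) +
        ∑ j, ∑ k, v i x * ∫ y in B, pd i (pd j (pd k F)) (x - y) * (U j y * U k y) :=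
      (f1 i).1.add i3
    have e3 : ∑ j, ∑ k, ∫ y in B, Cv (pd i (pd j (pd k F))) (v i) y * (U j y * U k y) =
        ∫ x, ∑ j, ∑ k, v i x * ∫ y in B, pd i (pd j (pd k F)) (x - y) * (U j y * U k y) := by
      rw [integral_finsetSum _ fun j _ => integrable_finsetSum _ fun k _ => (f2 i j k).1]
      refine Finset.sum_congr rfl fun j _ => ?_
      rw [integral_finsetSum _ fun k _ => (f2 i j k).1]
      exact Finset.sum_congr rfl fun k _ => (f2 i j k).2.symm
    rw [e3, ← (f1 i).2, ← integral_add (f1 i).1 i3, ← integral_sub i0 i4, ← integral_const_mul]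
    refine abs_integral_le_integral_abs.trans (integral_mono_of_nonneg
      (Filter.Eventually.of_forall fun x => abs_nonneg _)
      ((intg (hv i).continuous.abs ((hc i).comp_left (g := fun y : ℝ => |y|) abs_zero)).const_mul _)
      (Filter.Eventually.of_forall fun x => ?_))
    simp only
    by_cases hx : 5 / 4 * r ≤ ‖x‖
    · simp [hv0 i x hx]
    have hx : ‖x‖ ≤ 5 / 4 * r := (not_le.1 hx).le
    have p1 : (∫ y, pd i (thetaE θ) (x - y) * ∑ j, ∑ k, pdv j k u y * pdv k j u y) =
        ∫ y in B, pd i (thetaE θ) (x - y) * q y := by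
      simp only [pdv_eq hu]
      refine (setIntegral_eq_integral_of_forall_compl_eq_zero fun y hy => ?_).symm
      rw [pd_thetaE_far hθ, zero_mul]
      rw [hB, mem_ball_zero_iff, not_lt] at hy
      have : ‖y‖ - ‖x‖ ≤ ‖x - y‖ := by
        rw [norm_sub_rev]
        exact norm_sub_norm_le _ _
      linarith
    have p2 : ∀ j k, ∫ y, pd i (pd j (pd k F)) (x - y) * (u y j * u y k) =
        (∫ y in B, pd i (pd j (pd k F)) (x - y) * (U j y * U k y)) +
        ∫ y in Bᶜ, pd i (pd j (pd k F)) (x - y) * (U j y * U k y) := fun j k =>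
      (integral_add_compl measurableSet_ball ((hPI x).2 i j k)).symm
    have p3 : ∀ j k, |∫ y in Bᶜ, pd i (pd j (pd k F)) (x - y) * (U j y * U k y)| ≤ 10 * τ := by
      intro j k
      rw [hBc, hτ, ← integral_const_mul]
      refine abs_integral_le_integral_abs.trans (integral_mono_of_nonneg
        (Filter.Eventually.of_forall fun x => abs_nonneg _) (hT.const_mul _) ?_)
      filter_upwards [self_mem_ae_restrict
        (measurableSet_le measurable_const measurable_norm : MeasurableSet {y : E2 | 4 * r ≤ ‖y‖})]
        with y hy
      have hy : 4 * r ≤ ‖y‖ := hy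
      rw [abs_mul]
      calc _ ≤ 10 * (‖y‖ ^ 3)⁻¹ * ‖u y‖ ^ 2 :=
            mul_le_mul (far_kernel hθ hr hx hy i j k) (abs_mul_le_normsq (u y) j k)
              (abs_nonneg _) (by positivity)
        _ = _ := by ring
    have p4 : v i x * pressureForce θ u i x - ((v i x * ∫ y in B, pd i (thetaE θ) (x - y) * q y) +
        ∑ j, ∑ k, v i x * ∫ y in B, pd i (pd j (pd k F)) (x - y) * (U j y * U k y)) =
        v i x * ∑ j, ∑ k, ∫ y in Bᶜ, pd i (pd j (pd k F)) (x - y) * (U j y * U k y) := by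
      unfold pressureForce
      rw [p1]
      simp only [← hF, p2, Fin.sum_univ_two]
      ring
    rw [p4, abs_mul, mul_comm]
    gcongr
    simp only [Fin.sum_univ_two]
    have := abs_le.1 (p3 0 0)
    have := abs_le.1 (p3 0 1)
    have := abs_le.1 (p3 1 0)
    have := abs_le.1 (p3 1 1)
    rw [abs_le]
    constructor <;> linarith
  have hn := near_identity hθ hr hU hdiv' hv hv0
  rw [← Finset.sum_add_distrib] at hn
  have hn' : |∑ i, ((∫ y in B, Cv (pd i (thetaE θ)) (v i) y * q y) +
      ∑ j, ∑ k, ∫ y in B, Cv (pd i (pd j (pd k F))) (v i) y * (U j y * U k y))| ≤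
      ∑ j, ∑ k, |∫ y in B, pd j (pd k (Cv fundE fun x => pd 0 (v 0) x + pd 1 (v 1) x)) y *
        (u y j * u y k)| := by
    rw [hn, abs_neg]
    exact (Finset.abs_sum_le_sum_abs _ _).trans
      (Finset.sum_le_sum fun j _ => Finset.abs_sum_le_sum_abs _ _)
  have h0 := hP 0
  have h1 := hP 1
  rw [Fin.sum_univ_two] at hn' ⊢
  rw [Fin.sum_univ_two (f := fun i => ∫ x, |v i x|)]
  rw [abs_le] at h0 h1 hn' ⊢
  constructor <;> linarith

/-! ### The instantaneous rate of change of the localised energy -/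

/-- A divergence-free field with `L²` norm at most `A` on `B(0, 5r)` and vorticity at most `W` is bounded
by `C (A / r + √(A W))` on `B(0, 4r)`: use `sup_bound` at the optimal radius `ρ = min (r, √(A / W))`. -/
lemma vel_bound : ∃ C : ℝ, 0 < C ∧ ∀ u : E2 → E2, ContDiff ℝ (⊤ : ℕ∞) u → (∀ x, div2 u x = 0) →
    ∀ W : ℝ, (∀ x, |curl2 u x| ≤ W) → ∀ r A : ℝ, 0 < r → 0 < A →
    ∫ y in ball 0 (5 * r), ‖u y‖ ^ 2 ≤ A ^ 2 →
    ∀ x : E2, ‖x‖ ≤ 4 * r → ∀ i, |u x i| ≤ C * (A / r + √(A * W)) := by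
  obtain ⟨C, hC, H⟩ := sup_bound
  refine ⟨2 * C, by positivity, fun u hu hdiv W hW r A hr hA hM x hx i => ?_⟩
  have hW0 : 0 ≤ W := (abs_nonneg _).trans (hW 0)
  have key : ∃ ρ, 0 < ρ ∧ ρ ≤ r ∧ A / ρ + ρ * W ≤ 2 * (A / r + √(A * W)) := by
    rcases le_or_gt (W * r ^ 2) A with h | h
    · refine ⟨r, hr, le_rfl, ?_⟩
      have : r * W ≤ A / r := by rw [le_div_iff₀ hr]; linarith
      have := Real.sqrt_nonneg (A * W)
      linarith
    · have hW1 : 0 < W := by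
        rcases hW0.eq_or_lt with h0 | h0
        · rw [← h0] at h
          linarith
        · exact h0
      have h1 := Real.sqrt_pos.2 hA
      have h2 := Real.sqrt_pos.2 hW1
      refine ⟨√A / √W, by positivity, ?_, ?_⟩
      · rw [← Real.sqrt_div hA.le, Real.sqrt_le_left hr.le, div_le_iff₀ hW1]
        linarith
      · have e1 : A / (√A / √W) = √A * √W := by
          field_simp
          rw [Real.sq_sqrt hA.le]
        have e2 : √A / √W * W = √A * √W := by
          field_simp
          rw [Real.sq_sqrt hW0]
        rw [e1, e2, Real.sqrt_mul hA.le]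
        have : 0 < A / r := by positivity
        linarith
  obtain ⟨ρ, hρ, hρr, hle⟩ := key
  have hsub : ball x ρ ⊆ ball (0 : E2) (5 * r) := by
    intro y hy
    rw [mem_ball_iff_norm] at hy
    rw [mem_ball_zero_iff]
    have : ‖y‖ ≤ ‖y - x‖ + ‖x‖ := by simpa using norm_add_le (y - x) x
    linarith
  have hin : ∀ i, ∫ y in ball x ρ, u y i ^ 2 ≤ A ^ 2 := by
    intro i
    refine le_trans ?_ hM
    have hni : IntegrableOn (fun y => ‖u y‖ ^ 2) (ball 0 (5 * r)) :=
      contB (hu.continuous.norm.pow 2) _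
    refine le_trans ?_ (setIntegral_mono_set hni
      (Filter.Eventually.of_forall fun y => sq_nonneg _) hsub.eventuallyLE)
    refine integral_mono_of_nonneg (Filter.Eventually.of_forall fun y => sq_nonneg _)
      (hni.mono_set hsub) (Filter.Eventually.of_forall fun y => ?_)
    have := coord_le (u y) i
    simp only
    rw [← sq_abs]
    gcongr
  have hdiv' : ∀ x, pd 0 (fun x => u x 0) x + pd 1 (fun x => u x 1) x = 0 := by
    intro x
    have := hdiv x
    simp only [div2, Fin.sum_univ_two, pdv_eq hu] at this
    exact this
  have hcurl : ∀ x, |pd 0 (fun x => u x 1) x - pd 1 (fun x => u x 0) x| ≤ W := by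
    intro x
    have := hW x
    simp only [curl2, pdv_eq hu] at this
    exact this
  have hfin : |u x i| ≤ C * (A / ρ + ρ * W) := by
    fin_cases i
    · exact H _ _ (sm_comp hu 0) (sm_comp hu 1) 0 1 (by simp) (fun x => by linarith [hdiv' x]) W
        (fun x => by rw [abs_sub_comm]; exact hcurl x) x ρ A hρ hA (hin 0)
    · exact H _ _ (sm_comp hu 1) (sm_comp hu 0) 1 0 (by simp) (fun x => by linarith [hdiv' x]) W
        hcurl x ρ A hρ hA (hin 1)
  calc |u x i| ≤ C * (A / ρ + ρ * W) := hfin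
    _ ≤ C * (2 * (A / r + √(A * W))) := by gcongr
    _ = _ := by ring

/-- The transport term only sees the gradient of the cut-off, since `u` is divergence free. -/
lemma transport_id {u : E2 → E2} (hu : ContDiff ℝ (⊤ : ℕ∞) u) (hdiv : ∀ x, div2 u x = 0)
    {χ : E2 → ℝ} (hχ : Sm χ) (hc : HasCompactSupport χ) :
    ∫ x, χ x * (2 * ∑ i, u x i * ∑ j, u x j * pdv j i u x) =
      -∫ x, ‖u x‖ ^ 2 * (u x 0 * pd 0 χ x + u x 1 * pd 1 χ x) := by
  set U : Fin 2 → E2 → ℝ := fun i x => u x i with hU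
  have hUs : ∀ i, Sm (U i) := sm_comp hu
  have hdiv' : ∀ x, pd 0 (U 0) x + pd 1 (U 1) x = 0 := by
    intro x
    have := hdiv x
    simp only [div2, Fin.sum_univ_two, pdv_eq hu] at this
    exact this
  set w : E2 → ℝ := fun x => U 0 x * U 0 x + U 1 x * U 1 x with hw
  have hws : Sm w := ((hUs 0).mul (hUs 0)).add ((hUs 1).mul (hUs 1))
  have hpw : ∀ j x, pd j w x = 2 * (U 0 x * pd j (U 0) x + U 1 x * pd j (U 1) x) := by
    intro j x
    have s0 : Sm (fun x => U 0 x * U 0 x) := (hUs 0).mul (hUs 0)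
    have s1 : Sm (fun x => U 1 x * U 1 x) := (hUs 1).mul (hUs 1)
    rw [hw, pd_add (s0.diff x) (s1.diff x), pd_mul ((hUs 0).diff x) ((hUs 0).diff x),
      pd_mul ((hUs 1).diff x) ((hUs 1).diff x)]
    ring
  have hs : ∀ j, Sm (fun x => w x * U j x) := fun j => hws.mul (hUs j)
  have hf : ∀ j, Sm (fun x => χ x * (w x * U j x)) := fun j => hχ.mul (hs j)
  have hp : ∀ j x, pd j (fun x => χ x * (w x * U j x)) x =
      χ x * (w x * pd j (U j) x + pd j w x * U j x) + pd j χ x * (w x * U j x) := by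
    intro j x
    rw [pd_mul (hχ.diff x) ((hs j).diff x), pd_mul (hws.diff x) ((hUs j).diff x)]
  have hI : ∀ j, ∫ x, pd j (fun x => χ x * (w x * U j x)) x = 0 := fun j =>
    int_pd (hf j) hc.mul_right j
  have hint : ∀ j, Integrable (pd j (fun x => χ x * (w x * U j x))) := fun j =>
    intg ((hf j).pd j).continuous (hcs_pd hc.mul_right j)
  have hsum : ∫ x, (pd 0 (fun x => χ x * (w x * U 0 x)) x +
      pd 1 (fun x => χ x * (w x * U 1 x)) x) = 0 := by
    rw [integral_add (hint 0) (hint 1), hI, hI, add_zero]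
  have e : ∀ x, pd 0 (fun x => χ x * (w x * U 0 x)) x + pd 1 (fun x => χ x * (w x * U 1 x)) x =
      χ x * (2 * ∑ i, u x i * ∑ j, u x j * pdv j i u x) +
        ‖u x‖ ^ 2 * (u x 0 * pd 0 χ x + u x 1 * pd 1 χ x) := by
    intro x
    rw [hp, hp, hpw, hpw, normsq_eq]
    simp only [Fin.sum_univ_two, pdv_eq hu]
    have h := hdiv' x
    simp only [hU] at h
    simp only [hU, hw]
    linear_combination (χ x * (u x 0 * u x 0 + u x 1 * u x 1)) * h
  have hcont : Continuous fun x => χ x * (2 * ∑ i, u x i * ∑ j, u x j * pdv j i u x) := by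
    simp only [Fin.sum_univ_two, pdv_eq hu]
    have c0 := (hUs 0).continuous
    have c1 := (hUs 1).continuous
    have := hχ.continuous
    have d := fun i j => ((hUs i).pd j).continuous
    have d00 := d 0 0
    have d01 := d 0 1
    have d10 := d 1 0
    have d11 := d 1 1
    simp only [hU] at c0 c1 d00 d01 d10 d11
    fun_prop
  have i1 : Integrable fun x => χ x * (2 * ∑ i, u x i * ∑ j, u x j * pdv j i u x) :=
    intg hcont hc.mul_right
  have i2 : Integrable fun x => ‖u x‖ ^ 2 * (u x 0 * pd 0 χ x + u x 1 * pd 1 χ x) := by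
    refine intg ?_ (((hcs_pd hc 0).mul_left.add (hcs_pd hc 1).mul_left).mul_left)
    exact (hu.continuous.norm.pow 2).mul
      (((hUs 0).continuous.mul (hχ.pd 0).continuous).add
        ((hUs 1).continuous.mul (hχ.pd 1).continuous))
  simp only [e] at hsum
  rw [integral_add i1 i2] at hsum
  linarith

/-- The transport term is at most (sup of `u`) × (gradient of the cut-off) × (energy). -/
lemma transport_bound {u : E2 → E2} (hu : ContDiff ℝ (⊤ : ℕ∞) u) (hdiv : ∀ x, div2 u x = 0)
    {r c S A : ℝ} (hr : 0 < r) (hc : ∀ i x, |pd i (chi r) x| ≤ c / r) (hS0 : 0 ≤ S)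
    (hS : ∀ x : E2, ‖x‖ ≤ 4 * r → ∀ i, |u x i| ≤ S)
    (hM : ∫ y in ball 0 (5 * r), ‖u y‖ ^ 2 ≤ A ^ 2) :
    |∫ x, chi r x * (2 * ∑ i, u x i * ∑ j, u x j * pdv j i u x)| ≤ 2 * S * (c / r) * A ^ 2 := by
  have hcr : 0 ≤ c / r := (abs_nonneg _).trans (hc 0 0)
  have hcont : Continuous fun x => ‖u x‖ ^ 2 := hu.continuous.norm.pow 2
  rw [transport_id hu hdiv (chi_sm r) (chi_hcs hr), abs_neg,
    ← setIntegral_eq_integral_of_forall_compl_eq_zero (s := ball 0 (5 * r))]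
  · refine abs_integral_le_integral_abs.trans (le_trans (integral_mono_of_nonneg
      (g := fun x => 2 * S * (c / r) * ‖u x‖ ^ 2)
      (Filter.Eventually.of_forall fun y => abs_nonneg _) ((contB hcont _).const_mul _)
      (Filter.Eventually.of_forall fun x => ?_)) ?_)
    · simp only
      by_cases hx : 4 * r ≤ ‖x‖
      · rw [pd_chi_zero hr (by linarith), pd_chi_zero hr (by linarith)]
        simp only [mul_zero, add_zero, abs_zero]
        positivity
      · have hx := (not_le.1 hx).le
        rw [abs_mul, abs_of_nonneg (sq_nonneg _), mul_comm]
        gcongr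
        refine (abs_add_le _ _).trans ?_
        rw [abs_mul, abs_mul]
        have h0 := mul_le_mul (hS x hx 0) (hc 0 x) (abs_nonneg _) hS0
        have h1 := mul_le_mul (hS x hx 1) (hc 1 x) (abs_nonneg _) hS0
        linarith
    · rw [integral_const_mul]
      gcongr
  · intro y hy
    rw [mem_ball_zero_iff, not_lt] at hy
    rw [pd_chi_zero hr (by linarith), pd_chi_zero hr (by linarith)]
    simp

/-- For divergence-free `u`, `div (χ u) = u · ∇χ`, which contains no derivative of `u`. -/
lemma div_cut {u : E2 → E2} (hu : ContDiff ℝ (⊤ : ℕ∞) u) (hdiv : ∀ x, div2 u x = 0) (r : ℝ) :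
    (fun x => pd 0 (fun x => chi r x * u x 0) x + pd 1 (fun x => chi r x * u x 1) x) =
      fun x => pd 0 (chi r) x * u x 0 + pd 1 (chi r) x * u x 1 := by
  ext x
  have := hdiv x
  simp only [div2, Fin.sum_univ_two, pdv_eq hu] at this
  rw [pd_mul ((chi_sm r).diff x) ((sm_comp hu 0).diff x),
    pd_mul ((chi_sm r).diff x) ((sm_comp hu 1).diff x)]
  linear_combination chi r x * this

/-- The near part of the pressure work obeys the same bound as the transport term: by `hess_E` the
Hessian has `L²` norm `O(A / r)`, and it is paired with `uⱼuₖ`, of `L²` norm `O(S A)`. -/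
lemma near_bound : ∃ C : ℝ, 0 < C ∧ ∀ u : E2 → E2, ContDiff ℝ (⊤ : ℕ∞) u → (∀ x, div2 u x = 0) →
    ∀ r S A : ℝ, 0 < r → 0 ≤ S → (∀ x : E2, ‖x‖ ≤ 4 * r → ∀ i, |u x i| ≤ S) →
    ∫ y in ball 0 (5 * r), ‖u y‖ ^ 2 ≤ A ^ 2 → ∀ j k : Fin 2,
    |∫ y in ball 0 (4 * r), pd j (pd k (Cv fundE fun x =>
      pd 0 (fun x => chi r x * u x 0) x + pd 1 (fun x => chi r x * u x 1) x)) y *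
        (u y j * u y k)| ≤ C * (S * A ^ 2 / r) := by
  obtain ⟨c, hc, hgrad⟩ := chi_grad
  obtain ⟨C, hC, hE⟩ := hess_E
  refine ⟨(4 * C * c ^ 2 + 1) / 2, by positivity, fun u hu hdiv r S A hr hS0 hS hM j k => ?_⟩
  have hcont : Continuous fun x => ‖u x‖ ^ 2 := hu.continuous.norm.pow 2
  rw [div_cut hu hdiv r]
  set g : E2 → ℝ := fun x => pd 0 (chi r) x * u x 0 + pd 1 (chi r) x * u x 1 with hg
  have hgs : Sm g := (((chi_sm r).pd 0).mul (sm_comp hu 0)).add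
    (((chi_sm r).pd 1).mul (sm_comp hu 1))
  have hg0 : ∀ x, 2 * r ≤ ‖x‖ → g x = 0 := by
    intro x hx
    simp only [hg]
    rw [pd_chi_zero hr (by linarith), pd_chi_zero hr (by linarith)]
    simp
  have hgc : HasCompactSupport g := hcs_of_zero _ hg0
  have hgL : ∫ y, g y ^ 2 ≤ 4 * (c / r) ^ 2 * A ^ 2 := by
    rw [← setIntegral_eq_integral_of_forall_compl_eq_zero (s := ball 0 (5 * r))]
    · refine le_trans (integral_mono_of_nonneg (g := fun x => 4 * (c / r) ^ 2 * ‖u x‖ ^ 2)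
        (Filter.Eventually.of_forall fun y => sq_nonneg _) ((contB hcont _).const_mul _)
        (Filter.Eventually.of_forall fun x => ?_)) ?_
      · simp only
        have h : |g x| ≤ 2 * (c / r) * ‖u x‖ := by
          refine (abs_add_le _ _).trans ?_
          rw [abs_mul, abs_mul]
          have h0 := mul_le_mul (hgrad r hr 0 x) (coord_le (u x) 0) (abs_nonneg _) (by positivity)
          have h1 := mul_le_mul (hgrad r hr 1 x) (coord_le (u x) 1) (abs_nonneg _) (by positivity)
          linarith
        calc g x ^ 2 = |g x| ^ 2 := (sq_abs _).symm
          _ ≤ (2 * (c / r) * ‖u x‖) ^ 2 := by gcongr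
          _ = _ := by ring
      · rw [integral_const_mul]
        gcongr
    · intro y hy
      rw [mem_ball_zero_iff, not_lt] at hy
      rw [hg0 y (by linarith)]
      simp
  set H := pd j (pd k (Cv fundE g)) with hH
  have hHs : Sm H := ((Cv_sm fundE_locInt hgs hgc).pd k).pd j
  have hH2 : ∫ y in ball 0 (4 * r), H y ^ 2 ≤ C * (4 * (c / r) ^ 2 * A ^ 2) :=
    (hE r hr g hgs hg0 j k).trans (by gcongr)
  have hH2i : IntegrableOn (fun y => H y ^ 2) (ball 0 (4 * r)) := contB (hHs.continuous.pow 2) _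
  have hu2 : ∫ y in ball 0 (4 * r), ‖u y‖ ^ 2 ≤ A ^ 2 := by
    refine le_trans (setIntegral_mono_set (contB hcont _)
      (Filter.Eventually.of_forall fun y => sq_nonneg _) (ball_subset_ball ?_).eventuallyLE) hM
    linarith
  have ia : IntegrableOn (fun y => S / 2 * r * H y ^ 2) (ball 0 (4 * r)) := hH2i.const_mul _
  have ib : IntegrableOn (fun y => S / 2 * r⁻¹ * ‖u y‖ ^ 2) (ball 0 (4 * r)) :=
    (contB hcont _).const_mul _
  have hab : IntegrableOn (fun y => S / 2 * r * H y ^ 2 + S / 2 * r⁻¹ * ‖u y‖ ^ 2)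
    (ball 0 (4 * r)) := ia.add ib
  refine abs_integral_le_integral_abs.trans (le_trans (integral_mono_of_nonneg
    (g := fun y => S / 2 * r * H y ^ 2 + S / 2 * r⁻¹ * ‖u y‖ ^ 2)
    (Filter.Eventually.of_forall fun y => abs_nonneg _) hab ?_) ?_)
  · filter_upwards [self_mem_ae_restrict (measurableSet_ball)] with y hy
    rw [mem_ball_zero_iff] at hy
    rw [abs_mul, abs_mul]
    have h1 : |u y j| * |u y k| ≤ S * ‖u y‖ :=
      mul_le_mul (hS y hy.le j) (coord_le _ _) (abs_nonneg _) hS0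
    -- the weight `r` balances the `L²` norms of `H`, of order `A / r`, and of `u`, of order `A`
    have h2 : |H y| * ‖u y‖ ≤ 1 / 2 * (r * H y ^ 2 + r⁻¹ * ‖u y‖ ^ 2) := by
      have h3 : 0 ≤ r⁻¹ * (r * |H y| - ‖u y‖) ^ 2 := by positivity
      have h4 : r⁻¹ * (r * |H y| - ‖u y‖) ^ 2 =
          r * H y ^ 2 + r⁻¹ * ‖u y‖ ^ 2 - 2 * (|H y| * ‖u y‖) := by
        rw [← sq_abs (H y)]
        field_simp
        ring
      linarith
    calc |H y| * (|u y j| * |u y k|) ≤ |H y| * (S * ‖u y‖) := by gcongr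
      _ = S * (|H y| * ‖u y‖) := by ring
      _ ≤ S * (1 / 2 * (r * H y ^ 2 + r⁻¹ * ‖u y‖ ^ 2)) := by gcongr
      _ = _ := by ring
  · rw [integral_add ia ib, integral_const_mul, integral_const_mul]
    calc _ ≤ S / 2 * r * (C * (4 * (c / r) ^ 2 * A ^ 2)) + S / 2 * r⁻¹ * A ^ 2 := by gcongr
      _ = _ := by
        field_simp

lemma cut_L1 {u : E2 → E2} {r S : ℝ} (hr : 0 < r)
    (hS : ∀ x : E2, ‖x‖ ≤ 4 * r → ∀ i, |u x i| ≤ S) (i : Fin 2) :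
    ∫ x, |chi r x * u x i| ≤ 16 * Real.pi * r ^ 2 * S := by
  have hS0 : 0 ≤ S := (abs_nonneg _).trans (hS 0 (by rw [norm_zero]; linarith) 0)
  have hv : volume.real (ball (0 : E2) (4 * r)) = 16 * Real.pi * r ^ 2 := by
    rw [Measure.real, EuclideanSpace.volume_ball_fin_two, ENNReal.toReal_mul, ENNReal.toReal_pow,
      ENNReal.toReal_ofReal (by linarith), ENNReal.toReal_ofReal Real.pi_pos.le]
    ring
  rw [← setIntegral_eq_integral_of_forall_compl_eq_zero (s := ball 0 (4 * r))]
  · refine le_trans (integral_mono_of_nonneg (g := fun x => S)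
      (Filter.Eventually.of_forall fun y => abs_nonneg _) (contB continuous_const _) ?_) ?_
    · filter_upwards [self_mem_ae_restrict (measurableSet_ball)] with y hy
      rw [mem_ball_zero_iff] at hy
      rw [abs_mul, abs_of_nonneg (chi_nonneg r y)]
      have := mul_le_mul (chi_le_one r y) (hS y hy.le i) (abs_nonneg _) zero_le_one
      linarith
    · rw [integral_const, smul_eq_mul, measureReal_restrict_apply_univ, hv]
  · intro y hy
    rw [mem_ball_zero_iff, not_lt] at hy
    rw [chi_zero hr (by linarith)]
    simp

/-- The rate of change of the energy localised by `chi r`, for a field evolving by the Euler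
equations. -/
def work (θ : E2 → ℝ) (r : ℝ) (u : E2 → E2) : ℝ :=
  ∫ x, chi r x * (2 * ∑ i, u x i * (-(∑ j, u x j * pdv j i u x) - pressureForce θ u i x))

/-- If the energy of `u` on `B(0, s)` is at most `M² s^{2 + 2α}` for every `s ≥ r`, the rate of change of
the energy localised at scale `r` is small compared with `M² r^{2 + 2α}` as soon as `M r^{α - 1}` and
`M W r^{α - 1}` are small. -/
lemma inst_bound {α : ℝ} (hα : α < 1 / 2) : ∃ C : ℝ, 0 < C ∧
    ∀ θ : E2 → ℝ, IsCutoff θ → ∀ u : E2 → E2, ContDiff ℝ (⊤ : ℕ∞) u → (∀ x, div2 u x = 0) →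
    (∀ x, PressureIntegrable θ u x) → (∀ i, Continuous (pressureForce θ u i)) →
    ∀ W : ℝ, (∀ x, |curl2 u x| ≤ W) → ∀ r M : ℝ, 1 ≤ r → 0 < M →
    (∀ s, r ≤ s → ∫ y in ball 0 s, ‖u y‖ ^ 2 ≤ M ^ 2 * s ^ (2 + 2 * α)) →
    |work θ r u| ≤ C * (M ^ 2 * r ^ (2 + 2 * α) * (M * r ^ (α - 1) + √(M * W * r ^ (α - 1)))) := by
  obtain ⟨c, hc, hgrad⟩ := chi_grad
  obtain ⟨C1, hC1, hvel⟩ := vel_bound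
  obtain ⟨C2, hC2, hnear⟩ := near_bound
  have hd : 0 < 1 - 2 * α := by linarith
  set C3 := 2 * c + 2 * (4 * C2 + 40 * (3 / (1 - 2 * α)) * (32 * Real.pi)) with hC3
  have hC3p : 0 < C3 := by positivity
  refine ⟨C3 * C1 * 12 ^ 3, by positivity,
    fun θ hθ u hu hdiv hPI hPc W hW r M hr1 hM hMs => ?_⟩
  have hr : 0 < r := by linarith
  have hW0 : 0 ≤ W := (abs_nonneg _).trans (hW 0)
  set q := r ^ (1 + α) with hq
  have hq0 : 0 < q := Real.rpow_pos_of_pos hr _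
  have hq2 : r ^ (2 + 2 * α) = q ^ 2 := by
    rw [hq, ← Real.rpow_natCast, ← Real.rpow_mul hr.le]
    congr 1
    push_cast
    ring
  have hq3 : r ^ (α - 1) = q / r ^ 2 := by
    rw [hq, ← Real.rpow_natCast, ← Real.rpow_sub hr]
    congr 1
    push_cast
    ring
  -- the factor `12` absorbs the passage from `r` to `5 * r`: `5 ^ (2 + 2 * α) ≤ 125 ≤ 12 ^ 2`
  set A := 12 * M * q with hA
  have hA0 : 0 < A := by positivity
  have h5 : ∫ y in ball 0 (5 * r), ‖u y‖ ^ 2 ≤ A ^ 2 := by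
    refine (hMs (5 * r) (by linarith)).trans ?_
    rw [Real.mul_rpow (by norm_num) hr.le, hq2]
    have : (5 : ℝ) ^ (2 + 2 * α) ≤ 5 ^ (3 : ℝ) :=
      Real.rpow_le_rpow_of_exponent_le (by norm_num) (by linarith)
    norm_num at this
    calc M ^ 2 * (5 ^ (2 + 2 * α) * q ^ 2) ≤ M ^ 2 * (125 * q ^ 2) := by gcongr
      _ ≤ _ := by
        have : 0 ≤ M ^ 2 * q ^ 2 := by positivity
        rw [hA]
        linarith
  set V := A / r + √(A * W) with hV
  set S := C1 * V with hS
  have hS0 : 0 ≤ S := by positivity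
  have hSb : ∀ x : E2, ‖x‖ ≤ 4 * r → ∀ i, |u x i| ≤ S := hvel u hu hdiv W hW r A hr hA0 h5
  have hcont : Continuous fun x => ‖u x‖ ^ 2 := hu.continuous.norm.pow 2
  obtain ⟨hT, hτ⟩ := far_tail hα hcont (fun y => sq_nonneg _) (r := 4 * r) (M := M) (by linarith)
    (fun s hs => hMs s (by linarith))
  set τ := ∫ y in {y : E2 | 4 * r ≤ ‖y‖}, ‖u y‖ ^ 2 * (‖y‖ ^ 3)⁻¹ with hτd
  have hτ0 : 0 ≤ τ := integral_nonneg fun y => by positivity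
  have hτ' : τ * r ^ 2 ≤ 3 / (1 - 2 * α) * (A ^ 2 / r) := by
    have h4 : (4 * r) ^ (2 * α - 1) ≤ r ^ (2 * α - 1) :=
      Real.rpow_le_rpow_of_nonpos hr (by linarith) (by linarith)
    have h6 : r ^ (2 * α - 1) = q ^ 2 / r ^ 3 := by
      rw [← hq2, ← Real.rpow_natCast, ← Real.rpow_sub hr]
      congr 1
      push_cast
      ring
    rw [h6] at h4
    calc τ * r ^ 2 ≤ (3 / (1 - 2 * α) * M ^ 2 * (q ^ 2 / r ^ 3)) * r ^ 2 := by
          gcongr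
          exact hτ.trans (by gcongr)
      _ = 3 / (1 - 2 * α) * ((M * q) ^ 2 / r) := by field_simp
      _ ≤ _ := by
        gcongr
        rw [hA]
        nlinarith [mul_pos hM hq0]
  set v : Fin 2 → E2 → ℝ := fun i x => chi r x * u x i with hv
  have hvs : ∀ i, Sm (v i) := fun i => (chi_sm r).mul (sm_comp hu i)
  have hv0 : ∀ i x, 5 / 4 * r ≤ ‖x‖ → v i x = 0 := by
    intro i x hx
    simp [hv, chi_zero hr hx]
  have hP := press_bound hθ hu hdiv hPI hPc hr1 hvs hv0 hT
  have hn : ∀ j k, _ := hnear u hu hdiv r S A hr hS0 hSb h5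
  have hl := cut_L1 hr hSb
  have hPb : |∑ i, ∫ x, v i x * pressureForce θ u i x| ≤
      (4 * C2 + 40 * (3 / (1 - 2 * α)) * (32 * Real.pi)) * (S * A ^ 2 / r) := by
    refine hP.trans ?_
    have e1 : ∑ j, ∑ k, |∫ y in ball 0 (4 * r),
        pd j (pd k (Cv fundE fun x => pd 0 (v 0) x + pd 1 (v 1) x)) y * (u y j * u y k)| ≤
        ∑ j : Fin 2, ∑ k : Fin 2, C2 * (S * A ^ 2 / r) :=
      Finset.sum_le_sum fun j _ => Finset.sum_le_sum fun k _ => hn j k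
    have e2 : ∑ i, ∫ x, |v i x| ≤ ∑ i : Fin 2, 16 * Real.pi * r ^ 2 * S :=
      Finset.sum_le_sum fun i _ => hl i
    simp only [Finset.sum_const, Finset.card_univ, Fintype.card_fin, nsmul_eq_mul] at e1 e2
    push_cast at e1 e2
    have e3 : 40 * τ * ∑ i, ∫ x, |v i x| ≤
        40 * (3 / (1 - 2 * α)) * (32 * Real.pi) * (S * A ^ 2 / r) := by
      calc 40 * τ * ∑ i, ∫ x, |v i x| ≤ 40 * τ * (2 * (16 * Real.pi * r ^ 2 * S)) := by gcongr
        _ = 40 * (32 * Real.pi) * S * (τ * r ^ 2) := by ring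
        _ ≤ 40 * (32 * Real.pi) * S * (3 / (1 - 2 * α) * (A ^ 2 / r)) := by gcongr
        _ = _ := by ring
    linarith
  have hTb := transport_bound hu hdiv hr (hgrad r hr) hS0 hSb h5
  have hi : ∀ i, Integrable fun x => v i x * pressureForce θ u i x := fun i =>
    intg ((hvs i).continuous.mul (hPc i)) (hcs_of_zero _ (hv0 i)).mul_right
  have hti : Integrable fun x => chi r x * (2 * ∑ i, u x i * ∑ j, u x j * pdv j i u x) := by
    refine intg ?_ (chi_hcs hr).mul_right
    simp only [Fin.sum_univ_two, pdv_eq hu]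
    have c0 := (sm_comp hu 0).continuous
    have c1 := (sm_comp hu 1).continuous
    have := (chi_sm r).continuous
    have d := fun i j => ((sm_comp hu i).pd j).continuous
    have d00 := d 0 0
    have d01 := d 0 1
    have d10 := d 1 0
    have d11 := d 1 1
    fun_prop
  have hw : work θ r u = -(∫ x, chi r x * (2 * ∑ i, u x i * ∑ j, u x j * pdv j i u x)) -
      2 * ∑ i, ∫ x, v i x * pressureForce θ u i x := by
    have hs2 : Integrable fun x => v 0 x * pressureForce θ u 0 x + v 1 x * pressureForce θ u 1 x :=
      (hi 0).add (hi 1)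
    have hs3 : Integrable fun x =>
        2 * (v 0 x * pressureForce θ u 0 x + v 1 x * pressureForce θ u 1 x) := hs2.const_mul _
    have hn' : Integrable fun x => -(chi r x * (2 * ∑ i, u x i * ∑ j, u x j * pdv j i u x)) :=
      hti.neg
    rw [Fin.sum_univ_two, ← integral_add (hi 0) (hi 1), ← integral_const_mul, ← integral_neg,
      ← integral_sub hn' hs3]
    unfold work
    congr 1
    ext x
    simp only [Fin.sum_univ_two, hv]
    ring
  have hfin : |work θ r u| ≤ C3 * (S * A ^ 2 / r) := by
    rw [hw]
    have e : 2 * S * (c / r) * A ^ 2 = 2 * c * (S * A ^ 2 / r) := by field_simp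
    rw [e] at hTb
    have h1 := abs_le.1 hTb
    have h2 := abs_le.1 hPb
    rw [hC3, add_mul, mul_assoc 2 (_ + _), abs_le]
    constructor <;> linarith
  refine hfin.trans ?_
  have hVr : V / r ≤ 12 * (M * r ^ (α - 1) + √(M * W * r ^ (α - 1))) := by
    have h12 : √12 ≤ 12 := by
      rw [Real.sqrt_le_left (by norm_num)]
      norm_num
    have e1 : √(A * W) / r = √12 * √(M * W * r ^ (α - 1)) := by
      rw [← Real.sqrt_mul (by norm_num), ← Real.sqrt_sq hr.le, ← Real.sqrt_div (by positivity),
        Real.sqrt_sq hr.le, hq3, hA]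
      congr 1
      field_simp
    have e2 : A / r / r = 12 * (M * r ^ (α - 1)) := by
      rw [hq3, hA]
      field_simp
    rw [hV, add_div, e1, e2, mul_add]
    gcongr
  calc C3 * (S * A ^ 2 / r) = C3 * C1 * A ^ 2 * (V / r) := by rw [hS]; ring
    _ ≤ C3 * C1 * A ^ 2 * (12 * (M * r ^ (α - 1) + √(M * W * r ^ (α - 1)))) := by gcongr
    _ = _ := by rw [hA, hq2]; ring

/-! ### Evolution of the localised energy -/

/-- The energy of `u` localised by `chi r`. -/
def enr (r : ℝ) (u : E2 → E2) : ℝ := ∫ x, chi r x * ‖u x‖ ^ 2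

lemma sol_smooth {θ : E2 → ℝ} {u : ℝ → E2 → E2} (h : IsYudovichSolution θ u) {t : ℝ} (ht : 0 ≤ t) :
    ContDiff ℝ (⊤ : ℕ∞) (u t) := by
  have h1 : ContDiff ℝ (⊤ : ℕ∞) fun x : E2 => (t, x) := by fun_prop
  exact contDiffOn_univ.1 (h.1.comp h1.contDiffOn (fun x _ => ⟨ht, Set.mem_univ _⟩))

/-- The time derivative in the Euler equations is jointly continuous up to time `0`. -/
lemma sol_rhs_cont {θ : E2 → ℝ} {u : ℝ → E2 → E2} (h : IsYudovichSolution θ u) (i : Fin 2) :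
    ContinuousOn (fun q : ℝ × E2 => -(∑ j, u q.1 q.2 j * pdv j i (u q.1) q.2) -
      pressureForce θ (u q.1) i q.2) (Set.Ici 0 ×ˢ Set.univ) := by
  set S : Set (ℝ × E2) := Set.Ici 0 ×ˢ Set.univ with hS
  have hu : UniqueDiffOn ℝ S := (uniqueDiffOn_Ici 0).prod uniqueDiffOn_univ
  have hc := h.1.continuousOn_fderivWithin hu (by simp)
  have hc1 : ContinuousOn (fun q : ℝ × E2 =>
      (fderivWithin ℝ (fun q : ℝ × E2 => u q.1 q.2) S q ((1 : ℝ), (0 : E2))) i) S :=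
    (EuclideanSpace.proj i : E2 →L[ℝ] ℝ).continuous.comp_continuousOn
      (hc.clm_apply continuousOn_const)
  refine hc1.congr fun q hq => ?_
  have h1 := (h.1.differentiableOn (by simp) q hq).hasFDerivWithinAt
  have h2 : HasDerivWithinAt (fun s : ℝ => (s, q.2)) ((1 : ℝ), (0 : E2)) (Set.Ici 0) q.1 :=
    (hasDerivWithinAt_id _ _).prodMk (hasDerivWithinAt_const _ _ _)
  have hm : Set.MapsTo (fun s : ℝ => (s, q.2)) (Set.Ici 0) S := fun s hs => ⟨hs, Set.mem_univ _⟩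
  have h3 := h1.comp_hasDerivWithinAt q.1 h2 hm
  have h4 := (EuclideanSpace.proj i : E2 →L[ℝ] ℝ).hasFDerivAt.comp_hasDerivWithinAt q.1 h3
  exact (uniqueDiffOn_Ici (0 : ℝ) q.1 hq.1).eq_deriv _ (h.2.2.2 q.1 hq.1 q.2 i) h4

/-- The pressure force is continuous, because the equation expresses it through `∂ₜu` and `u · ∇u`; no
estimate on the kernels is needed. -/
lemma sol_press_cont {θ : E2 → ℝ} {u : ℝ → E2 → E2} (h : IsYudovichSolution θ u) {t : ℝ}
    (ht : 0 ≤ t) (i : Fin 2) : Continuous (pressureForce θ (u t) i) := by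
  have h1 : Continuous fun x : E2 => (t, x) := by fun_prop
  have h2 := (sol_rhs_cont h i).comp (s := Set.univ) h1.continuousOn
    (fun x _ => ⟨ht, Set.mem_univ _⟩)
  have h2 := continuousOn_univ.1 h2
  have hu := sol_smooth h ht
  have h3 : Continuous fun x => ∑ j, u t x j * pdv j i (u t) x := by
    refine continuous_finsetSum _ fun j _ => ?_
    simp only [pdv_eq hu]
    exact (sm_comp hu j).continuous.mul ((sm_comp hu i).pd j).continuous
  have h4 := (h2.add h3).neg
  refine h4.congr fun x => ?_
  simp

lemma sol_sq_cont {θ : E2 → ℝ} {u : ℝ → E2 → E2} (h : IsYudovichSolution θ u) (r : ℝ) :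
    ContinuousOn (Function.uncurry fun (s : ℝ) (x : E2) => chi r x * ‖u s x‖ ^ 2)
      (Set.Ici 0 ×ˢ Set.univ) := by
  have h1 : Continuous fun q : ℝ × E2 => chi r q.2 := (chi_sm r).continuous.comp continuous_snd
  exact h1.continuousOn.mul (h.1.continuousOn.norm.pow 2)

lemma notMem_ball {r : ℝ} {x : E2} (hx : x ∉ closedBall (0 : E2) r) : r ≤ ‖x‖ := by
  rw [mem_closedBall_zero_iff, not_le] at hx
  exact hx.le

lemma enr_cont {θ : E2 → ℝ} {u : ℝ → E2 → E2} (h : IsYudovichSolution θ u) {r : ℝ} (hr : 0 < r) :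
    ContinuousOn (fun t => enr r (u t)) (Set.Ici 0) :=
  continuousOn_integral_of_compact_support (isCompact_closedBall (0 : E2) (5 / 4 * r))
    (sol_sq_cont h r) fun p x _ hx => by
      change chi r x * _ = 0
      rw [chi_zero hr (notMem_ball hx), zero_mul]

lemma enr_deriv {θ : E2 → ℝ} {u : ℝ → E2 → E2} (h : IsYudovichSolution θ u) {r : ℝ} (hr : 0 < r)
    {t : ℝ} (ht : 0 < t) : HasDerivAt (fun t => enr r (u t)) (work θ r (u t)) t := by
  have hpos : ∀ s ∈ closedBall t (t / 2), 0 < s := by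
    intro s hs
    rw [Real.closedBall_eq_Icc] at hs
    linarith [hs.1]
  refine hasDerivAt_int (F := fun s x => chi r x * ‖u s x‖ ^ 2)
    (F' := fun s x => chi r x * (2 * ∑ i, u s x i *
      (-(∑ j, u s x j * pdv j i (u s) x) - pressureForce θ (u s) i x)))
    (half_pos ht) (isCompact_closedBall (0 : E2) (5 / 4 * r)) ?_ ?_ ?_ ?_ ?_
  · intro s hs x
    have hd : ∀ i, HasDerivAt (fun s => u s x i)
        (-(∑ j, u s x j * pdv j i (u s) x) - pressureForce θ (u s) i x) s := fun i =>
      (h.2.2.2 s (hpos s hs).le x i).hasDerivAt (Ici_mem_nhds (hpos s hs))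
    have h1 := (((hd 0).pow 2).add ((hd 1).pow 2)).const_mul (chi r x)
    have e : (fun s => chi r x * ‖u s x‖ ^ 2) = fun s => chi r x * (u s x 0 ^ 2 + u s x 1 ^ 2) := by
      ext s
      rw [normsq_eq]
    rw [e]
    refine h1.congr_deriv ?_
    simp only [Fin.sum_univ_two]
    push_cast
    ring
  · intro s hs
    exact (chi_sm r).continuous.mul ((sol_smooth h (hpos s hs).le).continuous.norm.pow 2)
  · have h1 : Continuous fun q : ℝ × E2 => chi r q.2 := (chi_sm r).continuous.comp continuous_snd
    have h2 : ∀ i : Fin 2, ContinuousOn (fun q : ℝ × E2 => u q.1 q.2 i)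
        (Set.Ici 0 ×ˢ Set.univ) := fun i =>
      (EuclideanSpace.proj i : E2 →L[ℝ] ℝ).continuous.comp_continuousOn h.1.continuousOn
    have h3 : ContinuousOn (fun q : ℝ × E2 => chi r q.2 * (2 * ∑ i, u q.1 q.2 i *
      (-(∑ j, u q.1 q.2 j * pdv j i (u q.1) q.2) - pressureForce θ (u q.1) i q.2)))
        (Set.Ici 0 ×ˢ Set.univ) :=
      h1.continuousOn.mul (continuousOn_const.mul
        (continuousOn_finsetSum _ fun i _ => (h2 i).mul (sol_rhs_cont h i)))
    exact h3.mono (Set.prod_mono (fun s hs => (hpos s hs).le) le_rfl)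
  · intro s _ x hx
    rw [chi_zero hr (notMem_ball hx), zero_mul]
  · intro s _ x hx
    rw [chi_zero hr (notMem_ball hx), zero_mul]

/-- A bound on the rate of change of the localised energy integrates in time, up to time `0`. -/
lemma enr_lip {θ : E2 → ℝ} {u : ℝ → E2 → E2} (h : IsYudovichSolution θ u) {r : ℝ} (hr : 0 < r)
    {a b B : ℝ} (ha : 0 ≤ a) (hab : a ≤ b) (hB : ∀ t, a ≤ t → t ≤ b → |work θ r (u t)| ≤ B) :
    enr r (u b) ≤ enr r (u a) + B * (b - a) := by
  rcases hab.eq_or_lt with rfl | hab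
  · simp
  obtain ⟨c, hc, he⟩ := exists_hasDerivAt_eq_slope (fun t => enr r (u t))
    (fun t => work θ r (u t)) hab
    ((enr_cont h hr).mono fun x hx => ha.trans hx.1)
    (fun x hx => enr_deriv h hr (ha.trans_lt hx.1))
  have h1 := (abs_le.1 (hB c hc.1.le hc.2.le)).2
  rw [he, div_le_iff₀ (by linarith)] at h1
  linarith

lemma enr_ge {u : E2 → E2} (hu : Continuous u) {r : ℝ} (hr : 0 < r) :
    ∫ x in ball 0 r, ‖u x‖ ^ 2 ≤ enr r u := by
  have hi : Integrable fun x => chi r x * ‖u x‖ ^ 2 :=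
    intg ((chi_sm r).continuous.mul (hu.norm.pow 2)) (chi_hcs hr).mul_right
  calc ∫ x in ball 0 r, ‖u x‖ ^ 2 = ∫ x in ball 0 r, chi r x * ‖u x‖ ^ 2 := by
        refine setIntegral_congr_fun measurableSet_ball fun x hx => ?_
        rw [mem_ball_zero_iff] at hx
        rw [chi_one hr hx.le, one_mul]
    _ ≤ _ := setIntegral_le_integral hi (Filter.Eventually.of_forall fun x =>
        mul_nonneg (chi_nonneg r x) (sq_nonneg _))

lemma enr_le {u : E2 → E2} (hu : Continuous u) {r : ℝ} (hr : 0 < r) :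
    enr r u ≤ ∫ x in ball 0 (5 / 4 * r), ‖u x‖ ^ 2 := by
  unfold enr
  rw [← setIntegral_eq_integral_of_forall_compl_eq_zero (s := ball 0 (5 / 4 * r))]
  · refine integral_mono_of_nonneg (Filter.Eventually.of_forall fun x =>
      mul_nonneg (chi_nonneg r x) (sq_nonneg _)) (contB (hu.norm.pow 2) _)
      (Filter.Eventually.of_forall fun x => ?_)
    simp only
    have := mul_le_mul_of_nonneg_right (chi_le_one r x) (sq_nonneg ‖u x‖)
    linarith
  · intro x hx
    rw [mem_ball_zero_iff, not_lt] at hx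
    rw [chi_zero hr hx, zero_mul]

/-! ### Continuity argument in time -/

/-- For continuous fields the `ℝ≥0∞`-valued norm bound is the family of real energy bounds on balls. -/
lemma morrey_iff {α R N : ℝ} (hR : 1 ≤ R) (hN : 0 ≤ N) {u : E2 → E2} (hu : Continuous u) :
    morreyR α R u ≤ ENNReal.ofReal N ↔
      ∀ r, R ≤ r → ∫ y in ball 0 r, ‖u y‖ ^ 2 ≤ N ^ 2 * r ^ (2 + 2 * α) := by
  unfold morreyR
  rw [iSup_le_iff, Subtype.forall]
  refine forall₂_congr fun r hr => ?_
  have hr0 : 0 < r := by linarith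
  have hp : 0 < r ^ (2 + 2 * α) := Real.rpow_pos_of_pos hr0 _
  have e : ∫⁻ x in ball (0 : E2) r, (‖u x‖₊ : ℝ≥0∞) ^ 2 =
      ENNReal.ofReal (∫ y in ball 0 r, ‖u y‖ ^ 2) := by
    have hi : IntegrableOn (fun x => ‖u x‖ ^ 2) (ball 0 r) := contB (hu.norm.pow 2) r
    rw [ofReal_integral_eq_lintegral_ofReal hi
      (Filter.Eventually.of_forall fun x => sq_nonneg _)]
    refine lintegral_congr fun x => ?_
    rw [ENNReal.ofReal_pow (norm_nonneg _), ofReal_norm]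
    rfl
  simp only [Nat.cast_ofNat]
  rw [one_div, ENNReal.rpow_inv_le_iff (by norm_num), e,
    ENNReal.div_le_iff (by rwa [Ne, ENNReal.ofReal_eq_zero, not_le]) ENNReal.ofReal_ne_top,
    ENNReal.rpow_ofNat, ← ENNReal.ofReal_pow hN, ← ENNReal.ofReal_mul (by positivity),
    ENNReal.ofReal_le_ofReal_iff (by positivity)]

/-- The energy bound in terms of real constants. The number `M` is any bound for the initial norm, and
`N` is an a priori bound on `[0, T]` that only enters the length of the time steps, not the
conclusion. -/
lemma core {α : ℝ} (hα : α < 1 / 2) : ∃ K : ℝ, 0 < K ∧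
    ∀ θ : E2 → ℝ, IsCutoff θ → ∀ u : ℝ → E2 → E2, IsYudovichSolution θ u →
    ∀ W : ℝ, (∀ t, 0 ≤ t → ∀ x, |curl2 (u t) x| ≤ W) → ∀ M N T R : ℝ, 0 < M → 0 < N → 0 ≤ T →
    1 ≤ R →
    (∀ r, 1 ≤ r → ∫ y in ball 0 r, ‖u 0 y‖ ^ 2 ≤ M ^ 2 * r ^ (2 + 2 * α)) →
    (∀ t, 0 ≤ t → t ≤ T → ∀ r, 1 ≤ r → ∫ y in ball 0 r, ‖u t y‖ ^ 2 ≤ N ^ 2 * r ^ (2 + 2 * α)) →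
    (K * T + (K * T) ^ 2 * W) * M ≤ R ^ (1 - α) →
    ∀ r, R ≤ r → ∫ y in ball 0 r, ‖u T y‖ ^ 2 ≤ (2 * M) ^ 2 * r ^ (2 + 2 * α) := by
  obtain ⟨C, hC, hI⟩ := inst_bound hα
  refine ⟨16 * C, by positivity, fun θ hθ u hu W hW M N T R hM hN hT hR h0 hb hK => ?_⟩
  have hW0 : 0 ≤ W := (abs_nonneg _).trans (hW 0 le_rfl 0)
  set K := 16 * C with hKd
  have hwork : ∀ t, 0 ≤ t → ∀ r M : ℝ, 1 ≤ r → 0 < M →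
      (∀ s, r ≤ s → ∫ y in ball 0 s, ‖u t y‖ ^ 2 ≤ M ^ 2 * s ^ (2 + 2 * α)) →
      |work θ r (u t)| ≤
        C * (M ^ 2 * r ^ (2 + 2 * α) * (M * r ^ (α - 1) + √(M * W * r ^ (α - 1)))) :=
    fun t ht r M hr hM hs => hI θ hθ (u t) (sol_smooth hu ht) (hu.2.1 t ht) (hu.2.2.1 t ht)
      (sol_press_cont hu ht) W (hW t ht) r M hr hM hs
  set L := C * (N ^ 2 * (N + √(N * W))) with hL
  have hL0 : 0 ≤ L := by positivity
  have hLip : ∀ t, 0 ≤ t → t ≤ T → ∀ r, R ≤ r → |work θ r (u t)| ≤ L * r ^ (2 + 2 * α) := by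
    intro t ht htT r hr
    have hr1 : 1 ≤ r := hR.trans hr
    have hp : 0 < r ^ (2 + 2 * α) := Real.rpow_pos_of_pos (by linarith) _
    refine (hwork t ht r N hr1 hN fun s hs => hb t ht htT s (hr1.trans hs)).trans ?_
    have h1 : r ^ (α - 1) ≤ 1 := Real.rpow_le_one_of_one_le_of_nonpos hr1 (by linarith)
    calc _ ≤ C * (N ^ 2 * r ^ (2 + 2 * α) * (N * 1 + √(N * W * 1))) := by gcongr
      _ = _ := by rw [hL]; ring_nf
  -- over a time `δ`, the a priori bound lets the localised energy grow by at most
  -- `M ^ 2 * r ^ (2 + 2 * α)`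
  set δ := M ^ 2 / (L + 1) with hδ
  have hδ0 : 0 < δ := by positivity
  have hLδ : L * δ ≤ M ^ 2 := by
    rw [hδ, mul_div_assoc', div_le_iff₀ (by positivity)]
    nlinarith [sq_nonneg M]
  set y := M * R ^ (α - 1) with hy
  have hR0 : 0 < R := by linarith
  have hy0 : 0 < y := mul_pos hM (Real.rpow_pos_of_pos hR0 _)
  have hKy : K * T * y + (K * T) ^ 2 * W * y ≤ 1 := by
    have e : R ^ (α - 1) = (R ^ (1 - α))⁻¹ := by rw [← Real.rpow_neg hR0.le]; congr 1; ring
    have hq : 0 < R ^ (1 - α) := Real.rpow_pos_of_pos hR0 _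
    calc _ = (K * T + (K * T) ^ 2 * W) * M * (R ^ (1 - α))⁻¹ := by rw [hy, e]; ring
      _ ≤ R ^ (1 - α) * (R ^ (1 - α))⁻¹ := by gcongr
      _ = 1 := mul_inv_cancel₀ hq.ne'
  have hK0 : 0 < K := by positivity
  -- the scale condition makes the growth rate, integrated up to time `T`, of order one
  have hX : K * T * (2 * y + √(2 * M * W * R ^ (α - 1))) ≤ 4 := by
    have h1 : 0 ≤ K * T * y := by positivity
    have h2 : 0 ≤ (K * T) ^ 2 * W * y := by positivity
    have h3 : K * T * √(2 * M * W * R ^ (α - 1)) ≤ 2 := by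
      have e : K * T * √(2 * M * W * R ^ (α - 1)) = √(2 * ((K * T) ^ 2 * W * y)) := by
        rw [← Real.sqrt_sq (show 0 ≤ K * T by positivity), ← Real.sqrt_mul (by positivity),
          Real.sqrt_sq (show 0 ≤ K * T by positivity), hy]
        congr 1
        ring
      rw [e, Real.sqrt_le_left (by norm_num)]
      linarith
    linarith
  -- `chi r` reaches out to radius `5 * r / 4`, which costs a factor `(5 / 4) ^ 3 < 2`
  have hinit : ∀ r, R ≤ r → enr r (u 0) ≤ 2 * M ^ 2 * r ^ (2 + 2 * α) := by
    intro r hr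
    have hr0 : 0 < r := by linarith
    have hp : 0 < r ^ (2 + 2 * α) := Real.rpow_pos_of_pos hr0 _
    refine (enr_le (sol_smooth hu le_rfl).continuous hr0).trans ((h0 _ (by linarith)).trans ?_)
    rw [Real.mul_rpow (by norm_num) hr0.le]
    have : (5 / 4 : ℝ) ^ (2 + 2 * α) ≤ (5 / 4) ^ (3 : ℝ) :=
      Real.rpow_le_rpow_of_exponent_le (by norm_num) (by linarith)
    norm_num at this
    calc M ^ 2 * ((5 / 4) ^ (2 + 2 * α) * r ^ (2 + 2 * α)) ≤ M ^ 2 * (2 * r ^ (2 + 2 * α)) := by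
          gcongr
          linarith
      _ = _ := by ring
  -- `2` initially, `1` for the growth up to `n * δ`, and `1` for the last step give the factor `4`
  have claim : ∀ n : ℕ, ∀ s, 0 ≤ s → s ≤ T → s ≤ n * δ → ∀ r, R ≤ r →
      enr r (u s) ≤ 4 * M ^ 2 * r ^ (2 + 2 * α) := by
    intro n
    induction n with
    | zero =>
      intro s hs _ hs0 r hr
      have : s = 0 := by
        simp only [Nat.cast_zero, zero_mul] at hs0
        linarith
      subst this
      have hp : 0 < r ^ (2 + 2 * α) := Real.rpow_pos_of_pos (by linarith) _
      have := hinit r hr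
      nlinarith [mul_pos (pow_pos hM 2) hp]
    | succ n ih =>
      intro s hs hsT hsn r hr
      rcases le_or_gt s (n * δ) with h | h
      · exact ih s hs hsT h r hr
      set a := n * δ with ha
      have ha0 : 0 ≤ a := by positivity
      have hr0 : 0 < r := by linarith
      have hp : 0 < r ^ (2 + 2 * α) := Real.rpow_pos_of_pos hr0 _
      set X := 2 * y + √(2 * M * W * R ^ (α - 1)) with hXd
      have hX0 : 0 ≤ X := by positivity
      have hwa : ∀ t, 0 ≤ t → t ≤ a →
          |work θ r (u t)| ≤ 4 * C * M ^ 2 * r ^ (2 + 2 * α) * X := by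
        intro t ht hta
        have hmor : ∀ s, r ≤ s → ∫ y in ball 0 s, ‖u t y‖ ^ 2 ≤ (2 * M) ^ 2 * s ^ (2 + 2 * α) := by
          intro s hs
          refine (enr_ge (sol_smooth hu ht).continuous (by linarith)).trans
            ((ih t ht (by linarith) hta s (hr.trans hs)).trans_eq ?_)
          ring
        refine (hwork t ht r (2 * M) (by linarith) (by positivity) hmor).trans ?_
        have hmono : r ^ (α - 1) ≤ R ^ (α - 1) :=
          Real.rpow_le_rpow_of_nonpos hR0 hr (by linarith)
        calc _ ≤ C * ((2 * M) ^ 2 * r ^ (2 + 2 * α) *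
              (2 * M * R ^ (α - 1) + √(2 * M * W * R ^ (α - 1)))) := by gcongr
          _ = _ := by rw [hXd, hy]; ring
      have h1 := enr_lip hu hr0 le_rfl ha0 hwa
      have h2 := enr_lip hu hr0 ha0 h.le
        (fun t ht hts => hLip t (ha0.trans ht) (hts.trans hsT) r hr)
      have h3 : 4 * C * M ^ 2 * r ^ (2 + 2 * α) * X * (a - 0) ≤ M ^ 2 * r ^ (2 + 2 * α) := by
        calc _ ≤ 4 * C * M ^ 2 * r ^ (2 + 2 * α) * X * T := by
              gcongr
              linarith
          _ = M ^ 2 * r ^ (2 + 2 * α) * (K * T * X / 4) := by rw [hKd]; ring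
          _ ≤ M ^ 2 * r ^ (2 + 2 * α) * 1 := by
            gcongr
            linarith
          _ = _ := mul_one _
      have h4 : L * r ^ (2 + 2 * α) * (s - a) ≤ M ^ 2 * r ^ (2 + 2 * α) := by
        have : s - a ≤ δ := by
          push_cast at hsn
          linarith
        calc _ ≤ L * r ^ (2 + 2 * α) * δ := by gcongr
          _ = (L * δ) * r ^ (2 + 2 * α) := by ring
          _ ≤ _ := by gcongr
      have h5 := hinit r hr
      linarith
  obtain ⟨n, hn⟩ := exists_nat_ge (T / δ)
  rw [div_le_iff₀ hδ0] at hn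
  intro r hr
  refine (enr_ge (sol_smooth hu hT).continuous (by linarith)).trans
    ((claim n T hT le_rfl hn r hr).trans_eq ?_)
  ring

/-- Theorem 4.1 (large-scale energy bound): for a classical Yudovich solution with
`‖u(t)‖_{L²_α}` locally bounded in time and vorticity bounded by `W = sup_x |ω(0,x)|`,
one has `‖u(t)‖_{L²_α(R)} ≤ 2 ‖u(0)‖_{L²_α}` whenever
`R^{1−α} ≥ (Kt + (Kt)² W) ‖u(0)‖_{L²_α}`, with `K` depending only on `α`. -/
theorem energy_bound (α : ℝ) (hα0 : 0 ≤ α) (hα : α < 1 / 2) :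
    ∃ K : ℝ, 0 < K ∧
      ∀ (θ : E2 → ℝ), IsCutoff θ →
      ∀ u : ℝ → E2 → E2, IsYudovichSolution θ u →
        (∀ T : ℝ, 0 < T → (⨆ t : Set.Icc (0 : ℝ) T, morreyR α 1 (u t.1)) < ⊤) →
        ∀ W : ℝ, IsLUB (Set.range fun x => |curl2 (u 0) x|) W →
        (∀ t, 0 ≤ t → ∀ x, |curl2 (u t) x| ≤ W) →
        ∀ t, 0 ≤ t → ∀ R : ℝ, 1 ≤ R →
          (ENNReal.ofReal (K * t) + (ENNReal.ofReal (K * t)) ^ 2 * ENNReal.ofReal W) *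
              morreyR α 1 (u 0) ≤ ENNReal.ofReal (R ^ (1 - α)) →
          morreyR α R (u t) ≤ 2 * morreyR α 1 (u 0) := by
  obtain ⟨K, hK, H⟩ := core hα
  refine ⟨K, hK, fun θ hθ u hu hfin W _ hW t ht R hR hcond => ?_⟩
  have hW0 : 0 ≤ W := (abs_nonneg _).trans (hW 0 le_rfl 0)
  have hS := hfin (t + 1) (by linarith)
  set S := ⨆ s : Set.Icc (0 : ℝ) (t + 1), morreyR α 1 (u s.1) with hSd
  have hle : ∀ s, 0 ≤ s → s ≤ t → morreyR α 1 (u s) ≤ S := fun s h0 h1 =>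
    le_iSup (fun s : Set.Icc (0 : ℝ) (t + 1) => morreyR α 1 (u s.1)) ⟨s, h0, by linarith⟩
  have hN : ∀ s, 0 ≤ s → s ≤ t → ∀ r, 1 ≤ r →
      ∫ y in ball 0 r, ‖u s y‖ ^ 2 ≤ (S.toReal + 1) ^ 2 * r ^ (2 + 2 * α) := by
    intro s h0 h1
    refine (morrey_iff le_rfl (by positivity) (sol_smooth hu h0).continuous).1
      ((hle s h0 h1).trans ?_)
    rw [← ENNReal.ofReal_toReal hS.ne]
    exact ENNReal.ofReal_le_ofReal (by simp)
  set c := K * t + (K * t) ^ 2 * W with hc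
  have hc0 : 0 ≤ c := by positivity
  have hKt : 0 ≤ K * t := by positivity
  have hq : 0 < R ^ (1 - α) := Real.rpow_pos_of_pos (by linarith) _
  have main : ∀ M : ℝ, 0 < M → morreyR α 1 (u 0) ≤ ENNReal.ofReal M → c * M ≤ R ^ (1 - α) →
      morreyR α R (u t) ≤ ENNReal.ofReal (2 * M) := by
    intro M hM hle hcM
    refine (morrey_iff hR (by positivity) (sol_smooth hu ht).continuous).2 ?_
    exact H θ hθ u hu W hW M (S.toReal + 1) t R hM (by positivity) ht hR
      ((morrey_iff le_rfl hM.le (sol_smooth hu le_rfl).continuous).1 hle) hN hcM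
  have hM0 : morreyR α 1 (u 0) ≠ ⊤ := ((hle 0 le_rfl ht).trans_lt hS).ne
  set m := (morreyR α 1 (u 0)).toReal with hm
  have hmo : morreyR α 1 (u 0) = ENNReal.ofReal m := (ENNReal.ofReal_toReal hM0).symm
  rcases (ENNReal.toReal_nonneg : 0 ≤ m).eq_or_lt with h | h
  -- if the initial norm vanishes, every small `M > 0` is an admissible bound for it
  · refine le_trans ?_ zero_le
    refine ENNReal.le_of_forall_pos_le_add fun ε hε _ => ?_
    have hε' : 0 < (ε : ℝ) := hε
    set M := min ((ε : ℝ) / 2) (R ^ (1 - α) / (c + 1)) with hMd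
    have hM : 0 < M := lt_min (by positivity) (by positivity)
    have hcM : c * M ≤ R ^ (1 - α) := by
      have h1 : M * (c + 1) ≤ R ^ (1 - α) := by
        rw [← le_div_iff₀ (by positivity)]
        exact min_le_right _ _
      linarith
    have h2 : 2 * M ≤ ε := by
      have : M ≤ (ε : ℝ) / 2 := min_le_left _ _
      linarith
    refine (main M hM (by rw [hmo, hm, ← h, ENNReal.ofReal_zero]; exact zero_le) hcM).trans ?_
    rw [zero_add, ← ENNReal.ofReal_coe_nnreal]
    exact ENNReal.ofReal_le_ofReal h2
  · have hcm : c * m ≤ R ^ (1 - α) := by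
      rw [hmo, ← ENNReal.ofReal_pow hKt, ← ENNReal.ofReal_mul (by positivity),
        ← ENNReal.ofReal_add hKt (by positivity), ← ENNReal.ofReal_mul hc0] at hcond
      exact (ENNReal.ofReal_le_ofReal_iff hq.le).1 hcond
    have := main m h hmo.le hcm
    rw [ENNReal.ofReal_mul (by norm_num)] at this
    simpa [← hmo] using this

end
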